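/- arXiv:1912.10759 — 9 statements merged into one kernel-verified Lean document; each statement's English description precedes it below -/
import Mathlib

section
/- For every ε > 0 and every integer n ≥ 1 there exists δ > 0, depending only on ε and n, with the following property. Let T > 0, let (X,d) be a nonempty complete metric space, μ a Borel measure on X, and p : X×X×(0,∞) → ℝ a measurable function such that: (i) p(x,y,t) = p(y,x,t) for all x,y,t; (ii) ∫_X p(x,z,t) p(z,y,s) dμ(z) = p(x,y,t+s) for all x,y ∈ X and s,t > 0; (iii) ∫_X p(x,y,t) dμ(y) ≤ 1 for all x ∈ X and t > 0; (iv) (1−δ)(4πt)^{-n/2} exp(−d(x,y)²/(4(1−δ)t)) ≤ p(x,y,t) ≤ (1+δ)(4πt)^{-n/2} exp(−d(x,y)²/(4(1+δ)t)) for all x,y ∈ X and t ∈ (0,T]. Then for every x ∈ X and every r ∈ (0,√T), the closed ball of radius r around x in X is compact, and its Gromov–Hausdorff distance to a closed Euclidean ball of radius r in ℝ^n is at most ε r. -/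
open MeasureTheory Metric Real Set Filter
open scoped ENNReal NNReal Topology

/-!
The proof is by contradiction and compactness, carried out with an ultralimit, on which no measure
has to be constructed.

Inserting the two-sided bounds in the Chapman–Kolmogorov identity shows that, after rescaling by
`r⁻¹`, the integrals `∫ exp (-a d(x,z)² - b d(y,z)²) dμ(z)`, `a, b ≥ 1`, are pinched between
quantities which tend to their Euclidean values as `δ → 0` (`rescaled_near`; the pinching is
`Model.Near`). By Stone–Weierstrass in the variables `exp (-d(x,z)²)` and `exp (-d(y,z)²)`, along a
sequence of spaces with `δ → 0` the joint law of the distances to two points converges to the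
Euclidean one, on compactly supported functions (`tendsto_two_point`).

Along such a sequence of spaces take the ultralimit, with limit distance `D` (`UPoint`, `UPoint.ud`).
* Overlap integrals `∫ h(d(x,z)) h(d(y,z)) dμ(z)` are positive semidefinite kernels, and by the
  two-point convergence their limits are functions of `D`. Choosing `h` Gaussian, `exp (-τ D²)` is
  positive semidefinite on the ultralimit for every `τ > 0`, and letting `τ → 0` (Schoenberg), the
  ultralimit embeds isometrically in an inner product space (`UPoint.gram_psd`).
* Since the joint law of two distances charges every configuration possible in `ℝⁿ`, saturation
  shows that the affine line through two points of the image stays in the image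
  (`UPoint.exists_line`); hence the image is a linear subspace `V` (`UPoint.exists_submodule`).
* For an orthonormal family `yᵢ` of `V`, the function `Σ ⟨z, yᵢ⟩²` is a combination of functions of
  two distances, so its integral over the unit ball is the Euclidean one. Comparing it with `|z|²`,
  Bessel's inequality gives `dim V ≤ n` and Parseval's identity gives `n ≤ dim V`
  (`UPoint.trace_le`). Hence the ultralimit is `ℝⁿ` (`UPoint.exists_chart`).

A finite net of the Euclidean ball lifts to the ultralimit, hence to one of the spaces, where it is
a net of the unit ball with almost the same distances (`exists_netApprox`). This gives the
Gromov–Hausdorff estimate. Applied at all scales `ρ < √T`, it also covers every ball by finitely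
many balls of half its radius, hence total boundedness and compactness.
-/

namespace HeatRigidity

/-! ### Positive semidefinite kernels, Gaussian integrals and moments -/

/-- A symmetric positive semidefinite kernel is a Gram matrix: it is the inner product of the free
vector space on `S`, modulo null vectors. -/
theorem exists_hilbert {S : Type} (G : S → S → ℝ) (hsymm : ∀ x y, G x y = G y x)
    (hpos : ∀ c : S →₀ ℝ, 0 ≤ c.sum fun x a => c.sum fun y b => a * b * G x y) :
    ∃ (H : Type) (_ : NormedAddCommGroup H) (_ : InnerProductSpace ℝ H) (φ : S → H),
      ∀ x y, inner ℝ (φ x) (φ y) = G x y := by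
  let core : PreInnerProductSpace.Core ℝ (S →₀ ℝ) :=
    { inner := fun f g => f.sum fun x a => g.sum fun y b => a * b * G x y
      conj_inner_symm := fun f g => by
        rw [Finsupp.sum_comm]
        simp only [conj_trivial]
        refine Finsupp.sum_congr fun x _ => Finsupp.sum_congr fun y _ => ?_
        rw [hsymm, mul_comm (f x)]
      re_inner_nonneg := fun f => by simpa using hpos f
      add_left := fun f g h => by
        rw [Finsupp.sum_add_index'] <;> simp [← Finsupp.sum_add, add_mul]
      smul_left := fun f g r => by
        rw [Finsupp.sum_smul_index] <;> simp [Finsupp.mul_sum, ← mul_assoc] }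
  let _ : SeminormedAddCommGroup (S →₀ ℝ) :=
    InnerProductSpace.Core.toSeminormedAddCommGroup (𝕜 := ℝ) (F := S →₀ ℝ)
  let _ : InnerProductSpace ℝ (S →₀ ℝ) := .ofCore _
  refine ⟨SeparationQuotient (S →₀ ℝ), inferInstance, inferInstance,
    fun x => SeparationQuotient.mk (Finsupp.single x 1), fun x y => ?_⟩
  change inner ℝ (Finsupp.single x (1 : ℝ)) (Finsupp.single y (1 : ℝ)) = G x y
  change (Finsupp.single x (1 : ℝ)).sum (fun x a =>
    (Finsupp.single y (1 : ℝ)).sum fun y b => a * b * G x y) = G x y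
  simp

theorem gaussian_completeSquare {n : ℕ} {a b : ℝ} (h : 0 < a + b)
    (z v : EuclideanSpace ℝ (Fin n)) :
    -a * ‖z‖ ^ 2 - b * ‖z - v‖ ^ 2
      = -(a + b) * ‖z - (b / (a + b)) • v‖ ^ 2 - a * b / (a + b) * ‖v‖ ^ 2 := by
  rw [@norm_sub_sq_real, @norm_sub_sq_real, inner_smul_right, norm_smul, mul_pow,
    Real.norm_eq_abs, sq_abs]
  field_simp
  ring

theorem gaussian_integrable {n : ℕ} {a b : ℝ} (ha : 0 < a) (hb : 0 < b)
    (v : EuclideanSpace ℝ (Fin n)) :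
    Integrable (fun z : EuclideanSpace ℝ (Fin n) =>
      Real.exp (-a * ‖z‖ ^ 2 - b * ‖z - v‖ ^ 2)) := by
  simp_rw [gaussian_completeSquare (add_pos ha hb), sub_eq_add_neg _ (a * b / (a + b) * ‖v‖ ^ 2),
    Real.exp_add]
  refine Integrable.mul_const ?_ _
  have h0 : Integrable (fun z : EuclideanSpace ℝ (Fin n) =>
      Real.exp (-(a + b) * ‖z‖ ^ 2)) := by
    by_contra hcon
    have h1 := integral_undef hcon
    rw [GaussianFourier.integral_rexp_neg_mul_sq_norm (add_pos ha hb)] at h1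
    have : 0 < (π / (a + b)) ^
      ((Module.finrank ℝ (EuclideanSpace ℝ (Fin n)) : ℝ) / 2) := by positivity
    exact this.ne' h1
  exact h0.comp_sub_right _

theorem gaussian_integral {n : ℕ} {a b : ℝ} (ha : 0 < a) (hb : 0 < b)
    (v : EuclideanSpace ℝ (Fin n)) :
    ∫ z : EuclideanSpace ℝ (Fin n), Real.exp (-a * ‖z‖ ^ 2 - b * ‖z - v‖ ^ 2)
      = (π / (a + b)) ^ ((n : ℝ) / 2) * Real.exp (-(a * b / (a + b)) * ‖v‖ ^ 2) := by
  simp_rw [gaussian_completeSquare (add_pos ha hb), sub_eq_add_neg _ (a * b / (a + b) * ‖v‖ ^ 2),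
    Real.exp_add]
  rw [integral_mul_const]
  rw [integral_sub_right_eq_self (fun z : EuclideanSpace ℝ (Fin n) => Real.exp (-(a + b) * ‖z‖ ^ 2)),
    GaussianFourier.integral_rexp_neg_mul_sq_norm (add_pos ha hb)]
  simp

open unitInterval in
/-- Convergence of mixed moments implies weak convergence, by density of polynomials. -/
theorem tendsto_integral_of_moments {ι : Type*} {U : Filter ι}
    (ρ : ι → Measure (I × I)) (ρ' : Measure (I × I))
    [∀ k, IsFiniteMeasure (ρ k)] [IsFiniteMeasure ρ']
    (hm : ∀ i j : ℕ, Tendsto (fun k => ∫ q, (q.1 : ℝ) ^ i * (q.2 : ℝ) ^ j ∂(ρ k)) U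
      (𝓝 (∫ q, (q.1 : ℝ) ^ i * (q.2 : ℝ) ^ j ∂ρ')))
    (g : C(I × I, ℝ)) :
    Tendsto (fun k => ∫ q, g q ∂(ρ k)) U (𝓝 (∫ q, g q ∂ρ')) := by
  have hInteg : ∀ (f : C(I × I, ℝ)) (m : Measure (I × I)) [IsFiniteMeasure m],
      Integrable (fun q => f q) m := fun f m _ =>
    f.continuous.integrable_of_hasCompactSupport (HasCompactSupport.of_compactSpace _)
  let X1 : C(I × I, ℝ) := ⟨fun q => (q.1 : ℝ), by fun_prop⟩
  let X2 : C(I × I, ℝ) := ⟨fun q => (q.2 : ℝ), by fun_prop⟩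
  let A : Subalgebra ℝ C(I × I, ℝ) := Algebra.adjoin ℝ {X1, X2}
  have hA : ∀ f ∈ A, Tendsto (fun k => ∫ q, f q ∂(ρ k)) U (𝓝 (∫ q, f q ∂ρ')) := by
    intro f hf
    rw [← Subalgebra.mem_toSubmodule, Algebra.adjoin_eq_span] at hf
    induction hf using Submodule.span_induction with
    | mem x hx =>
      obtain ⟨i, j, rfl⟩ := (Submonoid.mem_closure_pair _ _ _).1 hx
      simpa [X1, X2] using hm i j
    | zero => simpa using tendsto_const_nhds
    | add x y _ _ hx hy =>
      simp only [ContinuousMap.add_apply]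
      simp_rw [fun k => integral_add (hInteg x (ρ k)) (hInteg y (ρ k))]
      rw [integral_add (hInteg x ρ') (hInteg y ρ')]
      exact hx.add hy
    | smul a x _ hx =>
      simp only [ContinuousMap.smul_apply, smul_eq_mul, integral_const_mul]
      exact hx.const_mul a
  have hdense : A.topologicalClosure = ⊤ := by
    apply ContinuousMap.subalgebra_topologicalClosure_eq_top_of_separatesPoints
    intro p q hpq
    by_cases h1 : p.1 = q.1
    · have h2 : p.2 ≠ q.2 := fun h2 => hpq (Prod.ext h1 h2)
      exact ⟨X2, ⟨X2, Algebra.subset_adjoin (by simp), rfl⟩, fun h => h2 (Subtype.ext h)⟩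
    · exact ⟨X1, ⟨X1, Algebra.subset_adjoin (by simp), rfl⟩, fun h => h1 (Subtype.ext h)⟩
  rw [Metric.tendsto_nhds]
  intro ε hε
  -- total masses are eventually bounded
  have hmass : ∀ᶠ k in U, (ρ k).real univ < ρ'.real univ + 1 := by
    have := hm 0 0
    simp only [pow_zero, mul_one, integral_const, smul_eq_mul] at this
    exact this.eventually_lt_const (by linarith)
  set M := ρ'.real univ + 1 with hM
  have hM0 : 0 < M := by positivity
  have hg : g ∈ closure (A : Set C(I × I, ℝ)) := by
    have : g ∈ A.topologicalClosure := by rw [hdense]; trivial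
    exact this
  obtain ⟨f, hfA, hfg⟩ := Metric.mem_closure_iff.1 hg (ε / (4 * M)) (by positivity)
  have hdiff : ∀ (m : Measure (I × I)) [IsFiniteMeasure m], m.real univ ≤ M →
      |∫ q, g q ∂m - ∫ q, f q ∂m| ≤ ε / 4 := by
    intro m _ hmM
    rw [← integral_sub (hInteg g m) (hInteg f m), ← Real.norm_eq_abs]
    calc ‖∫ q, (g q - f q) ∂m‖ ≤ (ε / (4 * M)) * m.real univ := by
          apply norm_integral_le_of_norm_le_const
          refine Eventually.of_forall fun q => ?_
          rw [← dist_eq_norm]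
          exact (ContinuousMap.dist_apply_le_dist q).trans hfg.le
      _ ≤ (ε / (4 * M)) * M := by gcongr
      _ = ε / 4 := by field_simp
  filter_upwards [hmass, (Metric.tendsto_nhds.1 (hA f hfA)) (ε / 4) (by positivity)] with k hk1 hk2
  have h1 := hdiff (ρ k) hk1.le
  have h2 := hdiff ρ' (by linarith)
  rw [Real.dist_eq] at hk2 ⊢
  rw [abs_le] at h1 h2
  rw [abs_lt] at hk2 ⊢
  constructor <;> linarith [h1.1, h1.2, h2.1, h2.2, hk2.1, hk2.2]

/-! ### Weak convergence of the joint law of two distances -/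

section Push
open unitInterval

variable {Ω : Type*} [MeasurableSpace Ω]

/-- The point `exp (-s²)` of the unit interval. -/
noncomputable def expSq (s : ℝ) : I :=
  ⟨Real.exp (-s ^ 2), (Real.exp_pos _).le, Real.exp_le_one_iff.2 (by nlinarith [sq_nonneg s])⟩

theorem measurable_expSq : Measurable expSq :=
  Measurable.subtype_mk (by fun_prop)

/-- The image under `(exp (-f²), exp (-g²))` of the measure `exp (-f² - g²) μ`. -/
noncomputable def pushGauss (μ : Measure Ω) (f g : Ω → ℝ) : Measure (I × I) :=
  (μ.withDensity fun z => ENNReal.ofReal (Real.exp (-(f z) ^ 2 - (g z) ^ 2))).map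
    fun z => (expSq (f z), expSq (g z))

theorem integral_pushGauss (μ : Measure Ω) {f g : Ω → ℝ} (hf : Measurable f) (hg : Measurable g)
    (h : I × I → ℝ) (hh : Continuous h) :
    ∫ q, h q ∂(pushGauss μ f g)
      = ∫ z, h (expSq (f z), expSq (g z)) * Real.exp (-(f z) ^ 2 - (g z) ^ 2) ∂μ := by
  have hm : Measurable fun z => (expSq (f z), expSq (g z)) :=
    (measurable_expSq.comp hf).prodMk (measurable_expSq.comp hg)
  rw [pushGauss, integral_map hm.aemeasurable hh.aestronglyMeasurable,
    integral_withDensity_eq_integral_toReal_smul (by fun_prop) (by simp)]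
  refine integral_congr_ae (Eventually.of_forall fun z => ?_)
  simp only [smul_eq_mul]
  rw [ENNReal.toReal_ofReal (Real.exp_pos _).le, mul_comm]

theorem isFiniteMeasure_pushGauss {μ : Measure Ω} {f g : Ω → ℝ}
    (hi : Integrable (fun z => Real.exp (-(f z) ^ 2 - (g z) ^ 2)) μ) :
    IsFiniteMeasure (pushGauss μ f g) := by
  have : IsFiniteMeasure
      (μ.withDensity fun z => ENNReal.ofReal (Real.exp (-(f z) ^ 2 - (g z) ^ 2))) :=
    isFiniteMeasure_withDensity_ofReal hi.2
  unfold pushGauss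
  infer_instance

/-- A compactly supported function of two distances, as a continuous function of
`(exp (-s²), exp (-u²))`, divided by the Gaussian weight. -/
noncomputable def liftFun (F : ℝ → ℝ → ℝ) (R : ℝ) (q : I × I) : ℝ :=
  F (√(-Real.log (max (q.1 : ℝ) (Real.exp (-R ^ 2)))))
      (√(-Real.log (max (q.2 : ℝ) (Real.exp (-R ^ 2)))))
    / (max (q.1 : ℝ) (Real.exp (-R ^ 2)) * max (q.2 : ℝ) (Real.exp (-R ^ 2)))

theorem continuous_liftFun {F : ℝ → ℝ → ℝ} (hF : Continuous (fun q : ℝ × ℝ => F q.1 q.2)) (R : ℝ) :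
    Continuous (liftFun F R) := by
  have hpos : ∀ a : ℝ, 0 < max a (Real.exp (-R ^ 2)) := fun a =>
    lt_max_of_lt_right (Real.exp_pos _)
  unfold liftFun
  refine Continuous.div ?_ (by fun_prop) fun q => (mul_pos (hpos _) (hpos _)).ne'
  have h1 : Continuous fun q : I × I =>
      √(-Real.log (max (q.1 : ℝ) (Real.exp (-R ^ 2)))) :=
    ((Continuous.log (by fun_prop) fun q => (hpos _).ne').neg).sqrt
  have h2 : Continuous fun q : I × I =>
      √(-Real.log (max (q.2 : ℝ) (Real.exp (-R ^ 2)))) :=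
    ((Continuous.log (by fun_prop) fun q => (hpos _).ne').neg).sqrt
  exact hF.comp (h1.prodMk h2)

theorem liftFun_mul {F : ℝ → ℝ → ℝ} {R : ℝ} (hR : 0 ≤ R)
    (hF : ∀ s u, R ≤ s ∨ R ≤ u → F s u = 0) {s u : ℝ} (hs : 0 ≤ s) (hu : 0 ≤ u) :
    liftFun F R (expSq s, expSq u) * Real.exp (-s ^ 2 - u ^ 2) = F s u := by
  have key : ∀ s : ℝ, 0 ≤ s →
      √(-Real.log (max (expSq s : ℝ) (Real.exp (-R ^ 2)))) = min s R := by
    intro s hs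
    change √(-Real.log (max (Real.exp (-s ^ 2)) (Real.exp (-R ^ 2)))) = min s R
    rcases le_total s R with h | h
    · rw [min_eq_left h, max_eq_left (Real.exp_le_exp.2 (by nlinarith)), Real.log_exp, neg_neg,
        Real.sqrt_sq hs]
    · rw [min_eq_right h, max_eq_right (Real.exp_le_exp.2 (by nlinarith)), Real.log_exp, neg_neg,
        Real.sqrt_sq hR]
  unfold liftFun
  simp only [key s hs, key u hu]
  by_cases h : R ≤ s ∨ R ≤ u
  · rw [hF s u h, hF (min s R) (min u R) (by rcases h with h | h <;> simp [h])]
    simp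
  · push Not at h
    have e1 : max (expSq s : ℝ) (Real.exp (-R ^ 2)) = Real.exp (-s ^ 2) :=
      max_eq_left (Real.exp_le_exp.2 (by nlinarith))
    have e2 : max (expSq u : ℝ) (Real.exp (-R ^ 2)) = Real.exp (-u ^ 2) :=
      max_eq_left (Real.exp_le_exp.2 (by nlinarith))
    rw [e1, e2, min_eq_left h.1.le, min_eq_left h.2.le, sub_eq_add_neg, Real.exp_add]
    field_simp

/-- Compactly supported functions of two distances are integrable. -/
theorem integrable_cutoff {μ : Measure Ω} {f g : Ω → ℝ} (hf : Measurable f) (hg : Measurable g)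
    (hf0 : ∀ z, 0 ≤ f z) (hg0 : ∀ z, 0 ≤ g z)
    (hi : Integrable (fun z => Real.exp (-(f z) ^ 2 - (g z) ^ 2)) μ)
    {F : ℝ → ℝ → ℝ} (hFc : Continuous (fun q : ℝ × ℝ => F q.1 q.2)) {R : ℝ} (hR : 0 ≤ R)
    (hF : ∀ s u, R ≤ s ∨ R ≤ u → F s u = 0) :
    Integrable (fun z => F (f z) (g z)) μ := by
  have hm : Measurable fun z => (expSq (f z), expSq (g z)) :=
    (measurable_expSq.comp hf).prodMk (measurable_expSq.comp hg)
  obtain ⟨C, hC⟩ := isCompact_univ.exists_bound_of_continuousOn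
    (continuous_liftFun hFc R).continuousOn
  simp_rw [fun z => (liftFun_mul hR hF (hf0 z) (hg0 z)).symm]
  exact hi.bdd_mul (c := C) (((continuous_liftFun hFc R).measurable.comp hm).aestronglyMeasurable)
    (Eventually.of_forall fun z => hC _ (mem_univ _))

/-- If all Gaussian integrals of the pair of functions `f k, g k` with integer exponents converge to
those of `f', g'`, then so do the integrals of all cut-off functions of the pair. -/
theorem tendsto_integral_cutoff {ι : Type*} {U : Filter ι} {Ω : ι → Type*}
    [∀ k, MeasurableSpace (Ω k)] (μ : ∀ k, Measure (Ω k)) (f g : ∀ k, Ω k → ℝ)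
    (hf : ∀ k, Measurable (f k)) (hg : ∀ k, Measurable (g k))
    (hf0 : ∀ k z, 0 ≤ f k z) (hg0 : ∀ k z, 0 ≤ g k z)
    (hi : ∀ k, Integrable (fun z => Real.exp (-(f k z) ^ 2 - (g k z) ^ 2)) (μ k))
    {Ω' : Type*} [MeasurableSpace Ω'] (μ' : Measure Ω') (f' g' : Ω' → ℝ)
    (hf' : Measurable f') (hg' : Measurable g')
    (hf0' : ∀ z, 0 ≤ f' z) (hg0' : ∀ z, 0 ≤ g' z)
    (hi' : Integrable (fun z => Real.exp (-(f' z) ^ 2 - (g' z) ^ 2)) μ')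
    (hlim : ∀ i j : ℕ, Tendsto (fun k => ∫ z, Real.exp (-((i : ℝ) + 1) * (f k z) ^ 2
        - ((j : ℝ) + 1) * (g k z) ^ 2) ∂(μ k)) U
      (𝓝 (∫ z, Real.exp (-((i : ℝ) + 1) * (f' z) ^ 2 - ((j : ℝ) + 1) * (g' z) ^ 2) ∂μ')))
    {F : ℝ → ℝ → ℝ} (hFc : Continuous (fun q : ℝ × ℝ => F q.1 q.2)) {R : ℝ} (hR : 0 ≤ R)
    (hF : ∀ s u, R ≤ s ∨ R ≤ u → F s u = 0) :
    Tendsto (fun k => ∫ z, F (f k z) (g k z) ∂(μ k)) U (𝓝 (∫ z, F (f' z) (g' z) ∂μ')) := by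
  have := fun k => isFiniteMeasure_pushGauss (hi k)
  have := isFiniteMeasure_pushGauss hi'
  have hmono : ∀ (i j : ℕ) (s u : ℝ),
      ((expSq s, expSq u).1 : ℝ) ^ i * ((expSq s, expSq u).2 : ℝ) ^ j * Real.exp (-s ^ 2 - u ^ 2)
        = Real.exp (-((i : ℝ) + 1) * s ^ 2 - ((j : ℝ) + 1) * u ^ 2) := by
    intro i j s u
    change Real.exp (-s ^ 2) ^ i * Real.exp (-u ^ 2) ^ j * Real.exp (-s ^ 2 - u ^ 2) = _
    rw [← Real.exp_nat_mul, ← Real.exp_nat_mul, ← Real.exp_add, ← Real.exp_add]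
    congr 1
    ring
  have h := tendsto_integral_of_moments (U := U) (fun k => pushGauss (μ k) (f k) (g k))
    (pushGauss μ' f' g') (fun i j => by
      have hc : Continuous fun q : I × I => (q.1 : ℝ) ^ i * (q.2 : ℝ) ^ j := by fun_prop
      simp_rw [fun k => integral_pushGauss (μ k) (hf k) (hg k) _ hc]
      rw [integral_pushGauss μ' hf' hg' _ hc]
      simp_rw [hmono]
      exact hlim i j) ⟨liftFun F R, continuous_liftFun hFc R⟩
  simp only [ContinuousMap.coe_mk] at h
  simp_rw [fun k => integral_pushGauss (μ k) (hf k) (hg k) _ (continuous_liftFun hFc R)] at h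
  rw [integral_pushGauss μ' hf' hg' _ (continuous_liftFun hFc R)] at h
  simp_rw [fun k z => liftFun_mul hR hF (hf0 k z) (hg0 k z),
    fun z => liftFun_mul hR hF (hf0' z) (hg0' z)] at h
  exact h

end Push

/-- A pseudometric measure space, bundled. -/
structure Model where
  carrier : Type
  mS : MeasurableSpace carrier
  d : carrier → carrier → ℝ
  d_self : ∀ x, d x x = 0
  d_comm : ∀ x y, d x y = d y x
  d_triangle : ∀ x y z, d x z ≤ d x y + d y z
  d_meas : ∀ x, Measurable (d x)
  μ : Measure carrier

attribute [instance] Model.mS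

theorem Model.d_nonneg (M : Model) (x y : M.carrier) : 0 ≤ M.d x y := by
  have := M.d_triangle x y x
  rw [M.d_self, M.d_comm y x] at this
  linarith

/-- For `δ = 0` this is the integral over `ℝⁿ` of `exp (-a |z - x|² - b |z - y|²)` for two points
`x, y` at distance `D`. -/
noncomputable def gaussBound (n : ℕ) (δ a b D : ℝ) : ℝ :=
  (1 - δ) / (1 + δ) ^ 2 * (π / ((1 + δ) * (a + b))) ^ ((n : ℝ) / 2) *
    Real.exp (-((1 + δ) / (1 - δ) * (a * b / (a + b))) * D ^ 2)

/-- The Gaussian integrals centred at two points are `δ`-close to the Euclidean ones. -/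
def Model.Near (M : Model) (n : ℕ) (δ : ℝ) : Prop :=
  ∀ a b : ℝ, 1 ≤ a → 1 ≤ b → ∀ x y : M.carrier,
    Integrable (fun z => Real.exp (-a * M.d x z ^ 2 - b * M.d y z ^ 2)) M.μ ∧
    gaussBound n δ a b (M.d x y) ≤ ∫ z, Real.exp (-a * M.d x z ^ 2 - b * M.d y z ^ 2) ∂M.μ ∧
    ∫ z, Real.exp (-a * M.d x z ^ 2 - b * M.d y z ^ 2) ∂M.μ ≤ gaussBound n (-δ) a b (M.d x y)

section Limit

variable {n : ℕ} {M : ℕ → Model} {δ : ℕ → ℝ} {U : Filter ℕ}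

theorem Model.Near.integrable_exp {M : Model} {δ : ℝ} (h : M.Near n δ) (x y : M.carrier) :
    Integrable (fun z => Real.exp (-(M.d x z) ^ 2 - (M.d y z) ^ 2)) M.μ := by
  simpa using (h 1 1 le_rfl le_rfl x y).1

theorem tendsto_gaussBound (hδ : Tendsto δ U (𝓝 0)) {a b : ℝ} (ha : 0 < a) (hb : 0 < b)
    {D : ℕ → ℝ} {D' : ℝ} (hD : Tendsto D U (𝓝 D')) :
    Tendsto (fun k => gaussBound n (δ k) a b (D k)) U
      (𝓝 ((π / (a + b)) ^ ((n : ℝ) / 2) * Real.exp (-(a * b / (a + b)) * D' ^ 2))) := by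
  have hc : ContinuousAt (fun q : ℝ × ℝ => gaussBound n q.1 a b q.2) (0, D') := by
    unfold gaussBound
    refine ContinuousAt.mul (ContinuousAt.mul ?_ (ContinuousAt.rpow_const ?_ (Or.inr (by positivity)))) ?_
    · exact ContinuousAt.div (by fun_prop) (by fun_prop) (by norm_num)
    · exact ContinuousAt.div (by fun_prop) (by fun_prop) (by simp; positivity)
    · refine ContinuousAt.rexp (ContinuousAt.mul (ContinuousAt.neg (ContinuousAt.mul ?_ (by fun_prop))) (by fun_prop))
      exact ContinuousAt.div (by fun_prop) (by fun_prop) (by norm_num)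
  have := hc.tendsto.comp (hδ.prodMk_nhds hD)
  simpa [gaussBound, Function.comp_def] using this

/-- The joint distribution of the distances to two points converges, on compactly supported
functions, to the Euclidean one. -/
theorem tendsto_two_point (hδ : Tendsto δ U (𝓝 0)) (hM : ∀ k, (M k).Near n (δ k))
    (x y : ∀ k, (M k).carrier) (v : EuclideanSpace ℝ (Fin n))
    (hv : Tendsto (fun k => (M k).d (x k) (y k)) U (𝓝 ‖v‖))
    {F : ℝ → ℝ → ℝ} (hFc : Continuous (fun q : ℝ × ℝ => F q.1 q.2)) {R : ℝ} (hR : 0 ≤ R)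
    (hF : ∀ s u, R ≤ s ∨ R ≤ u → F s u = 0) :
    Tendsto (fun k => ∫ z, F ((M k).d (x k) z) ((M k).d (y k) z) ∂(M k).μ) U
      (𝓝 (∫ z : EuclideanSpace ℝ (Fin n), F ‖z‖ ‖z - v‖)) := by
  refine tendsto_integral_cutoff (fun k => (M k).μ) (fun k => (M k).d (x k)) (fun k => (M k).d (y k))
    (fun k => (M k).d_meas _) (fun k => (M k).d_meas _) (fun k _ => (M k).d_nonneg _ _)
    (fun k _ => (M k).d_nonneg _ _) (fun k => (hM k).integrable_exp _ _)
    volume (fun z => ‖z‖) (fun z => ‖z - v‖) (by fun_prop) (by fun_prop) (fun _ => norm_nonneg _)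
    (fun _ => norm_nonneg _) ?_ ?_ hFc hR hF
  · simpa using gaussian_integrable one_pos one_pos v
  · intro i j
    have hi : (0 : ℝ) < (i : ℝ) + 1 := by positivity
    have hj : (0 : ℝ) < (j : ℝ) + 1 := by positivity
    rw [gaussian_integral hi hj v]
    have hδ' : Tendsto (fun k => -δ k) U (𝓝 0) := by simpa using hδ.neg
    exact tendsto_of_tendsto_of_tendsto_of_le_of_le (tendsto_gaussBound hδ hi hj hv)
      (tendsto_gaussBound hδ' hi hj hv)
      (fun k => (hM k _ _ (by linarith [(Nat.cast_nonneg i : (0 : ℝ) ≤ i)])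
        (by linarith [(Nat.cast_nonneg j : (0 : ℝ) ≤ j)]) (x k) (y k)).2.1)
      (fun k => (hM k _ _ (by linarith [(Nat.cast_nonneg i : (0 : ℝ) ≤ i)])
        (by linarith [(Nat.cast_nonneg j : (0 : ℝ) ≤ j)]) (x k) (y k)).2.2)

end Limit

/-! ### The ultralimit -/

section Ultralimit

variable {n : ℕ} {M : ℕ → Model} {δ : ℕ → ℝ} {o : ∀ k, (M k).carrier}

/-- Points of the ultralimit of the pointed spaces `(M k, o k)`: sequences at bounded distance from
the base points. Sequences at limit distance zero are not identified. -/
def UPoint (M : ℕ → Model) (o : ∀ k, (M k).carrier) : Type :=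
  {f : ∀ k, (M k).carrier // ∃ C, ∀ᶠ k in (hyperfilter ℕ : Filter ℕ), (M k).d (o k) (f k) ≤ C}

/-- The base point of the ultralimit. -/
def UPoint.base (M : ℕ → Model) (o : ∀ k, (M k).carrier) : UPoint M o :=
  ⟨o, 0, Eventually.of_forall fun k => ((M k).d_self _).le⟩

theorem UPoint.exists_lim (x y : UPoint M o) :
    ∃ L, Tendsto (fun k => (M k).d (x.1 k) (y.1 k)) (hyperfilter ℕ) (𝓝 L) := by
  obtain ⟨C, hC⟩ := x.2
  obtain ⟨C', hC'⟩ := y.2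
  have hmem : ∀ᶠ k in (hyperfilter ℕ : Filter ℕ),
      (M k).d (x.1 k) (y.1 k) ∈ Set.Icc 0 (C + C') := by
    filter_upwards [hC, hC'] with k h1 h2
    refine ⟨(M k).d_nonneg _ _, ?_⟩
    have := (M k).d_triangle (x.1 k) (o k) (y.1 k)
    rw [(M k).d_comm (x.1 k) (o k)] at this
    linarith
  obtain ⟨L, -, hL⟩ := (isCompact_Icc (a := (0 : ℝ)) (b := C + C')).ultrafilter_le_nhds
    ((hyperfilter ℕ).map fun k => (M k).d (x.1 k) (y.1 k)) (le_principal_iff.2 hmem)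
  exact ⟨L, hL⟩

/-- The limit distance. -/
noncomputable def UPoint.ud (x y : UPoint M o) : ℝ := (x.exists_lim y).choose

theorem UPoint.tendsto_ud (x y : UPoint M o) :
    Tendsto (fun k => (M k).d (x.1 k) (y.1 k)) (hyperfilter ℕ) (𝓝 (x.ud y)) :=
  (x.exists_lim y).choose_spec

theorem UPoint.ud_eq {x y : UPoint M o} {L : ℝ}
    (h : Tendsto (fun k => (M k).d (x.1 k) (y.1 k)) (hyperfilter ℕ) (𝓝 L)) : x.ud y = L :=
  tendsto_nhds_unique (x.tendsto_ud y) h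

theorem UPoint.ud_self (x : UPoint M o) : x.ud x = 0 :=
  UPoint.ud_eq (by simp [(M _).d_self])

theorem UPoint.ud_comm (x y : UPoint M o) : x.ud y = y.ud x :=
  UPoint.ud_eq (by simpa [(M _).d_comm (x.1 _)] using y.tendsto_ud x)

theorem UPoint.ud_nonneg (x y : UPoint M o) : 0 ≤ x.ud y :=
  ge_of_tendsto' (x.tendsto_ud y) fun k => (M k).d_nonneg _ _

/-- Countable saturation of the ultraproduct. -/
theorem saturation {X : ℕ → Type} [∀ k, Nonempty (X k)] (P : ℕ → ∀ k, X k → Prop)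
    (h : ∀ j, ∀ᶠ k in (hyperfilter ℕ : Filter ℕ), ∃ z, ∀ i ≤ j, P i k z) :
    ∃ z : ∀ k, X k, ∀ j, ∀ᶠ k in (hyperfilter ℕ : Filter ℕ), P j k (z k) := by
  classical
  -- at index `k`, satisfy as many of the first `k` conditions as possible
  let Q : ℕ → ℕ → Prop := fun k j => ∃ z : X k, ∀ i ≤ j, P i k z
  have hz : ∀ k, ∃ z : X k, Q k (Nat.findGreatest (Q k) k) →
      ∀ i ≤ Nat.findGreatest (Q k) k, P i k z := by
    intro k
    by_cases hq : Q k (Nat.findGreatest (Q k) k)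
    · obtain ⟨z, hz⟩ := hq
      exact ⟨z, fun _ => hz⟩
    · exact ⟨Classical.arbitrary _, fun h => (hq h).elim⟩
  choose z hz using hz
  refine ⟨z, fun j => ?_⟩
  filter_upwards [h j, Nat.hyperfilter_le_atTop (eventually_ge_atTop j)] with k hk hjk
  exact hz k (Nat.findGreatest_spec hjk hk) j (Nat.le_findGreatest hjk hk)

/-- A property which, along every sequence of points, holds for many indices holds at almost every
index for all points simultaneously. -/
theorem eventually_forall_of {X : ℕ → Type} [∀ k, Nonempty (X k)] (P : ∀ k, X k → Prop)
    (h : ∀ z : ∀ k, X k, ∃ᶠ k in (hyperfilter ℕ : Filter ℕ), P k (z k)) :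
    ∀ᶠ k in (hyperfilter ℕ : Filter ℕ), ∀ z, P k z := by
  classical
  have hz : ∀ k, ∃ z : X k, P k z → ∀ z, P k z := by
    intro k
    by_cases hq : ∀ z, P k z
    · exact ⟨Classical.arbitrary _, fun _ => hq⟩
    · push Not at hq
      obtain ⟨z, hz⟩ := hq
      exact ⟨z, fun h => (hz h).elim⟩
  choose z hz using hz
  filter_upwards [Ultrafilter.frequently_iff_eventually.1 (h z)] with k hk
  exact hz k hk

/-- The first unit vector. -/
noncomputable def e0 (hn : 1 ≤ n) : EuclideanSpace ℝ (Fin n) := EuclideanSpace.single ⟨0, hn⟩ 1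

theorem norm_e0 (hn : 1 ≤ n) : ‖e0 hn‖ = 1 := by simp [e0]

theorem norm_smul_e0 (hn : 1 ≤ n) {D : ℝ} (hD : 0 ≤ D) : ‖D • e0 hn‖ = D := by
  rw [norm_smul, norm_e0, mul_one, Real.norm_of_nonneg hD]

/-- Two-point convergence along the ultrafilter; the Euclidean configuration has its two points on
the first axis. -/
theorem UPoint.tendsto_two_point (hn : 1 ≤ n) (hδ : Tendsto δ atTop (𝓝 0))
    (hM : ∀ k, (M k).Near n (δ k)) (x y : UPoint M o)
    {F : ℝ → ℝ → ℝ} (hFc : Continuous (fun q : ℝ × ℝ => F q.1 q.2)) {R : ℝ} (hR : 0 ≤ R)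
    (hF : ∀ s u, R ≤ s ∨ R ≤ u → F s u = 0) :
    Tendsto (fun k => ∫ z, F ((M k).d (x.1 k) z) ((M k).d (y.1 k) z) ∂(M k).μ) (hyperfilter ℕ)
      (𝓝 (∫ z : EuclideanSpace ℝ (Fin n), F ‖z‖ ‖z - (x.ud y) • e0 hn‖)) := by
  refine HeatRigidity.tendsto_two_point (hδ.mono_left Nat.hyperfilter_le_atTop) hM x.1 y.1 _ ?_
    hFc hR hF
  rw [norm_smul_e0 hn (x.ud_nonneg y)]
  exact x.tendsto_ud y

/-- Every line through two points of the ultralimit is realized in it. -/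
theorem UPoint.exists_line (hn : 1 ≤ n) (hδ : Tendsto δ atTop (𝓝 0))
    (hM : ∀ k, (M k).Near n (δ k)) (x y : UPoint M o) (t : ℝ) :
    ∃ z : UPoint M o, x.ud z = |t| * x.ud y ∧ y.ud z = |t - 1| * x.ud y := by
  set D := x.ud y with hD
  have hD0 : 0 ≤ D := x.ud_nonneg y
  have : ∀ k, Nonempty (M k).carrier := fun k => ⟨o k⟩
  have hex : ∀ ρ : ℝ, 0 < ρ → ∀ᶠ k in (hyperfilter ℕ : Filter ℕ), ∃ z,
      |(M k).d (x.1 k) z - |t| * D| < ρ ∧ |(M k).d (y.1 k) z - |t - 1| * D| < ρ := by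
    intro ρ hρ
    let F : ℝ → ℝ → ℝ := fun s u => max 0 (ρ - |s - |t| * D| - |u - |t - 1| * D|)
    have hFc : Continuous (fun q : ℝ × ℝ => F q.1 q.2) := by fun_prop
    have hR : 0 ≤ |t| * D + |t - 1| * D + ρ := by positivity
    have hFz : ∀ s u, |t| * D + |t - 1| * D + ρ ≤ s ∨ |t| * D + |t - 1| * D + ρ ≤ u →
        F s u = 0 := by
      intro s u h
      have h1 : 0 ≤ |t| * D := by positivity
      have h2 : 0 ≤ |t - 1| * D := by positivity
      refine max_eq_left ?_
      rcases h with h | h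
      · linarith [le_abs_self (s - |t| * D), abs_nonneg (u - |t - 1| * D)]
      · linarith [le_abs_self (u - |t - 1| * D), abs_nonneg (s - |t| * D)]
    have hlim := UPoint.tendsto_two_point hn hδ hM x y hFc hR hFz
    have hpos : 0 < ∫ z : EuclideanSpace ℝ (Fin n), F ‖z‖ ‖z - (x.ud y) • e0 hn‖ := by
      refine Continuous.integral_pos_of_hasCompactSupport_nonneg_nonzero (x := (t * D) • e0 hn)
        (hFc.comp (f := fun z : EuclideanSpace ℝ (Fin n) => (‖z‖, ‖z - (x.ud y) • e0 hn‖))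
          (by fun_prop)) ?_ (fun z => le_max_left _ _) ?_
      · refine HasCompactSupport.of_support_subset_isCompact
          (isCompact_closedBall 0 (|t| * D + |t - 1| * D + ρ)) fun z hz => ?_
        by_contra hcon
        refine hz (hFz _ _ (Or.inl ?_))
        simpa using le_of_lt (by simpa using hcon)
      · have e1 : ‖(t * D) • e0 hn‖ = |t| * D := by
          rw [norm_smul, norm_e0, mul_one, Real.norm_eq_abs, abs_mul, abs_of_nonneg hD0]
        have e2 : ‖(t * D) • e0 hn - (x.ud y) • e0 hn‖ = |t - 1| * D := by
          rw [← hD, ← sub_smul, show t * D - D = (t - 1) * D by ring, norm_smul, norm_e0, mul_one,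
            Real.norm_eq_abs, abs_mul, abs_of_nonneg hD0]
        simp only [e1, e2, F, sub_self, abs_zero, sub_zero]
        rw [max_eq_right hρ.le]
        exact hρ.ne'
    filter_upwards [hlim.eventually_const_lt hpos] with k hk
    by_contra hcon
    push Not at hcon
    refine hk.ne' ?_
    rw [← integral_zero (M k).carrier ℝ (μ := (M k).μ)]
    refine integral_congr_ae (Eventually.of_forall fun z => max_eq_left ?_)
    by_cases h : |(M k).d (x.1 k) z - |t| * D| < ρ
    · linarith [hcon z h, abs_nonneg ((M k).d (x.1 k) z - |t| * D)]
    · linarith [not_lt.1 h, abs_nonneg ((M k).d (y.1 k) z - |t - 1| * D)]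
  obtain ⟨z, hz⟩ := saturation (X := fun k => (M k).carrier)
    (fun j k z => |(M k).d (x.1 k) z - |t| * D| < 1 / ((j : ℝ) + 1) ∧
      |(M k).d (y.1 k) z - |t - 1| * D| < 1 / ((j : ℝ) + 1)) (fun j => by
      filter_upwards [hex (1 / ((j : ℝ) + 1)) (by positivity)] with k hk
      obtain ⟨z, h1, h2⟩ := hk
      refine ⟨z, fun i hi => ?_⟩
      have : 1 / ((j : ℝ) + 1) ≤ 1 / ((i : ℝ) + 1) := by gcongr
      exact ⟨h1.trans_le this, h2.trans_le this⟩)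
  have hzb : ∃ C, ∀ᶠ k in (hyperfilter ℕ : Filter ℕ), (M k).d (o k) (z k) ≤ C := by
    obtain ⟨C, hC⟩ := x.2
    refine ⟨C + (|t| * D + 1), ?_⟩
    filter_upwards [hC, hz 0] with k h1 h2
    have h3 := (abs_lt.1 h2.1).2
    norm_num at h3
    linarith [(M k).d_triangle (o k) (x.1 k) (z k)]
  have lim_of : ∀ (w : UPoint M o) (L : ℝ), (∀ j : ℕ, ∀ᶠ k in (hyperfilter ℕ : Filter ℕ),
      |(M k).d (w.1 k) (z k) - L| < 1 / ((j : ℝ) + 1)) → w.ud ⟨z, hzb⟩ = L := by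
    intro w L h
    refine UPoint.ud_eq (Metric.tendsto_nhds.2 fun ε hε => ?_)
    obtain ⟨j, hj⟩ := exists_nat_one_div_lt hε
    filter_upwards [h j] with k hk
    rw [Real.dist_eq]
    exact hk.trans hj
  exact ⟨⟨z, hzb⟩, lim_of x _ fun j => (hz j).mono fun k hk => hk.1,
    lim_of y _ fun j => (hz j).mono fun k hk => hk.2⟩

end Ultralimit

/-! ### The ultralimit is an inner product space -/

section Psd

variable {n : ℕ} {M : ℕ → Model} {δ : ℕ → ℝ} {o : ∀ k, (M k).carrier}

/-- The limit `K (x.ud y)` of the overlap integrals of a radial cutoff `h` is a positive semidefinite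
kernel, also after subtracting the values at a base point `b`: the double sum is a limit of
integrals of squares. -/
theorem UPoint.overlap_psd (hn : 1 ≤ n) (hδ : Tendsto δ atTop (𝓝 0))
    (hM : ∀ k, (M k).Near n (δ k)) (h : ℝ → ℝ) (hc : Continuous h) {R : ℝ} (hR : 0 ≤ R)
    (hh : ∀ s, R ≤ s → h s = 0) (K : ℝ → ℝ)
    (hK : ∀ D, K D = ∫ z : EuclideanSpace ℝ (Fin n), h ‖z‖ * h ‖z - D • e0 hn‖)
    (s : Finset (UPoint M o)) (c : UPoint M o → ℝ) (b : UPoint M o) :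
    0 ≤ ∑ x ∈ s, ∑ y ∈ s, c x * c y *
      (K (x.ud y) - K (x.ud b) - K (b.ud y) + K (b.ud b)) := by
  have hFc : Continuous (fun q : ℝ × ℝ => h q.1 * h q.2) := by fun_prop
  have hF : ∀ s u, R ≤ s ∨ R ≤ u → h s * h u = 0 := by
    intro s u hsu
    rcases hsu with hsu | hsu <;> simp [hh _ hsu]
  have hInteg : ∀ k (x y : UPoint M o), Integrable
      (fun z => h ((M k).d (x.1 k) z) * h ((M k).d (y.1 k) z)) (M k).μ := fun k x y =>
    integrable_cutoff ((M k).d_meas _) ((M k).d_meas _) (fun _ => (M k).d_nonneg _ _)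
      (fun _ => (M k).d_nonneg _ _) ((hM k).integrable_exp _ _) (F := fun s u => h s * h u) hFc hR hF
  have hlim : ∀ x y : UPoint M o, Tendsto
      (fun k => ∫ z, h ((M k).d (x.1 k) z) * h ((M k).d (y.1 k) z) ∂(M k).μ) (hyperfilter ℕ)
      (𝓝 (K (x.ud y))) := fun x y => by
    rw [hK]
    exact UPoint.tendsto_two_point hn hδ hM x y (F := fun s u => h s * h u) hFc hR hF
  have hlim2 : Tendsto (fun k => ∑ x ∈ s, ∑ y ∈ s, c x * c y *
      ((∫ z, h ((M k).d (x.1 k) z) * h ((M k).d (y.1 k) z) ∂(M k).μ)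
        - (∫ z, h ((M k).d (x.1 k) z) * h ((M k).d (b.1 k) z) ∂(M k).μ)
        - (∫ z, h ((M k).d (b.1 k) z) * h ((M k).d (y.1 k) z) ∂(M k).μ)
        + (∫ z, h ((M k).d (b.1 k) z) * h ((M k).d (b.1 k) z) ∂(M k).μ))) (hyperfilter ℕ)
      (𝓝 (∑ x ∈ s, ∑ y ∈ s, c x * c y *
      (K (x.ud y) - K (x.ud b) - K (b.ud y) + K (b.ud b)))) :=
    tendsto_finsetSum _ fun x _ => tendsto_finsetSum _ fun y _ =>
      ((((hlim x y).sub (hlim x b)).sub (hlim b y)).add (hlim b b)).const_mul _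
  refine ge_of_tendsto' hlim2 fun k => ?_
  have hi2 : ∀ x y : UPoint M o, Integrable (fun z => c x * c y *
      (h ((M k).d (x.1 k) z) * h ((M k).d (y.1 k) z) - h ((M k).d (x.1 k) z) * h ((M k).d (b.1 k) z)
        - h ((M k).d (b.1 k) z) * h ((M k).d (y.1 k) z)
        + h ((M k).d (b.1 k) z) * h ((M k).d (b.1 k) z))) (M k).μ := fun x y =>
    ((((hInteg k x y).sub (hInteg k x b)).sub (hInteg k b y)).add (hInteg k b b)).const_mul _
  have heq : (∑ x ∈ s, ∑ y ∈ s, c x * c y *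
      ((∫ z, h ((M k).d (x.1 k) z) * h ((M k).d (y.1 k) z) ∂(M k).μ)
        - (∫ z, h ((M k).d (x.1 k) z) * h ((M k).d (b.1 k) z) ∂(M k).μ)
        - (∫ z, h ((M k).d (b.1 k) z) * h ((M k).d (y.1 k) z) ∂(M k).μ)
        + (∫ z, h ((M k).d (b.1 k) z) * h ((M k).d (b.1 k) z) ∂(M k).μ)))
      = ∫ z, (∑ x ∈ s, c x * (h ((M k).d (x.1 k) z) - h ((M k).d (b.1 k) z))) ^ 2 ∂(M k).μ := by
    have e1 : ∀ z, (∑ x ∈ s, c x * (h ((M k).d (x.1 k) z) - h ((M k).d (b.1 k) z))) ^ 2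
        = ∑ x ∈ s, ∑ y ∈ s, c x * c y *
      (h ((M k).d (x.1 k) z) * h ((M k).d (y.1 k) z) - h ((M k).d (x.1 k) z) * h ((M k).d (b.1 k) z)
        - h ((M k).d (b.1 k) z) * h ((M k).d (y.1 k) z)
        + h ((M k).d (b.1 k) z) * h ((M k).d (b.1 k) z)) := by
      intro z
      rw [sq, Finset.sum_mul_sum]
      refine Finset.sum_congr rfl fun x _ => Finset.sum_congr rfl fun y _ => by ring
    simp_rw [e1]
    rw [integral_finsetSum _ fun x _ => integrable_finsetSum _ fun y _ => hi2 x y]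
    refine Finset.sum_congr rfl fun x _ => ?_
    rw [integral_finsetSum _ fun y _ => hi2 x y]
    refine Finset.sum_congr rfl fun y _ => ?_
    have i1 : Integrable (fun z => h ((M k).d (x.1 k) z) * h ((M k).d (y.1 k) z)
        - h ((M k).d (x.1 k) z) * h ((M k).d (b.1 k) z)) (M k).μ := (hInteg k x y).sub (hInteg k x b)
    have i2 : Integrable (fun z => h ((M k).d (x.1 k) z) * h ((M k).d (y.1 k) z)
        - h ((M k).d (x.1 k) z) * h ((M k).d (b.1 k) z)
        - h ((M k).d (b.1 k) z) * h ((M k).d (y.1 k) z)) (M k).μ := i1.sub (hInteg k b y)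
    rw [integral_const_mul, integral_add i2 (hInteg k b b), integral_sub i1 (hInteg k b y),
      integral_sub (hInteg k x y) (hInteg k x b)]
  rw [heq]
  exact integral_nonneg fun z => sq_nonneg _

/-- Gaussians of the limit distance, recentred at a base point `b`, are positive semidefinite kernels
at every scale `τ`. -/
theorem UPoint.gauss_psd (hn : 1 ≤ n) (hδ : Tendsto δ atTop (𝓝 0))
    (hM : ∀ k, (M k).Near n (δ k)) {τ : ℝ} (hτ : 0 < τ)
    (s : Finset (UPoint M o)) (c : UPoint M o → ℝ) (b : UPoint M o) :
    0 ≤ ∑ x ∈ s, ∑ y ∈ s, c x * c y *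
      (Real.exp (-τ * x.ud y ^ 2) - Real.exp (-τ * x.ud b ^ 2) - Real.exp (-τ * b.ud y ^ 2)
        + Real.exp (-τ * b.ud b ^ 2)) := by
  let h : ℕ → ℝ → ℝ := fun N s => Real.exp (-(2 * τ) * s ^ 2) * max 0 (min 1 ((N : ℝ) - s))
  let K : ℕ → ℝ → ℝ := fun N D =>
    ∫ z : EuclideanSpace ℝ (Fin n), h N ‖z‖ * h N ‖z - D • e0 hn‖
  have hcut : ∀ (N : ℕ) (s : ℝ), 0 ≤ max 0 (min 1 ((N : ℝ) - s)) ∧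
      max 0 (min 1 ((N : ℝ) - s)) ≤ 1 := fun N s =>
    ⟨le_max_left _ _, max_le zero_le_one (min_le_left _ _)⟩
  have hcut1 : ∀ s : ℝ, ∀ᶠ N : ℕ in atTop, max 0 (min 1 ((N : ℝ) - s)) = 1 := by
    intro s
    filter_upwards [eventually_ge_atTop ⌈s + 1⌉₊] with N hN
    have : s + 1 ≤ N := (Nat.le_ceil _).trans (by exact_mod_cast hN)
    rw [min_eq_left (by linarith), max_eq_right zero_le_one]
  have hhc : ∀ N, Continuous (h N) := fun N => by fun_prop
  set A : ℝ := (π / (2 * τ + 2 * τ)) ^ ((n : ℝ) / 2) with hA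
  have hA0 : 0 < A := by positivity
  have hKlim : ∀ D : ℝ, Tendsto (fun N => K N D) atTop (𝓝 (A * Real.exp (-τ * D ^ 2))) := by
    intro D
    have hval : A * Real.exp (-τ * D ^ 2) = ∫ z : EuclideanSpace ℝ (Fin n),
        Real.exp (-(2 * τ) * ‖z‖ ^ 2 - (2 * τ) * ‖z - D • e0 hn‖ ^ 2) := by
      rw [gaussian_integral (by positivity) (by positivity), norm_smul, norm_e0, mul_one,
        Real.norm_eq_abs, sq_abs]
      congr 3
      field_simp
      ring
    rw [hval]
    have hexp : ∀ z : EuclideanSpace ℝ (Fin n),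
        Real.exp (-(2 * τ) * ‖z‖ ^ 2 - (2 * τ) * ‖z - D • e0 hn‖ ^ 2)
        = Real.exp (-(2 * τ) * ‖z‖ ^ 2) * Real.exp (-(2 * τ) * ‖z - D • e0 hn‖ ^ 2) := by
      intro z
      rw [← Real.exp_add]
      congr 1
      ring
    refine tendsto_integral_of_dominated_convergence
      (fun z => Real.exp (-(2 * τ) * ‖z‖ ^ 2 - (2 * τ) * ‖z - D • e0 hn‖ ^ 2))
      (fun N => Continuous.aestronglyMeasurable (by fun_prop))
      (gaussian_integrable (by positivity) (by positivity) _)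
      (fun N => Eventually.of_forall fun z => ?_) (Eventually.of_forall fun z => ?_)
    · have h1 := hcut N ‖z‖
      have h2 := hcut N ‖z - D • e0 hn‖
      have h3 : ∀ s, 0 ≤ h N s := fun s => mul_nonneg (Real.exp_pos _).le (hcut N s).1
      have h4 : ∀ s, h N s ≤ Real.exp (-(2 * τ) * s ^ 2) := fun s =>
        mul_le_of_le_one_right (Real.exp_pos _).le (hcut N s).2
      rw [Real.norm_of_nonneg (mul_nonneg (h3 _) (h3 _)), hexp]
      exact mul_le_mul (h4 _) (h4 _) (h3 _) (Real.exp_pos _).le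
    · refine tendsto_const_nhds.congr' ?_
      filter_upwards [hcut1 ‖z‖, hcut1 ‖z - D • e0 hn‖] with N h1 h2
      simp only [h, h1, h2, mul_one]
      rw [hexp]
  have hlim : Tendsto (fun N => ∑ x ∈ s, ∑ y ∈ s, c x * c y *
      (K N (x.ud y) - K N (x.ud b) - K N (b.ud y) + K N (b.ud b))) atTop
      (𝓝 (∑ x ∈ s, ∑ y ∈ s, c x * c y *
      (A * Real.exp (-τ * x.ud y ^ 2) - A * Real.exp (-τ * x.ud b ^ 2)
        - A * Real.exp (-τ * b.ud y ^ 2) + A * Real.exp (-τ * b.ud b ^ 2)))) :=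
    tendsto_finsetSum _ fun x _ => tendsto_finsetSum _ fun y _ =>
      ((((hKlim _).sub (hKlim _)).sub (hKlim _)).add (hKlim _)).const_mul _
  have h0 := ge_of_tendsto' hlim fun N => UPoint.overlap_psd hn hδ hM (h N) (hhc N)
    (R := N) (Nat.cast_nonneg N) (fun s hs => by
      simp only [h]
      rw [max_eq_left (min_le_of_right_le (by linarith)), mul_zero]) (K N) (fun D => rfl) s c b
  have e : (∑ x ∈ s, ∑ y ∈ s, c x * c y *
      (A * Real.exp (-τ * x.ud y ^ 2) - A * Real.exp (-τ * x.ud b ^ 2)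
        - A * Real.exp (-τ * b.ud y ^ 2) + A * Real.exp (-τ * b.ud b ^ 2)))
      = A * ∑ x ∈ s, ∑ y ∈ s, c x * c y *
      (Real.exp (-τ * x.ud y ^ 2) - Real.exp (-τ * x.ud b ^ 2) - Real.exp (-τ * b.ud y ^ 2)
        + Real.exp (-τ * b.ud b ^ 2)) := by
    rw [Finset.mul_sum]
    refine Finset.sum_congr rfl fun x _ => ?_
    rw [Finset.mul_sum]
    exact Finset.sum_congr rfl fun y _ => by ring
  rw [e] at h0
  exact nonneg_of_mul_nonneg_right h0 hA0

/-- The candidate inner product of two points, based at `b`. -/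
noncomputable def UPoint.gram (b x y : UPoint M o) : ℝ :=
  (x.ud b ^ 2 + b.ud y ^ 2 - x.ud y ^ 2) / 2

/-- Schoenberg's argument: differentiate the positive semidefinite Gaussian kernels at `τ = 0`. -/
theorem UPoint.gram_psd (hn : 1 ≤ n) (hδ : Tendsto δ atTop (𝓝 0))
    (hM : ∀ k, (M k).Near n (δ k)) (b : UPoint M o) (s : Finset (UPoint M o)) (c : UPoint M o → ℝ) :
    0 ≤ ∑ x ∈ s, ∑ y ∈ s, c x * c y * b.gram x y := by
  have hder : ∀ q : ℝ, Tendsto (fun τ : ℝ => τ⁻¹ * (Real.exp (-τ * q) - 1)) (𝓝[>] 0) (𝓝 (-q)) := by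
    intro q
    have h1 : HasDerivAt (fun τ : ℝ => Real.exp (-τ * q)) (-q) 0 := by
      have := ((hasDerivAt_id (0 : ℝ)).neg.mul_const q).exp
      simpa using this
    have h2 := h1.tendsto_slope_zero_right
    simpa using h2
  have hlim : Tendsto (fun τ : ℝ => ∑ x ∈ s, ∑ y ∈ s, c x * c y *
      (τ⁻¹ * (Real.exp (-τ * x.ud y ^ 2) - 1) - τ⁻¹ * (Real.exp (-τ * x.ud b ^ 2) - 1)
        - τ⁻¹ * (Real.exp (-τ * b.ud y ^ 2) - 1)
        + τ⁻¹ * (Real.exp (-τ * b.ud b ^ 2) - 1))) (𝓝[>] 0)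
      (𝓝 (∑ x ∈ s, ∑ y ∈ s, c x * c y *
        (-(x.ud y ^ 2) - -(x.ud b ^ 2) - -(b.ud y ^ 2) + -(b.ud b ^ 2)))) :=
    tendsto_finsetSum _ fun x _ => tendsto_finsetSum _ fun y _ =>
      ((((hder _).sub (hder _)).sub (hder _)).add (hder _)).const_mul _
  have h0 : 0 ≤ ∑ x ∈ s, ∑ y ∈ s, c x * c y *
        (-(x.ud y ^ 2) - -(x.ud b ^ 2) - -(b.ud y ^ 2) + -(b.ud b ^ 2)) := by
    refine ge_of_tendsto hlim ?_
    filter_upwards [self_mem_nhdsWithin] with τ hτ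
    have hτ : 0 < τ := hτ
    have h1 := mul_nonneg (inv_pos.2 hτ).le (UPoint.gauss_psd hn hδ hM hτ s c b)
    convert h1 using 1
    rw [Finset.mul_sum]
    refine Finset.sum_congr rfl fun x _ => ?_
    rw [Finset.mul_sum]
    exact Finset.sum_congr rfl fun y _ => by ring
  have e : (∑ x ∈ s, ∑ y ∈ s, c x * c y *
        (-(x.ud y ^ 2) - -(x.ud b ^ 2) - -(b.ud y ^ 2) + -(b.ud b ^ 2)))
      = 2 * ∑ x ∈ s, ∑ y ∈ s, c x * c y * b.gram x y := by
    rw [Finset.mul_sum]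
    refine Finset.sum_congr rfl fun x _ => ?_
    rw [Finset.mul_sum]
    refine Finset.sum_congr rfl fun y _ => ?_
    rw [b.ud_self, UPoint.gram]
    ring
  rw [e] at h0
  linarith

/-- The ultralimit embeds isometrically in an inner product space, the base point going to `0`,
and the image is a linear subspace. -/
theorem UPoint.exists_submodule (hn : 1 ≤ n) (hδ : Tendsto δ atTop (𝓝 0))
    (hM : ∀ k, (M k).Near n (δ k)) (o : ∀ k, (M k).carrier) :
    ∃ (H : Type) (_ : NormedAddCommGroup H) (_ : InnerProductSpace ℝ H) (φ : UPoint M o → H)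
      (V : Submodule ℝ H), φ (UPoint.base M o) = 0 ∧ (∀ x y, x.ud y = ‖φ x - φ y‖) ∧
      (V : Set H) = Set.range φ := by
  set b := UPoint.base M o with hb
  obtain ⟨H, _, _, φ, hφ⟩ := exists_hilbert (fun x y => b.gram x y)
    (fun x y => by
      simp only [UPoint.gram]
      rw [x.ud_comm y, x.ud_comm b, b.ud_comm y]; ring)
    (fun c => UPoint.gram_psd hn hδ hM b c.support c)
  have hφb : φ b = 0 := by
    rw [← inner_self_eq_zero (𝕜 := ℝ), hφ, UPoint.gram, b.ud_self]
    norm_num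
  have hdist : ∀ x y, x.ud y = ‖φ x - φ y‖ := by
    intro x y
    rw [← abs_of_nonneg (x.ud_nonneg y), ← abs_of_nonneg (norm_nonneg (φ x - φ y)), ← sq_eq_sq_iff_abs_eq_abs,
      @norm_sub_sq_real, ← real_inner_self_eq_norm_sq, ← real_inner_self_eq_norm_sq, hφ, hφ, hφ]
    simp only [UPoint.gram]
    rw [x.ud_self, y.ud_self, b.ud_comm y, b.ud_comm x]
    ring
  have hline : ∀ (x y : UPoint M o) (t : ℝ), φ x + t • (φ y - φ x) ∈ Set.range φ := by
    intro x y t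
    obtain ⟨z, h1, h2⟩ := UPoint.exists_line hn hδ hM x y t
    refine ⟨z, ?_⟩
    rw [hdist, hdist] at h1 h2
    set w := φ z - φ x with hw
    set u := φ y - φ x with hu
    have e1 : ‖w‖ ^ 2 = t ^ 2 * ‖u‖ ^ 2 := by
      rw [hw, hu, norm_sub_rev, h1, norm_sub_rev (φ x), mul_pow, sq_abs]
    have e2 : ‖u - w‖ ^ 2 = (t - 1) ^ 2 * ‖u‖ ^ 2 := by
      rw [hw, hu, sub_sub_sub_cancel_right, h2, norm_sub_rev (φ x), mul_pow, sq_abs]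
    have e3 : inner ℝ u w = t * ‖u‖ ^ 2 := by
      rw [@norm_sub_sq_real] at e2
      nlinarith
    have e4 : ‖t • u - w‖ ^ 2 = 0 := by
      rw [@norm_sub_sq_real, inner_smul_left, e3, e1, norm_smul, mul_pow, Real.norm_eq_abs, sq_abs]
      simp only [conj_trivial]
      ring
    have e5 : t • u = w := sub_eq_zero.1 (norm_eq_zero.1 (pow_eq_zero_iff two_ne_zero |>.1 e4))
    rw [e5, hw]
    abel
  have hsmul : ∀ (t : ℝ) (v : H), v ∈ Set.range φ → t • v ∈ Set.range φ := by
    rintro t _ ⟨x, rfl⟩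
    simpa [hφb] using hline b x t
  refine ⟨H, _, _, φ, ⟨⟨⟨Set.range φ, ?_⟩, ⟨b, hφb⟩⟩, fun t v hv => hsmul t v hv⟩, hφb, hdist, rfl⟩
  rintro _ _ ⟨x, rfl⟩ ⟨y, rfl⟩
  -- twice the midpoint
  have := hsmul 2 _ (hline x y (1 / 2))
  convert this using 1
  module

end Psd

/-! ### Second moments and the dimension -/

section Dimension

/-- The cutoff used to weight the unit ball. -/
noncomputable def tent (s : ℝ) : ℝ := max 0 (1 - s)

/-- A cutoff equal to `1` up to `3`, and vanishing from `4` on. -/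
noncomputable def plateau (s : ℝ) : ℝ := max 0 (min 1 (4 - s))

theorem continuous_tent : Continuous tent := by unfold tent; fun_prop

theorem continuous_plateau : Continuous plateau := by unfold plateau; fun_prop

theorem tent_nonneg (s : ℝ) : 0 ≤ tent s := le_max_left _ _

theorem tent_eq_zero {s : ℝ} (h : 1 ≤ s) : tent s = 0 := max_eq_left (by linarith)

theorem plateau_eq_zero {s : ℝ} (h : 4 ≤ s) : plateau s = 0 :=
  max_eq_left (min_le_of_right_le (by linarith))

theorem plateau_eq_one {s : ℝ} (h : s ≤ 3) : plateau s = 1 := by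
  rw [plateau, min_eq_left (by linarith), max_eq_right zero_le_one]

/-- When `u ≤ s + 2`, the cutoff in `u` is redundant. -/
theorem tent_mul_plateau {s u : ℝ} (h : u ≤ s + 2) : tent s * plateau u = tent s := by
  rcases le_total 1 s with h1 | h1
  · rw [tent_eq_zero h1, zero_mul]
  · rw [plateau_eq_one (by linarith), mul_one]

variable {n : ℕ}

theorem hasCompactSupport_mul_tent (g : EuclideanSpace ℝ (Fin n) → ℝ) :
    HasCompactSupport fun z => g z * tent ‖z‖ := by
  refine HasCompactSupport.of_support_subset_isCompact (isCompact_closedBall 0 1) fun z hz => ?_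
  by_contra hcon
  refine hz ?_
  have : 1 < ‖z‖ := by simpa using hcon
  simp only [tent_eq_zero this.le, mul_zero]

theorem integrable_mul_tent {g : EuclideanSpace ℝ (Fin n) → ℝ} (hg : Continuous g) :
    Integrable fun z => g z * tent ‖z‖ :=
  (hg.mul (continuous_tent.comp continuous_norm)).integrable_of_hasCompactSupport
    (hasCompactSupport_mul_tent g)

theorem continuous_coord (i : Fin n) : Continuous fun z : EuclideanSpace ℝ (Fin n) => z i := by
  fun_prop

theorem second_moment_pos (hn : 1 ≤ n) :
    0 < ∫ z : EuclideanSpace ℝ (Fin n), z ⟨0, hn⟩ ^ 2 * tent ‖z‖ := by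
  refine Continuous.integral_pos_of_hasCompactSupport_nonneg_nonzero (x := (1 / 2 : ℝ) • e0 hn)
    (((continuous_coord _).pow 2).mul (continuous_tent.comp continuous_norm))
    (hasCompactSupport_mul_tent _) (fun z => mul_nonneg (sq_nonneg _) (tent_nonneg _)) ?_
  rw [norm_smul_e0 hn (by norm_num)]
  norm_num [e0, tent]

theorem second_moment_symm (hn : 1 ≤ n) (i : Fin n) :
    ∫ z : EuclideanSpace ℝ (Fin n), z i ^ 2 * tent ‖z‖
      = ∫ z : EuclideanSpace ℝ (Fin n), z ⟨0, hn⟩ ^ 2 * tent ‖z‖ := by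
  let e := LinearIsometryEquiv.piLpCongrLeft 2 ℝ ℝ (Equiv.swap i ⟨0, hn⟩)
  have := e.measurePreserving.integral_comp e.toHomeomorph.measurableEmbedding
    (fun z : EuclideanSpace ℝ (Fin n) => z i ^ 2 * tent ‖z‖)
  rw [← this]
  refine integral_congr_ae (Eventually.of_forall fun z => ?_)
  simp only [e.norm_map]
  congr 2
  simp [e, LinearIsometryEquiv.piLpCongrLeft_apply]

theorem second_moment_trace (hn : 1 ≤ n) :
    ∫ z : EuclideanSpace ℝ (Fin n), ‖z‖ ^ 2 * tent ‖z‖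
      = n * ∫ z : EuclideanSpace ℝ (Fin n), z ⟨0, hn⟩ ^ 2 * tent ‖z‖ := by
  have h : ∀ z : EuclideanSpace ℝ (Fin n), ‖z‖ ^ 2 * tent ‖z‖ = ∑ i, z i ^ 2 * tent ‖z‖ := by
    intro z
    rw [EuclideanSpace.real_norm_sq_eq, Finset.sum_mul]
  simp_rw [h]
  rw [integral_finsetSum _ fun i _ => integrable_mul_tent (g := fun z => z i ^ 2)
    ((continuous_coord i).pow 2)]
  simp [second_moment_symm hn]

variable {M : ℕ → Model} {δ : ℕ → ℝ} {o : ∀ k, (M k).carrier}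

/-- Comparison of second moments over the unit ball. If `Σ ⟨z, yᵢ⟩² ≤ |z|²` in the ultralimit for
`m` unit vectors `yᵢ` then `m ≤ n`; if the reverse inequality holds, then `n ≤ m`. Both cases are
covered by the sign `σ`. -/
theorem UPoint.trace_le (hn : 1 ≤ n) (hδ : Tendsto δ atTop (𝓝 0))
    (hM : ∀ k, (M k).Near n (δ k)) (σ : ℝ) {m : ℕ} (y : Fin m → UPoint M o)
    (hy : ∀ i, (UPoint.base M o).ud (y i) = 1)
    (h : ∀ z : UPoint M o, σ * (∑ i, (((UPoint.base M o).ud z ^ 2 + 1 - (y i).ud z ^ 2) / 2) ^ 2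
      - (UPoint.base M o).ud z ^ 2) ≤ 0) :
    σ * m ≤ σ * n := by
  have hne : ∀ k, Nonempty (M k).carrier := fun k => ⟨o k⟩
  set b := UPoint.base M o with hb
  set A := ∫ z : EuclideanSpace ℝ (Fin n), z ⟨0, hn⟩ ^ 2 * tent ‖z‖ with hA
  set W := ∫ z : EuclideanSpace ℝ (Fin n), tent ‖z‖ with hW
  -- integrals of cutoff functions converge
  have conv : ∀ (x : UPoint M o) (g : ℝ → ℝ → ℝ), Continuous (fun q : ℝ × ℝ => g q.1 q.2) →
      b.ud x ≤ 1 →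
      (∀ k, Integrable (fun z => g ((M k).d (o k) z) ((M k).d (x.1 k) z) *
        (tent ((M k).d (o k) z) * plateau ((M k).d (x.1 k) z))) (M k).μ) ∧
      Tendsto (fun k => ∫ z, g ((M k).d (o k) z) ((M k).d (x.1 k) z) *
        (tent ((M k).d (o k) z) * plateau ((M k).d (x.1 k) z)) ∂(M k).μ) (hyperfilter ℕ)
        (𝓝 (∫ z : EuclideanSpace ℝ (Fin n), g ‖z‖ ‖z - (b.ud x) • e0 hn‖ * tent ‖z‖)) := by
    intro x g hg hx
    have hFc : Continuous fun q : ℝ × ℝ => g q.1 q.2 * (tent q.1 * plateau q.2) :=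
      hg.mul ((continuous_tent.comp continuous_fst).mul (continuous_plateau.comp continuous_snd))
    have hF : ∀ s u, (4 : ℝ) ≤ s ∨ 4 ≤ u → g s u * (tent s * plateau u) = 0 := by
      intro s u hsu
      rcases hsu with h | h
      · rw [tent_eq_zero (by linarith), zero_mul, mul_zero]
      · rw [plateau_eq_zero h, mul_zero, mul_zero]
    refine ⟨fun k => integrable_cutoff ((M k).d_meas _) ((M k).d_meas _)
      (fun _ => (M k).d_nonneg _ _) (fun _ => (M k).d_nonneg _ _) ((hM k).integrable_exp _ _)
      (F := fun s u => g s u * (tent s * plateau u)) hFc (by norm_num) hF, ?_⟩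
    have := UPoint.tendsto_two_point hn hδ hM b x
      (F := fun s u => g s u * (tent s * plateau u)) hFc (by norm_num) hF
    have e : (∫ z : EuclideanSpace ℝ (Fin n), g ‖z‖ ‖z - (b.ud x) • e0 hn‖ * tent ‖z‖)
        = ∫ z : EuclideanSpace ℝ (Fin n), g ‖z‖ ‖z - (b.ud x) • e0 hn‖ *
          (tent ‖z‖ * plateau ‖z - (b.ud x) • e0 hn‖) := by
      refine integral_congr_ae (Eventually.of_forall fun z => ?_)
      simp only
      rw [tent_mul_plateau]
      have := norm_sub_le z (b.ud x • e0 hn)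
      rw [norm_smul_e0 hn (b.ud_nonneg x)] at this
      linarith
    rw [e]
    exact this
  have cy := fun i => conv (y i) (fun s u => ((s ^ 2 + 1 - u ^ 2) / 2) ^ 2) (by fun_prop) (hy i).le
  have hbb : b.ud b ≤ 1 := by rw [b.ud_self]; exact zero_le_one
  have c2 := conv b (fun s _ => s ^ 2) (by fun_prop) hbb
  have c3 := conv b (fun _ _ => 1) (by fun_prop) hbb
  have vy : ∀ i, (∫ z : EuclideanSpace ℝ (Fin n),
      ((‖z‖ ^ 2 + 1 - ‖z - (b.ud (y i)) • e0 hn‖ ^ 2) / 2) ^ 2 * tent ‖z‖) = A := by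
    intro i
    refine integral_congr_ae (Eventually.of_forall fun z => ?_)
    simp only
    congr 2
    rw [hy, one_smul, @norm_sub_sq_real, norm_e0, e0, EuclideanSpace.inner_single_right]
    simp
  have v2 : (∫ z : EuclideanSpace ℝ (Fin n), ‖z‖ ^ 2 * tent ‖z‖) = n * A := second_moment_trace hn
  have v3 : (∫ z : EuclideanSpace ℝ (Fin n), 1 * tent ‖z‖) = W := by simp [hW]
  have hlimit : Tendsto (fun k => σ * ((∑ i, ∫ z, (((M k).d (o k) z ^ 2 + 1
        - (M k).d ((y i).1 k) z ^ 2) / 2) ^ 2 *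
        (tent ((M k).d (o k) z) * plateau ((M k).d ((y i).1 k) z)) ∂(M k).μ)
      - ∫ z, (M k).d (o k) z ^ 2 *
        (tent ((M k).d (o k) z) * plateau ((M k).d (o k) z)) ∂(M k).μ)) (hyperfilter ℕ)
      (𝓝 (σ * ((∑ i : Fin m, A) - n * A))) := by
    refine Tendsto.const_mul _ (Tendsto.sub (tendsto_finsetSum _ fun i _ => ?_) ?_)
    · rw [← vy i]; exact (cy i).2
    · rw [← v2]; exact c2.2
  have key : ∀ η : ℝ, 0 < η → σ * ((∑ i : Fin m, A) - n * A) ≤ η * W := by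
    intro η hη
    have h3 : Tendsto (fun k => η * ∫ z, 1 *
        (tent ((M k).d (o k) z) * plateau ((M k).d (o k) z)) ∂(M k).μ) (hyperfilter ℕ)
      (𝓝 (η * W)) := by
      rw [← v3]; exact c3.2.const_mul η
    refine le_of_tendsto_of_tendsto hlimit h3 ?_
    have ev1 : ∀ᶠ k in (hyperfilter ℕ : Filter ℕ), ∀ z : (M k).carrier, (M k).d (o k) z ≤ 1 →
        σ * (∑ i, (((M k).d (o k) z ^ 2 + 1 - (M k).d ((y i).1 k) z ^ 2) / 2) ^ 2
          - (M k).d (o k) z ^ 2) ≤ η := by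
      refine eventually_forall_of (X := fun k => (M k).carrier) _ fun z => ?_
      by_cases hz : ∀ᶠ k in (hyperfilter ℕ : Filter ℕ), (M k).d (o k) (z k) ≤ 1
      · let z' : UPoint M o := ⟨z, 1, hz⟩
        have hl : Tendsto (fun k => σ * (∑ i, (((M k).d (o k) (z k) ^ 2 + 1
            - (M k).d ((y i).1 k) (z k) ^ 2) / 2) ^ 2 - (M k).d (o k) (z k) ^ 2)) (hyperfilter ℕ)
            (𝓝 (σ * (∑ i, ((b.ud z' ^ 2 + 1 - (y i).ud z' ^ 2) / 2) ^ 2 - b.ud z' ^ 2))) := by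
          have t1 : Tendsto (fun k => (M k).d (o k) (z k)) (hyperfilter ℕ) (𝓝 (b.ud z')) :=
            b.tendsto_ud z'
          have t2 : ∀ i, Tendsto (fun k => (M k).d ((y i).1 k) (z k)) (hyperfilter ℕ)
            (𝓝 ((y i).ud z')) := fun i => (y i).tendsto_ud z'
          exact ((tendsto_finsetSum _ fun i _ => ((((t1.pow 2).add_const 1).sub
            ((t2 i).pow 2)).div_const 2).pow 2).sub (t1.pow 2)).const_mul σ
        have := hl.eventually_le_const ((h z').trans_lt hη)
        exact this.frequently.mono fun k hk _ => hk
      · rw [not_eventually] at hz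
        exact hz.mono fun k hk h1 => (hk h1).elim
    have ev2 : ∀ᶠ k in (hyperfilter ℕ : Filter ℕ), ∀ i, (M k).d (o k) ((y i).1 k) ≤ 2 := by
      refine eventually_all.2 fun i => ?_
      exact (b.tendsto_ud (y i)).eventually_le_const (by rw [hy]; norm_num)
    filter_upwards [ev1, ev2] with k h1 h2
    have c2k : Integrable (fun z => (M k).d (o k) z ^ 2 *
        (tent ((M k).d (o k) z) * plateau ((M k).d (o k) z))) (M k).μ := c2.1 k
    have c3k : Integrable (fun z => 1 *
        (tent ((M k).d (o k) z) * plateau ((M k).d (o k) z))) (M k).μ := c3.1 k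
    rw [← integral_finsetSum _ fun i _ => (cy i).1 k,
      ← integral_sub (integrable_finsetSum _ fun i _ => (cy i).1 k) c2k, ← integral_const_mul,
      ← integral_const_mul]
    refine integral_mono (((integrable_finsetSum _ fun i _ => (cy i).1 k).sub c2k).const_mul σ)
      (c3k.const_mul η) fun z => ?_
    simp only
    have p1 : ∀ i, tent ((M k).d (o k) z) * plateau ((M k).d ((y i).1 k) z)
        = tent ((M k).d (o k) z) := by
      intro i
      refine tent_mul_plateau ?_
      have := (M k).d_triangle ((y i).1 k) (o k) z
      rw [(M k).d_comm ((y i).1 k) (o k)] at this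
      linarith [h2 i]
    have p2 : tent ((M k).d (o k) z) * plateau ((M k).d (o k) z)
        = tent ((M k).d (o k) z) := tent_mul_plateau (by linarith)
    simp_rw [p1, p2]
    rw [← Finset.sum_mul, ← sub_mul, ← mul_assoc, one_mul]
    rcases le_total ((M k).d (o k) z) 1 with hz | hz
    · exact mul_le_mul_of_nonneg_right (h1 z hz) (tent_nonneg _)
    · rw [tent_eq_zero hz, mul_zero, mul_zero]
  have hA0 : 0 < A := second_moment_pos hn
  have hfin : σ * ((∑ i : Fin m, A) - n * A) ≤ 0 := by
    have hl : Tendsto (fun η : ℝ => η * W) (𝓝[>] 0) (𝓝 0) := by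
      have : Tendsto (fun η : ℝ => η * W) (𝓝 0) (𝓝 (0 * W)) := tendsto_id.mul_const W
      rw [zero_mul] at this
      exact this.mono_left nhdsWithin_le_nhds
    refine ge_of_tendsto hl ?_
    filter_upwards [self_mem_nhdsWithin] with η hη using key η hη
  simp only [Finset.sum_const, Finset.card_univ, Fintype.card_fin, nsmul_eq_mul] at hfin
  have : σ * ((m : ℝ) - n) ≤ 0 := by
    by_contra hcon
    have := mul_pos (not_le.1 hcon) hA0
    nlinarith
  linarith

end Dimension

/-! ### The chart of the ultralimit and finite nets -/

section Coordinates

variable {n : ℕ} {M : ℕ → Model} {δ : ℕ → ℝ} {o : ∀ k, (M k).carrier}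

/-- The ultralimit is isometric (up to identification of points at distance zero) to `ℝⁿ`. -/
theorem UPoint.exists_chart (hn : 1 ≤ n) (hδ : Tendsto δ atTop (𝓝 0))
    (hM : ∀ k, (M k).Near n (δ k)) (o : ∀ k, (M k).carrier) :
    ∃ Φ : UPoint M o → EuclideanSpace ℝ (Fin n), Function.Surjective Φ ∧
      Φ (UPoint.base M o) = 0 ∧ ∀ x y, x.ud y = ‖Φ x - Φ y‖ := by
  obtain ⟨H, _, _, φ, V, hφ0, hφ, hV⟩ := UPoint.exists_submodule hn hδ hM o
  have hmem : ∀ x, φ x ∈ V := fun x => by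
    have : φ x ∈ (V : Set H) := hV ▸ Set.mem_range_self x
    exact this
  have hsurj : ∀ v : V, ∃ x, φ x = v := fun v => by
    have : (v : H) ∈ (V : Set H) := v.2
    rwa [hV] at this
  have trace : ∀ (σ : ℝ) (m : ℕ) (v : Fin m → V), Orthonormal ℝ v →
      (∀ w : V, σ * (∑ i, inner ℝ (v i) w ^ 2 - ‖w‖ ^ 2) ≤ 0) → σ * m ≤ σ * n := by
    intro σ m v hv h
    choose y hy using fun i => hsurj (v i)
    have hv1 : ∀ i, ‖(v i : H)‖ = 1 := fun i => hv.1 i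
    refine UPoint.trace_le hn hδ hM σ y (fun i => ?_) fun z => ?_
    · rw [hφ, hφ0, hy, zero_sub, norm_neg, hv1]
    · have e1 : ∀ i, ((UPoint.base M o).ud z ^ 2 + 1 - (y i).ud z ^ 2) / 2
          = inner ℝ (v i) (⟨φ z, hmem z⟩ : V) := by
        intro i
        rw [hφ, hφ, hφ0, hy, zero_sub, norm_neg, @norm_sub_sq_real, hv1, Submodule.coe_inner]
        ring
      have e2 : (UPoint.base M o).ud z = ‖(⟨φ z, hmem z⟩ : V)‖ := by
        rw [hφ, hφ0, zero_sub, norm_neg, Submodule.coe_norm]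
      simp_rw [e1, e2]
      exact h _
  have bessel : ∀ (m : ℕ) (v : Fin m → V), Orthonormal ℝ v → m ≤ n := by
    intro m v hv
    have := trace 1 m v hv fun w => by
      have := hv.sum_inner_products_le w (s := Finset.univ)
      simp only [Real.norm_eq_abs, sq_abs] at this
      linarith
    rw [one_mul, one_mul] at this
    exact_mod_cast this
  have hrank : Module.rank ℝ V ≤ n := by
    refine rank_le fun s hs => ?_
    let W : Submodule ℝ V := Submodule.span ℝ (s : Set V)
    have hfd : FiniteDimensional ℝ W := FiniteDimensional.span_finset ℝ s
    have hcard : Module.finrank ℝ W = s.card := finrank_span_finset_eq_card hs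
    rw [← hcard]
    exact bessel _ _ ((stdOrthonormalBasis ℝ W).orthonormal.comp_linearIsometry W.subtypeₗᵢ)
  have hfd : FiniteDimensional ℝ V :=
    Module.rank_lt_aleph0_iff.1 (hrank.trans_lt (Cardinal.natCast_lt_aleph0))
  have hle : Module.finrank ℝ V ≤ n := bessel _ _ (stdOrthonormalBasis ℝ V).orthonormal
  have hge : n ≤ Module.finrank ℝ V := by
    have := trace (-1) _ _ (stdOrthonormalBasis ℝ V).orthonormal fun w => by
      have := (stdOrthonormalBasis ℝ V).sum_sq_norm_inner_right w
      simp only [Real.norm_eq_abs, sq_abs] at this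
      linarith
    have h2 : (n : ℝ) ≤ Module.finrank ℝ V := by linarith
    exact_mod_cast h2
  let e := ((stdOrthonormalBasis ℝ V).reindex (finCongr (le_antisymm hle hge))).repr
  refine ⟨fun x => e ⟨φ x, hmem x⟩, fun v => ?_, ?_, fun x y => ?_⟩
  · obtain ⟨x, hx⟩ := hsurj (e.symm v)
    refine ⟨x, ?_⟩
    have : (⟨φ x, hmem x⟩ : V) = e.symm v := Subtype.ext hx
    simp only [this, e.apply_symm_apply]
  · have : (⟨φ (UPoint.base M o), hmem _⟩ : V) = 0 := Subtype.ext hφ0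
    simp only [this, map_zero]
  · rw [← map_sub, e.norm_map, hφ]
    rfl

end Coordinates

section Net

variable {n : ℕ}

/-- `f` and `y` are matching finite nets of the unit ball about `o` and of the Euclidean unit
ball. -/
structure Model.NetApprox (M : Model) (o : M.carrier) (n : ℕ) (ε : ℝ) (N : ℕ)
    (f : Fin N → M.carrier) (y : Fin N → EuclideanSpace ℝ (Fin n)) : Prop where
  le_one : ∀ i, M.d o (f i) ≤ 1
  norm_le : ∀ i, ‖y i‖ ≤ 1
  close : ∀ i j, |M.d (f i) (f j) - ‖y i - y j‖| ≤ ε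
  net : ∀ z, M.d o z ≤ 1 → ∃ i, M.d z (f i) ≤ 3 * ε
  net' : ∀ v : EuclideanSpace ℝ (Fin n), ‖v‖ ≤ 1 → ∃ i, ‖v - y i‖ ≤ 2 * ε

/-- Compactness argument: spaces that are nearly Euclidean as far as two-point Gaussian integrals go
have unit balls close to the Euclidean one. -/
theorem exists_netApprox (hn : 1 ≤ n) {ε : ℝ} (hε : 0 < ε) (hε1 : ε ≤ 1) :
    ∃ δ : ℝ, 0 < δ ∧ δ ≤ 1 / 2 ∧ ∀ M : Model, M.Near n δ → ∀ o : M.carrier,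
      ∃ N f y, M.NetApprox o n ε N f y := by
  by_contra hcon
  push Not at hcon
  have h2 : ∀ k : ℕ, ∃ M : Model, M.Near n (1 / ((k : ℝ) + 2)) ∧ ∃ o : M.carrier,
      ∀ N f y, ¬ M.NetApprox o n ε N f y := fun k => hcon _ (by positivity)
    (one_div_le_one_div_of_le (by norm_num) (by have : (0 : ℝ) ≤ k := by positivity
                                                linarith))
  choose M hM o hno using h2
  have hδ : Tendsto (fun k : ℕ => 1 / ((k : ℝ) + 2)) atTop (𝓝 0) := by
    have := (tendsto_add_atTop_iff_nat 1).2 (tendsto_one_div_add_atTop_nhds_zero_nat (𝕜 := ℝ))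
    refine this.congr fun k => ?_
    push_cast
    ring
  obtain ⟨Φ, hΦs, hΦ0, hΦ⟩ := UPoint.exists_chart hn hδ hM o
  have hne : ∀ k, Nonempty (M k).carrier := fun k => ⟨o k⟩
  -- a finite net of the ball of radius `1 - ε`
  obtain ⟨t, hts, htf, htc⟩ := Metric.finite_approx_of_totallyBounded
    (isCompact_closedBall (0 : EuclideanSpace ℝ (Fin n)) (1 - ε)).totallyBounded ε hε
  obtain ⟨N, ⟨e⟩⟩ := (finite_iff_exists_equiv_fin (α := t)).1 htf
  let y : Fin N → EuclideanSpace ℝ (Fin n) := fun i => (e.symm i : EuclideanSpace ℝ (Fin n))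
  have hy : ∀ i, ‖y i‖ ≤ 1 - ε := fun i => by simpa using hts (e.symm i).2
  -- the net, lying deep inside, is still fine for the unit ball
  have hnet : ∀ v : EuclideanSpace ℝ (Fin n), ‖v‖ ≤ 1 → ∃ i, ‖v - y i‖ < 2 * ε := by
    intro v hv
    have h1 : ‖(1 - ε) • v‖ ≤ 1 - ε := by
      rw [norm_smul, Real.norm_of_nonneg (by linarith)]
      exact mul_le_of_le_one_right (by linarith) hv
    have h2 := htc (show (1 - ε) • v ∈ closedBall 0 (1 - ε) by simpa using h1)
    simp only [mem_iUnion, mem_ball, exists_prop] at h2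
    obtain ⟨w, hw, hvw⟩ := h2
    refine ⟨e ⟨w, hw⟩, ?_⟩
    have hyw : y (e ⟨w, hw⟩) = w := by simp [y]
    rw [hyw]
    have h3 : ‖v - (1 - ε) • v‖ ≤ ε := by
      rw [show v - (1 - ε) • v = ε • v by module, norm_smul, Real.norm_of_nonneg hε.le]
      exact mul_le_of_le_one_right hε.le hv
    rw [dist_eq_norm] at hvw
    have := norm_sub_le_norm_sub_add_norm_sub v ((1 - ε) • v) w
    linarith
  choose x hx using fun i => hΦs (y i)
  have ev1 : ∀ᶠ k in (hyperfilter ℕ : Filter ℕ), ∀ i, (M k).d (o k) ((x i).1 k) ≤ 1 := by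
    refine eventually_all.2 fun i => ?_
    refine ((UPoint.base M o).tendsto_ud (x i)).eventually_le_const ?_
    rw [hΦ, hΦ0, hx, zero_sub, norm_neg]
    linarith [hy i]
  have ev2 : ∀ᶠ k in (hyperfilter ℕ : Filter ℕ), ∀ i j,
      |(M k).d ((x i).1 k) ((x j).1 k) - ‖y i - y j‖| ≤ ε := by
    refine eventually_all.2 fun i => eventually_all.2 fun j => ?_
    have h1 := (x i).tendsto_ud (x j)
    rw [hΦ, hx, hx] at h1
    filter_upwards [Metric.tendsto_nhds.1 h1 ε hε] with k hk
    exact (Real.dist_eq _ _ ▸ hk).le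
  have ev3 : ∀ᶠ k in (hyperfilter ℕ : Filter ℕ), ∀ z : (M k).carrier, (M k).d (o k) z ≤ 1 →
      ∃ i, (M k).d z ((x i).1 k) ≤ 3 * ε := by
    refine eventually_forall_of (X := fun k => (M k).carrier) _ fun z => ?_
    by_cases hz : ∀ᶠ k in (hyperfilter ℕ : Filter ℕ), (M k).d (o k) (z k) ≤ 1
    · let z' : UPoint M o := ⟨z, 1, hz⟩
      have h1 : ‖Φ z'‖ ≤ 1 := by
        have := le_of_tendsto ((UPoint.base M o).tendsto_ud z') hz
        rwa [hΦ, hΦ0, zero_sub, norm_neg] at this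
      obtain ⟨i, hi⟩ := hnet _ h1
      have h2 : z'.ud (x i) < 3 * ε := by rw [hΦ, hx]; linarith
      exact ((z'.tendsto_ud (x i)).eventually_le_const h2).frequently.mono fun k hk _ => ⟨i, hk⟩
    · rw [not_eventually] at hz
      exact hz.mono fun k hk h1 => (hk h1).elim
  obtain ⟨k, h1, h2, h3⟩ := (ev1.and (ev2.and ev3)).exists
  exact hno k N (fun i => (x i).1 k) y ⟨h1, fun i => (hy i).trans (by linarith), h2, h3,
    fun v hv => (hnet v hv).imp fun i hi => hi.le⟩

end Net

/-! ### From heat kernel bounds to Gaussian integrals -/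

section Kernel

/-- The Gaussian kernel with the two occurrences of the parameter `σ` in the heat kernel bounds. -/
noncomputable def gaussKernel (n : ℕ) (σ t D : ℝ) : ℝ :=
  (1 + σ) * (4 * π * t) ^ (-(n : ℝ) / 2) * Real.exp (-D ^ 2 / (4 * (1 + σ) * t))

theorem gaussKernel_pos (n : ℕ) {σ t : ℝ} (hσ : -1 < σ) (ht : 0 < t) (D : ℝ) :
    0 < gaussKernel n σ t D := by
  have : 0 < 1 + σ := by linarith
  unfold gaussKernel
  positivity

/-- The factor which turns the product of two Gaussian kernels at times `r² / (4 a (1 + σ))` and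
`r² / (4 b (1 + σ))` into a product of Gaussians. -/
noncomputable def kernelFactor (n : ℕ) (σ r a b : ℝ) : ℝ :=
  ((4 * π * (r ^ 2 / (4 * a * (1 + σ)))) ^ ((n : ℝ) / 2) *
    (4 * π * (r ^ 2 / (4 * b * (1 + σ)))) ^ ((n : ℝ) / 2)) / (1 + σ) ^ 2

theorem kernelFactor_pos (n : ℕ) {σ r a b : ℝ} (hσ : -1 < σ) (hr : 0 < r) (ha : 0 < a)
    (hb : 0 < b) : 0 < kernelFactor n σ r a b := by
  have : 0 < 1 + σ := by linarith
  unfold kernelFactor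
  positivity

theorem kernelFactor_mul (n : ℕ) {σ r a b : ℝ} (hσ : -1 < σ) (hr : 0 < r) (ha : 0 < a)
    (hb : 0 < b) (D E : ℝ) :
    kernelFactor n σ r a b * (gaussKernel n σ (r ^ 2 / (4 * a * (1 + σ))) D *
      gaussKernel n σ (r ^ 2 / (4 * b * (1 + σ))) E)
      = Real.exp (-a * (D / r) ^ 2 - b * (E / r) ^ 2) := by
  have h1 : 0 < 1 + σ := by linarith
  unfold kernelFactor gaussKernel
  have key : ∀ t : ℝ, 0 < t → (4 * π * t) ^ ((n : ℝ) / 2) * (4 * π * t) ^ (-(n : ℝ) / 2) = 1 := by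
    intro t ht
    rw [← Real.rpow_add (by positivity), show (n : ℝ) / 2 + -(n : ℝ) / 2 = 0 by ring,
      Real.rpow_zero]
  have k1 := key (r ^ 2 / (4 * a * (1 + σ))) (by positivity)
  have k2 := key (r ^ 2 / (4 * b * (1 + σ))) (by positivity)
  have e1 : -D ^ 2 / (4 * (1 + σ) * (r ^ 2 / (4 * a * (1 + σ)))) = -a * (D / r) ^ 2 := by
    field_simp
  have e2 : -E ^ 2 / (4 * (1 + σ) * (r ^ 2 / (4 * b * (1 + σ)))) = -b * (E / r) ^ 2 := by
    field_simp
  rw [e1, e2, show -a * (D / r) ^ 2 - b * (E / r) ^ 2 = -a * (D / r) ^ 2 + -b * (E / r) ^ 2 by ring,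
    Real.exp_add]
  set P1 := (4 * π * (r ^ 2 / (4 * a * (1 + σ)))) ^ ((n : ℝ) / 2)
  set P2 := (4 * π * (r ^ 2 / (4 * b * (1 + σ)))) ^ ((n : ℝ) / 2)
  set Q1 := (4 * π * (r ^ 2 / (4 * a * (1 + σ)))) ^ (-(n : ℝ) / 2)
  set Q2 := (4 * π * (r ^ 2 / (4 * b * (1 + σ)))) ^ (-(n : ℝ) / 2)
  set X := Real.exp (-a * (D / r) ^ 2)
  set Y := Real.exp (-b * (E / r) ^ 2)
  have : P1 * P2 / (1 + σ) ^ 2 * ((1 + σ) * Q1 * X * ((1 + σ) * Q2 * Y))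
      = (P1 * Q1) * (P2 * Q2) * (X * Y) := by field_simp
  rw [this, k1, k2]
  ring

theorem kernelFactor_mul_sum (n : ℕ) {σ r a b : ℝ} (hσ : -1 < σ) (hσ1 : σ < 1) (hr : 0 < r)
    (ha : 0 < a) (hb : 0 < b) (D : ℝ) :
    (r ^ 2) ^ (-(n : ℝ) / 2) * (kernelFactor n σ r a b *
      gaussKernel n (-σ) (r ^ 2 / (4 * a * (1 + σ)) + r ^ 2 / (4 * b * (1 + σ))) D)
      = gaussBound n σ a b (D / r) := by
  have h1 : 0 < 1 + σ := by linarith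
  have h2 : 0 < 1 - σ := by linarith
  unfold kernelFactor gaussKernel gaussBound
  have e1 : -D ^ 2 / (4 * (1 + -σ) * (r ^ 2 / (4 * a * (1 + σ)) + r ^ 2 / (4 * b * (1 + σ))))
      = -((1 + σ) / (1 - σ) * (a * b / (a + b))) * (D / r) ^ 2 := by
    rw [← sub_eq_add_neg]
    field_simp
    ring
  have e2 : (r ^ 2) ^ (-(n : ℝ) / 2) * ((4 * π * (r ^ 2 / (4 * a * (1 + σ)))) ^ ((n : ℝ) / 2) *
      (4 * π * (r ^ 2 / (4 * b * (1 + σ)))) ^ ((n : ℝ) / 2)) *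
      (4 * π * (r ^ 2 / (4 * a * (1 + σ)) + r ^ 2 / (4 * b * (1 + σ)))) ^ (-(n : ℝ) / 2)
      = (π / ((1 + σ) * (a + b))) ^ ((n : ℝ) / 2) := by
    rw [neg_div, Real.rpow_neg (by positivity), Real.rpow_neg (by positivity),
      ← Real.inv_rpow (by positivity), ← Real.inv_rpow (by positivity),
      ← Real.mul_rpow (by positivity) (by positivity),
      ← Real.mul_rpow (by positivity) (by positivity),
      ← Real.mul_rpow (by positivity) (by positivity)]
    congr 1
    field_simp
    ring
  rw [e1, ← e2, ← sub_eq_add_neg]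
  ring

variable {X : Type} [MetricSpace X] [MeasurableSpace X] [BorelSpace X]

/-- A metric measure space rescaled by the factor `r⁻¹`. -/
noncomputable def rescaled (n : ℕ) (μ : Measure X) {r : ℝ} (hr : 0 < r) : Model where
  carrier := X
  mS := inferInstance
  d x y := dist x y / r
  d_self x := by simp
  d_comm x y := by rw [dist_comm]
  d_triangle x y z := by
    rw [← add_div]
    exact div_le_div_of_nonneg_right (dist_triangle x y z) hr.le
  d_meas x := ((continuous_const.dist continuous_id).div_const r).measurable
  μ := ENNReal.ofReal ((r ^ 2) ^ (-(n : ℝ) / 2)) • μ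

/-- The heat kernel bounds up to time `T` make the space rescaled by `r⁻¹` nearly Euclidean, as long
as `r² ≤ T`. Integrability of the kernel products is automatic: the Chapman–Kolmogorov integral is
nonzero. -/
theorem rescaled_near (n : ℕ) (μ : Measure X) {δ T : ℝ} (hδ : 0 < δ) (hδ1 : δ ≤ 1 / 2)
    {p : X → X → ℝ → ℝ} (hsymm : ∀ (x y : X) (t : ℝ), p x y t = p y x t)
    (hCK : ∀ (x y : X) (s t : ℝ), 0 < s → 0 < t → (∫ z, p x z t * p z y s ∂μ) = p x y (t + s))
    (hp : ∀ (x y : X) (t : ℝ), 0 < t → t ≤ T →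
      gaussKernel n (-δ) t (dist x y) ≤ p x y t ∧ p x y t ≤ gaussKernel n δ t (dist x y))
    {r : ℝ} (hr : 0 < r) (hrT : r ^ 2 ≤ T) : (rescaled n μ hr).Near n δ := by
  intro a b ha hb (x : X) (y : X)
  have ha0 : 0 < a := by linarith
  have hb0 : 0 < b := by linarith
  -- the times `r² / (4 a (1 + σ))` for `σ = ± δ` are at most `r² / 2`
  have htime : ∀ a σ : ℝ, 1 ≤ a → -(1 / 2) ≤ σ → 0 < r ^ 2 / (4 * a * (1 + σ)) ∧
      r ^ 2 / (4 * a * (1 + σ)) ≤ T / 2 := by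
    intro a σ ha hσ
    have h1 : 2 ≤ 4 * a * (1 + σ) := by nlinarith
    refine ⟨by positivity, ?_⟩
    calc r ^ 2 / (4 * a * (1 + σ)) ≤ r ^ 2 / 2 :=
          div_le_div_of_nonneg_left (by positivity) (by norm_num) h1
      _ ≤ T / 2 := by linarith
  have hT0 : 0 < T := by
    have : 0 < r ^ 2 := by positivity
    linarith
  have hpos : ∀ x y t, 0 < t → t ≤ T → 0 < p x y t := fun x y t h1 h2 =>
    (gaussKernel_pos n (by linarith) h1 _).trans_le (hp x y t h1 h2).1
  have hInteg : ∀ s t, 0 < s → 0 < t → t + s ≤ T →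
      Integrable (fun z => p x z t * p z y s) μ := by
    intro s t hs ht hst
    by_contra hcon
    have h1 := hCK x y s t hs ht
    rw [integral_undef hcon] at h1
    exact (hpos x y (t + s) (by linarith) hst).ne h1
  set c : ℝ := (r ^ 2) ^ (-(n : ℝ) / 2) with hc
  have hc0 : 0 < c := by positivity
  -- Gaussians against products of kernels, from above with `σ = -δ` and from below with `σ = δ`
  have hup : ∀ z, Real.exp (-a * (dist x z / r) ^ 2 - b * (dist y z / r) ^ 2)
      ≤ kernelFactor n (-δ) r a b * (p x z (r ^ 2 / (4 * a * (1 + -δ))) *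
        p z y (r ^ 2 / (4 * b * (1 + -δ)))) := by
    intro z
    obtain ⟨t1, t2⟩ := htime a (-δ) ha (by linarith)
    obtain ⟨s1, s2⟩ := htime b (-δ) hb (by linarith)
    rw [← kernelFactor_mul n (σ := -δ) (by linarith) hr ha0 hb0]
    refine mul_le_mul_of_nonneg_left ?_ (kernelFactor_pos n (by linarith) hr ha0 hb0).le
    rw [hsymm z y]
    exact mul_le_mul (hp x z _ t1 (by linarith)).1 (hp y z _ s1 (by linarith)).1
      (gaussKernel_pos n (by linarith) s1 _).le (hpos _ _ _ t1 (by linarith)).le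
  have hlow : ∀ z, kernelFactor n δ r a b * (p x z (r ^ 2 / (4 * a * (1 + δ))) *
        p z y (r ^ 2 / (4 * b * (1 + δ))))
      ≤ Real.exp (-a * (dist x z / r) ^ 2 - b * (dist y z / r) ^ 2) := by
    intro z
    obtain ⟨t1, t2⟩ := htime a δ ha (by linarith)
    obtain ⟨s1, s2⟩ := htime b δ hb (by linarith)
    rw [← kernelFactor_mul n (σ := δ) (by linarith) hr ha0 hb0]
    refine mul_le_mul_of_nonneg_left ?_ (kernelFactor_pos n (by linarith) hr ha0 hb0).le
    rw [hsymm z y]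
    exact mul_le_mul (hp x z _ t1 (by linarith)).2 (hp y z _ s1 (by linarith)).2
      (hpos _ _ _ s1 (by linarith)).le (gaussKernel_pos n (by linarith) t1 _).le
  obtain ⟨t1, t2⟩ := htime a δ ha (by linarith)
  obtain ⟨s1, s2⟩ := htime b δ hb (by linarith)
  obtain ⟨t1', t2'⟩ := htime a (-δ) ha (by linarith)
  obtain ⟨s1', s2'⟩ := htime b (-δ) hb (by linarith)
  have hInteg1 := hInteg _ _ s1 t1 (by linarith)
  have hInteg2 := hInteg _ _ s1' t1' (by linarith)
  have hIntegE : Integrable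
      (fun z => Real.exp (-a * (dist x z / r) ^ 2 - b * (dist y z / r) ^ 2)) μ := by
    refine (hInteg2.const_mul (kernelFactor n (-δ) r a b)).mono' ?_
      (Eventually.of_forall fun z => ?_)
    · exact Measurable.aestronglyMeasurable (Continuous.measurable (by fun_prop))
    · rw [Real.norm_of_nonneg (Real.exp_pos _).le]
      exact hup z
  have hscale : (∫ z, Real.exp (-a * (dist x z / r) ^ 2 - b * (dist y z / r) ^ 2)
      ∂(ENNReal.ofReal c • μ))
      = c * ∫ z, Real.exp (-a * (dist x z / r) ^ 2 - b * (dist y z / r) ^ 2) ∂μ := by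
    rw [integral_smul_measure, ENNReal.toReal_ofReal hc0.le, smul_eq_mul]
  refine ⟨hIntegE.smul_measure ENNReal.ofReal_ne_top, ?_, ?_⟩
  · change gaussBound n δ a b (dist x y / r) ≤ ∫ z, Real.exp (-a * (dist x z / r) ^ 2
      - b * (dist y z / r) ^ 2) ∂(ENNReal.ofReal c • μ)
    rw [hscale, ← kernelFactor_mul_sum n (by linarith) (by linarith) hr ha0 hb0]
    refine mul_le_mul_of_nonneg_left ?_ hc0.le
    refine le_trans ?_ (integral_mono (hInteg1.const_mul (kernelFactor n δ r a b)) hIntegE hlow)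
    rw [integral_const_mul, hCK x y _ _ s1 t1]
    exact mul_le_mul_of_nonneg_left (hp x y _ (by linarith) (by linarith)).1
      (kernelFactor_pos n (by linarith) hr ha0 hb0).le
  · change (∫ z, Real.exp (-a * (dist x z / r) ^ 2
      - b * (dist y z / r) ^ 2) ∂(ENNReal.ofReal c • μ)) ≤ gaussBound n (-δ) a b (dist x y / r)
    rw [hscale, ← kernelFactor_mul_sum n (by linarith) (by linarith) hr ha0 hb0, neg_neg]
    refine mul_le_mul_of_nonneg_left ?_ hc0.le
    refine (integral_mono hIntegE (hInteg2.const_mul (kernelFactor n (-δ) r a b)) hup).trans ?_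
    rw [integral_const_mul, hCK x y _ _ s1' t1']
    exact mul_le_mul_of_nonneg_left (hp x y _ (by linarith) (by linarith)).2
      (kernelFactor_pos n (by linarith) hr ha0 hb0).le

end Kernel

/-! ### Compactness and the Gromov–Hausdorff estimate -/

section Conclusion

variable {X : Type} [MetricSpace X]

/-- If every ball of radius less than `R` is covered by finitely many balls of half its radius, then
balls of radius less than `R` are totally bounded. -/
theorem totallyBounded_of_halving {R : ℝ}
    (H : ∀ (x : X) (ρ : ℝ), 0 < ρ → ρ < R →
      ∃ t : Set X, t.Finite ∧ closedBall x ρ ⊆ ⋃ y ∈ t, closedBall y (ρ / 2))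
    (x : X) {ρ : ℝ} (hρ : 0 < ρ) (hρR : ρ < R) : TotallyBounded (closedBall x ρ) := by
  have hk : ∀ (k : ℕ) (x : X) (ρ : ℝ), 0 < ρ → ρ < R →
      ∃ t : Set X, t.Finite ∧ closedBall x ρ ⊆ ⋃ y ∈ t, closedBall y (ρ / 2 ^ k) := by
    intro k
    induction k with
    | zero => exact fun x ρ _ _ => ⟨{x}, finite_singleton x, by simp⟩
    | succ k ih =>
      intro x ρ h1 h2
      obtain ⟨t, ht, hc⟩ := H x ρ h1 h2
      choose u hu huc using fun y => ih y (ρ / 2) (by linarith) (by linarith)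
      refine ⟨⋃ y ∈ t, u y, ht.biUnion fun y _ => hu y, fun z hz => ?_⟩
      obtain ⟨y, hy, hzy⟩ := mem_iUnion₂.1 (hc hz)
      obtain ⟨w, hw, hzw⟩ := mem_iUnion₂.1 (huc y hzy)
      refine mem_iUnion₂.2 ⟨w, mem_iUnion₂.2 ⟨y, hy, hw⟩, ?_⟩
      rwa [pow_succ', ← div_div]
  refine Metric.totallyBounded_iff.2 fun η hη => ?_
  have hlim : Tendsto (fun k : ℕ => ρ / 2 ^ k) atTop (𝓝 0) := by
    have := (tendsto_pow_atTop_nhds_zero_of_lt_one (r := (1 / 2 : ℝ)) (by norm_num)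
      (by norm_num)).const_mul ρ
    rw [mul_zero] at this
    exact this.congr fun k => by rw [div_pow, one_pow, mul_one_div]
  obtain ⟨k, hkη⟩ := (hlim.eventually_lt_const hη).exists
  obtain ⟨t, ht, hc⟩ := hk k x ρ hρ hρR
  exact ⟨t, ht, hc.trans (iUnion₂_mono fun y _ => closedBall_subset_ball hkη)⟩

/-- Matching nets of a rescaled ball and of the Euclidean unit ball bound the Gromov–Hausdorff
distance. -/
theorem ghDist_le_of_netApprox [MeasurableSpace X] [BorelSpace X] {n : ℕ} {μ : Measure X} {r : ℝ}
    (hr : 0 < r) {x : X} {η : ℝ} {N : ℕ} {f : Fin N → X}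
    {y : Fin N → EuclideanSpace ℝ (Fin n)} (h : (rescaled n μ hr).NetApprox x n η N f y)
    [Nonempty (closedBall x r)] [CompactSpace (closedBall x r)]
    [Nonempty (closedBall (0 : EuclideanSpace ℝ (Fin n)) r)]
    [CompactSpace (closedBall (0 : EuclideanSpace ℝ (Fin n)) r)] :
    GromovHausdorff.ghDist (closedBall x r) (closedBall (0 : EuclideanSpace ℝ (Fin n)) r)
      ≤ 3 * η * r + η * r / 2 + 3 * η * r := by
  have hle : ∀ i, dist x (f i) / r ≤ 1 := h.le_one
  have hclose : ∀ i j, |dist (f i) (f j) / r - ‖y i - y j‖| ≤ η := h.close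
  have hnet : ∀ z, dist x z / r ≤ 1 → ∃ i, dist z (f i) / r ≤ 3 * η := h.net
  have hfmem : ∀ i, f i ∈ closedBall x r := fun i => by
    rw [mem_closedBall, dist_comm]
    exact (div_le_one hr).1 (hle i)
  let s : Set (closedBall x r) := {z | ∃ i, f i = z}
  choose idx hidx using fun z : s => z.2
  have hymem : ∀ i, r • y i ∈ closedBall (0 : EuclideanSpace ℝ (Fin n)) r := fun i => by
    rw [mem_closedBall_zero_iff, norm_smul, Real.norm_of_nonneg hr.le]
    exact mul_le_of_le_one_right hr.le (h.norm_le i)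
  have hdy : ∀ i j, dist (r • y i) (r • y j) = r * ‖y i - y j‖ := fun i j => by
    rw [dist_eq_norm, ← smul_sub, norm_smul, Real.norm_of_nonneg hr.le]
  refine GromovHausdorff.ghDist_le_of_approx_subsets (s := s)
    (fun z => ⟨r • y (idx z), hymem _⟩) (fun z => ?_) (fun v => ?_) (fun z w => ?_)
  · have hz : dist x z / r ≤ 1 := by
      rw [div_le_one hr, dist_comm]
      exact z.2
    obtain ⟨i, hi⟩ := hnet z hz
    exact ⟨⟨f i, hfmem i⟩, ⟨i, rfl⟩, (div_le_iff₀ hr).1 hi⟩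
  · have hv : ‖r⁻¹ • (v : EuclideanSpace ℝ (Fin n))‖ ≤ 1 := by
      rw [norm_smul, norm_inv, Real.norm_of_nonneg hr.le, inv_mul_le_iff₀ hr, mul_one]
      exact mem_closedBall_zero_iff.1 v.2
    obtain ⟨i, hi⟩ := h.net' _ hv
    let z : s := ⟨⟨f i, hfmem i⟩, ⟨i, rfl⟩⟩
    refine ⟨z, ?_⟩
    -- the index chosen for `f i` may differ from `i`
    have h1 : f (idx z) = f i := hidx z
    have h2 := hclose i (idx z)
    rw [h1, dist_self, zero_div, zero_sub, abs_neg, abs_of_nonneg (norm_nonneg _)] at h2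
    have h3 : dist (v : EuclideanSpace ℝ (Fin n)) (r • y i) ≤ 2 * η * r := by
      have e : (v : EuclideanSpace ℝ (Fin n)) - r • y i
          = r • (r⁻¹ • (v : EuclideanSpace ℝ (Fin n)) - y i) := by
        rw [smul_sub, smul_inv_smul₀ hr.ne']
      rw [dist_eq_norm, e, norm_smul, Real.norm_of_nonneg hr.le, mul_comm]
      exact mul_le_mul_of_nonneg_right hi hr.le
    have h4 : dist (r • y i) (r • y (idx z)) ≤ η * r := by
      rw [hdy, mul_comm]
      exact mul_le_mul_of_nonneg_right h2 hr.le
    change dist (v : EuclideanSpace ℝ (Fin n)) (r • y (idx z)) ≤ 3 * η * r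
    linarith [dist_triangle (v : EuclideanSpace ℝ (Fin n)) (r • y i) (r • y (idx z))]
  · change |dist ((z : closedBall x r) : X) ((w : closedBall x r) : X)
      - dist (r • y (idx z)) (r • y (idx w))| ≤ η * r
    rw [← hidx z, ← hidx w, hdy]
    have e : dist (f (idx z)) (f (idx w)) - r * ‖y (idx z) - y (idx w)‖
        = (dist (f (idx z)) (f (idx w)) / r - ‖y (idx z) - y (idx w)‖) * r := by
      field_simp
    rw [e, abs_mul, abs_of_pos hr]
    exact mul_le_mul_of_nonneg_right (hclose _ _) hr.le

end Conclusion

end HeatRigidity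

open HeatRigidity

/-- **Almost rigidity for almost Euclidean heat kernels.** For every `ε > 0` and `n ≥ 1`
there is a `δ > 0` depending only on `ε` and `n` such that: if a complete metric measure
space carries a symmetric sub-Markovian kernel `p` satisfying the Chapman–Kolmogorov
identity and the almost Gaussian two-sided bounds with parameter `δ` up to time `T`,
then every closed ball of radius `r < √T` is compact and is `ε r`-close in
Gromov–Hausdorff distance to a Euclidean ball of the same radius in `ℝ^n`. -/
theorem almost_euclidean_heat_kernel_almost_rigidity
    (ε : ℝ) (hε : 0 < ε) (n : ℕ) (hn : 1 ≤ n) :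
    ∃ δ : ℝ, 0 < δ ∧
      ∀ (X : Type) [MetricSpace X] [Nonempty X] [CompleteSpace X]
        [MeasurableSpace X] [BorelSpace X] (μ : Measure X) (T : ℝ), 0 < T →
        ∀ p : X → X → ℝ → ℝ,
        Measurable (fun q : X × X × ℝ => p q.1 q.2.1 q.2.2) →
        (∀ (x y : X) (t : ℝ), p x y t = p y x t) →
        (∀ (x y : X) (s t : ℝ), 0 < s → 0 < t →
          (∫ z, p x z t * p z y s ∂μ) = p x y (t + s)) →
        (∀ (x : X) (t : ℝ), 0 < t → (∫⁻ y, ENNReal.ofReal (p x y t) ∂μ) ≤ 1) →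
        (∀ (x y : X) (t : ℝ), 0 < t → t ≤ T →
          (1 - δ) * (4 * π * t) ^ (-(n : ℝ) / 2) *
              Real.exp (-(dist x y) ^ 2 / (4 * (1 - δ) * t)) ≤ p x y t ∧
          p x y t ≤ (1 + δ) * (4 * π * t) ^ (-(n : ℝ) / 2) *
              Real.exp (-(dist x y) ^ 2 / (4 * (1 + δ) * t))) →
        ∀ (x : X) (r : ℝ), 0 < r → r < Real.sqrt T →
          IsCompact (Metric.closedBall x r) ∧
          ∀ [Nonempty (Metric.closedBall x r)] [CompactSpace (Metric.closedBall x r)]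
            [Nonempty (Metric.closedBall (0 : EuclideanSpace ℝ (Fin n)) r)]
            [CompactSpace (Metric.closedBall (0 : EuclideanSpace ℝ (Fin n)) r)],
            GromovHausdorff.ghDist (Metric.closedBall x r)
              (Metric.closedBall (0 : EuclideanSpace ℝ (Fin n)) r) ≤ ε * r := by
  -- `η ≤ 1 / 6` makes the nets halve the radius; `13 η / 2 ≤ ε` is the final estimate
  set η : ℝ := min (ε / 10) (1 / 6) with hη
  have hη0 : 0 < η := by positivity
  have hη1 : η ≤ ε / 10 := min_le_left _ _
  have hη2 : η ≤ 1 / 6 := min_le_right _ _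
  obtain ⟨δ, hδ0, hδ1, hδ⟩ := exists_netApprox hn hη0 (by linarith)
  refine ⟨δ, hδ0, ?_⟩
  intro X _ _ _ _ _ μ T hT p _ hsymm hCK _ hp x r hr hrT
  have hp' : ∀ (x y : X) (t : ℝ), 0 < t → t ≤ T →
      gaussKernel n (-δ) t (dist x y) ≤ p x y t ∧ p x y t ≤ gaussKernel n δ t (dist x y) := by
    intro x y t h1 h2
    have := hp x y t h1 h2
    rwa [sub_eq_add_neg] at this
  have happ : ∀ (x : X) (ρ : ℝ) (hρ : 0 < ρ), ρ < √T →
      ∃ N f y, (rescaled n μ hρ).NetApprox x n η N f y := fun x ρ hρ hρT =>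
    hδ _ (rescaled_near n μ hδ0 hδ1 hsymm hCK hp' hρ ((Real.lt_sqrt hρ.le).1 hρT).le) x
  refine ⟨TotallyBounded.isCompact_of_isClosed
    (totallyBounded_of_halving (fun x ρ hρ hρT => ?_) x hr hrT) isClosed_closedBall, ?_⟩
  · obtain ⟨N, f, y, h⟩ := happ x ρ hρ hρT
    have hnet : ∀ z, dist x z / ρ ≤ 1 → ∃ i, dist z (f i) / ρ ≤ 3 * η := h.net
    refine ⟨Set.range f, Set.finite_range f, fun z hz => ?_⟩
    obtain ⟨i, hi⟩ := hnet z (by rw [div_le_one hρ, dist_comm]; exact hz)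
    refine mem_iUnion₂.2 ⟨f i, Set.mem_range_self i, ?_⟩
    rw [div_le_iff₀ hρ] at hi
    refine mem_closedBall.2 (hi.trans ?_)
    nlinarith
  · intro _ _ _ _
    obtain ⟨N, f, y, h⟩ := happ x r hr hrT
    refine (ghDist_le_of_netApprox hr h).trans ?_
    nlinarith
end

section
/- Let α > 0 and let (X,d) be a metric space with a Borel measure μ such that the Gaussian Chapman–Kolmogorov identity ∫_X P_α(x,z,t) P_α(z,y,s) dμ(z) = P_α(x,y,t+s) holds for all x,y ∈ X and all s,t > 0. Then ∫_X P_α(x,y,t) dμ(y) = 1 for every x ∈ X and every t > 0 (stochastic completeness). -/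
/-!
On the diagonal `y = x` with both times equal to `2t`, the product of the two Gaussians in the
Chapman–Kolmogorov identity is `(8πt)^(-α) exp (-d²/(4t))`, while the right-hand side is
`(16πt)^(-α/2)`. Since `(8πt)² = 16πt · 4πt`, dividing by `(16πt)^(-α/2)` gives the claim.
-/

open MeasureTheory Metric Real Set Filter
open scoped ENNReal NNReal Topology

/-- **Stochastic completeness.** If a metric space `(X, dist)` carries a Borel measure `μ`
satisfying the Gaussian Chapman–Kolmogorov identity for some `α > 0`, then
`∫ P_α(x,y,t) dμ(y) = 1` for every `x ∈ X` and every `t > 0`. -/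
theorem euclidean_heat_kernel_stochastically_complete
    {X : Type*} [MetricSpace X] [MeasurableSpace X] [BorelSpace X]
    (μ : Measure X)
    (α : ℝ) (hα : 0 < α)
    (hCK : ∀ (x y : X) (s t : ℝ), 0 < s → 0 < t →
      (∫ z, ((4 * π * t) ^ (-(α / 2)) * Real.exp (-(dist x z) ^ 2 / (4 * t))) *
        ((4 * π * s) ^ (-(α / 2)) * Real.exp (-(dist z y) ^ 2 / (4 * s))) ∂μ)
      = (4 * π * (t + s)) ^ (-(α / 2)) *
          Real.exp (-(dist x y) ^ 2 / (4 * (t + s)))) :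
    ∀ (x : X) (t : ℝ), 0 < t →
      (∫ y, (4 * π * t) ^ (-(α / 2)) * Real.exp (-(dist x y) ^ 2 / (4 * t)) ∂μ) = 1 := by
  intro x t ht
  have h := hCK x x (2 * t) (2 * t) (by positivity) (by positivity)
  have hπ := Real.pi_pos
  set c : ℝ := (4 * π * (2 * t + 2 * t)) ^ (-(α / 2)) with hc
  have hc0 : c ≠ 0 := by positivity
  have hcoef : (4 * π * (2 * t)) ^ (-(α / 2)) * (4 * π * (2 * t)) ^ (-(α / 2))
      = c * (4 * π * t) ^ (-(α / 2)) := by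
    rw [hc, ← Real.mul_rpow (by positivity) (by positivity),
      ← Real.mul_rpow (by positivity) (by positivity)]
    congr 1
    ring
  have hint : ∀ z, ((4 * π * (2 * t)) ^ (-(α / 2)) * Real.exp (-(dist x z) ^ 2 / (4 * (2 * t)))) *
        ((4 * π * (2 * t)) ^ (-(α / 2)) * Real.exp (-(dist z x) ^ 2 / (4 * (2 * t))))
      = c * ((4 * π * t) ^ (-(α / 2)) * Real.exp (-(dist x z) ^ 2 / (4 * t))) := by
    intro z
    rw [dist_comm z x, mul_mul_mul_comm, hcoef, ← Real.exp_add, mul_assoc]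
    congr 3
    field_simp
    ring
  simp_rw [hint] at h
  rw [integral_const_mul] at h
  have hx : c * Real.exp (-(dist x x) ^ 2 / (4 * (2 * t + 2 * t))) = c * 1 := by simp
  exact mul_left_cancel₀ hc0 (h.trans hx)
end

section
/- Let α > 0 and let μ be a Borel measure on a metric space (X,d) such that ∫_X exp(−d(x,y)²/(4t)) dμ(y) = (4πt)^{α/2} for every x ∈ X and every t > 0. Then μ(B_r(x)) = ω_α r^α for every x ∈ X and every r > 0, where B_r(x) denotes the open ball of radius r around x; that is, (X,d,μ) has an α-dimensional volume. -/
/-!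
The Gaussian integrals at the times `t = 1 / (4 (n + 1))` are the moments of order `n + 1` of the
pushforward of `μ` under `y ↦ exp (-d(x,y)²) ∈ [0, 1]`. A possibly infinite measure on `[0, 1]` not
charging `0` is determined by its moments of order at least `1`, provided the first one is finite
(`measure_eq_of_succ_moments`): weighted by `v`, it becomes a finite measure, to which the
Weierstrass theorem applies (`measure_eq_of_moments`), and the weight can be divided out again.

The measure with density `π^a / Γ(a) s^(a-1)`, `a = α / 2`, on the half-line `s > 0` (`radialMeasure`),
pushed forward under `s ↦ exp (-s)`, has the same moments by Euler's integral for `Γ`. Hence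
`μ {d(x,·)² < r²}` is the mass it gives to `(0, r²)`, which is `π^a / (a Γ(a)) r^(2a) = ω_α r^α`.
-/

open MeasureTheory Metric Real Set Filter
open scoped ENNReal NNReal Topology unitInterval

/-- Uniqueness in the Hausdorff moment problem: the continuous functions having equal
integrals form a closed set containing all polynomials. -/
lemma measure_eq_of_moments (P Q : Measure I) [IsFiniteMeasure P] [IsFiniteMeasure Q]
    (h : ∀ n : ℕ, ∫ v, (v : ℝ) ^ n ∂P = ∫ v, (v : ℝ) ^ n ∂Q) : P = Q := by
  have hcont (ρ : Measure I) [IsFiniteMeasure ρ] : Continuous fun f : C(I, ℝ) => ∫ v, f v ∂ρ := by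
    refine continuous_iff_continuousAt.2 fun f₀ => ?_
    refine continuousAt_of_dominated (bound := fun _ => ‖f₀‖ + 1)
      (.of_forall fun f => f.continuous.aestronglyMeasurable) ?_ (integrable_const _)
      (.of_forall fun v => (continuous_eval_const v).continuousAt)
    filter_upwards [continuous_norm.continuousAt.eventually_lt_const (lt_add_one ‖f₀‖)] with f hf
    exact .of_forall fun v => (f.norm_coe_le_norm v).trans hf.le
  have hint (ρ : Measure I) [IsFiniteMeasure ρ] (f : C(I, ℝ)) : Integrable (fun v => f v) ρ :=
    f.continuous.integrable_of_hasCompactSupport (HasCompactSupport.of_compactSpace _)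
  have hclosed : IsClosed {f : C(I, ℝ) | ∫ v, f v ∂P = ∫ v, f v ∂Q} :=
    isClosed_eq (hcont P) (hcont Q)
  have hpoly : (polynomialFunctions I : Set C(I, ℝ)) ⊆
      {f : C(I, ℝ) | ∫ v, f v ∂P = ∫ v, f v ∂Q} := by
    rw [polynomialFunctions_coe]
    rintro _ ⟨p, rfl⟩
    simp only [Set.mem_ofPred_eq, Polynomial.toContinuousMapOnAlgHom_apply,
      Polynomial.toContinuousMapOn_apply, Polynomial.toContinuousMap_apply,
      Polynomial.eval_eq_sum_range]
    have hi (ρ : Measure I) [IsFiniteMeasure ρ] (n : ℕ) :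
        Integrable (fun v : I => p.coeff n * (v : ℝ) ^ n) ρ :=
      hint ρ ⟨fun v : I => p.coeff n * (v : ℝ) ^ n, by fun_prop⟩
    rw [integral_finsetSum _ fun i _ => hi P i, integral_finsetSum _ fun i _ => hi Q i]
    simp only [integral_const_mul, h]
  refine ext_of_forall_integral_eq_of_IsFiniteMeasure fun f => ?_
  have hf : f.toContinuousMap ∈ closure (polynomialFunctions I : Set C(I, ℝ)) := by
    rw [← Subalgebra.topologicalClosure_coe, polynomialFunctions_closure_eq_top']
    trivial
  exact closure_minimal hpoly hclosed hf

/-- The measures themselves may be infinite, with mass accumulating at `0`. -/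
lemma measure_eq_of_succ_moments (M N : Measure I)
    (hM0 : ∀ᵐ v : I ∂M, 0 < (v : ℝ)) (hN0 : ∀ᵐ v : I ∂N, 0 < (v : ℝ))
    (hM : Integrable (fun v : I => (v : ℝ)) M) (hN : Integrable (fun v : I => (v : ℝ)) N)
    (h : ∀ n : ℕ, ∫ v, (v : ℝ) ^ (n + 1) ∂M = ∫ v, (v : ℝ) ^ (n + 1) ∂N) : M = N := by
  set φ : I → ℝ≥0∞ := fun v => ENNReal.ofReal (v : ℝ) with hφ
  have hφm : Measurable φ := by fun_prop
  have hfin (ρ : Measure I) (hρ : Integrable (fun v : I => (v : ℝ)) ρ) :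
      IsFiniteMeasure (ρ.withDensity φ) := by
    refine isFiniteMeasure_withDensity ?_
    exact hρ.lintegral_lt_top.ne
  have hmom (ρ : Measure I) (n : ℕ) :
      ∫ v, (v : ℝ) ^ n ∂(ρ.withDensity φ) = ∫ v, (v : ℝ) ^ (n + 1) ∂ρ := by
    rw [integral_withDensity_eq_integral_toReal_smul hφm (by simp [hφ])]
    refine integral_congr_ae (.of_forall fun v => ?_)
    simp only [hφ, smul_eq_mul]
    rw [ENNReal.toReal_ofReal v.2.1, pow_succ']
  have hinv (ρ : Measure I) (hρ : ∀ᵐ v : I ∂ρ, 0 < (v : ℝ)) :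
      (ρ.withDensity φ).withDensity φ⁻¹ = ρ := by
    refine withDensity_inv_same hφm ?_ (by simp [hφ])
    filter_upwards [hρ] with v hv
    simpa [hφ] using hv
  have := hfin M hM
  have := hfin N hN
  have key : M.withDensity φ = N.withDensity φ :=
    measure_eq_of_moments _ _ fun n => by rw [hmom, hmom, h]
  rw [← hinv M hM0, ← hinv N hN0, key]

/-- The map `s ↦ exp (-|s|)` into the unit interval; the absolute value makes it total, and it is
only relevant for `s ≥ 0`. -/
noncomputable def expNeg (s : ℝ) : I :=
  ⟨Real.exp (-|s|), (Real.exp_pos _).le, by simp⟩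

lemma continuous_expNeg : Continuous expNeg := by
  unfold expNeg
  fun_prop

/-- With `a = α / 2`, the distribution of the squared distance to a point under an
`α`-dimensional volume. -/
noncomputable def radialMeasure (a : ℝ) : Measure ℝ :=
  (volume.restrict (Ioi 0)).withDensity
    fun s => ENNReal.ofReal (π ^ a / Real.Gamma a * s ^ (a - 1))

lemma integral_radialMeasure {a : ℝ} (ha : 0 < a) (n : ℕ) :
    ∫ s, (expNeg s : ℝ) ^ (n + 1) ∂(radialMeasure a) = (π / (n + 1)) ^ a := by
  have hG : 0 < Real.Gamma a := Real.Gamma_pos_of_pos ha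
  have hn : (0 : ℝ) < n + 1 := by positivity
  rw [radialMeasure, integral_withDensity_eq_integral_toReal_smul (by fun_prop) (by simp)]
  have : ∀ s ∈ Ioi (0 : ℝ),
      (ENNReal.ofReal (π ^ a / Real.Gamma a * s ^ (a - 1))).toReal • (expNeg s : ℝ) ^ (n + 1)
      = π ^ a / Real.Gamma a * (s ^ (a - 1) * Real.exp (-(((n : ℝ) + 1) * s))) := by
    intro s hs
    have hs' : (0 : ℝ) < s := hs
    rw [ENNReal.toReal_ofReal (by positivity), smul_eq_mul, mul_assoc]
    simp only [expNeg, abs_of_pos hs', ← Real.exp_nat_mul]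
    push_cast
    ring_nf
  rw [setIntegral_congr_fun measurableSet_Ioi this, integral_const_mul,
    Real.integral_rpow_mul_exp_neg_mul_Ioi ha hn, Real.div_rpow Real.pi_pos.le hn.le,
    Real.div_rpow zero_le_one hn.le, Real.one_rpow]
  field_simp

lemma radialMeasure_abs_lt {a R : ℝ} (ha : 0 < a) (hR : 0 < R) :
    radialMeasure a {s | |s| < R}
      = ENNReal.ofReal (π ^ a / Real.Gamma (a + 1) * R ^ a) := by
  have hG : 0 < Real.Gamma a := Real.Gamma_pos_of_pos ha
  have hm : MeasurableSet {s : ℝ | |s| < R} := measurableSet_lt (by fun_prop) (by fun_prop)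
  have hset : {s : ℝ | |s| < R} ∩ Ioi 0 = Ioo 0 R := by
    ext s
    simp only [Set.mem_inter_iff, Set.mem_ofPred_eq, Set.mem_Ioi, Set.mem_Ioo, abs_lt]
    constructor
    · rintro ⟨⟨_, h⟩, h0⟩
      exact ⟨h0, h⟩
    · rintro ⟨h0, h⟩
      exact ⟨⟨by linarith, h⟩, h0⟩
  have hii : IntegrableOn (fun s : ℝ => s ^ (a - 1)) (Ioo 0 R) :=
    (intervalIntegrable_iff_integrableOn_Ioo_of_le hR.le).1
      (intervalIntegral.intervalIntegrable_rpow' (by linarith))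
  rw [radialMeasure, withDensity_apply _ hm, Measure.restrict_restrict hm, hset,
    ← ofReal_integral_eq_lintegral_ofReal (hii.const_mul _), integral_const_mul,
    ← integral_Ioc_eq_integral_Ioo, ← intervalIntegral.integral_of_le hR.le,
    integral_rpow (Or.inl (by linarith)), Real.Gamma_add_one ha.ne']
  · congr 1
    rw [sub_add_cancel, Real.zero_rpow ha.ne', sub_zero]
    field_simp
  · filter_upwards [self_mem_ae_restrict measurableSet_Ioo] with s hs
    have := hs.1
    positivity

/-- **α-dimensional volume from stochastic completeness of the Euclidean heat kernel.**
If `∫ exp(-d(x,y)²/(4t)) dμ(y) = (4πt)^{α/2}` for all `x` and all `t > 0`, then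
`μ(B_r(x)) = ω_α r^α` for every `x` and `r > 0`, where `ω_α = π^{α/2}/Γ(α/2+1)`. -/
theorem volume_of_balls_from_gaussian_integral
    {X : Type*} [MetricSpace X] [MeasurableSpace X] [BorelSpace X]
    (μ : Measure X)
    (α : ℝ) (hα : 0 < α)
    (hint : ∀ (x : X) (t : ℝ), 0 < t →
      (∫ y, Real.exp (-(dist x y) ^ 2 / (4 * t)) ∂μ) = (4 * π * t) ^ (α / 2)) :
    ∀ (x : X) (r : ℝ), 0 < r →
      μ (Metric.ball x r)
        = ENNReal.ofReal (π ^ (α / 2) / Real.Gamma (α / 2 + 1) * r ^ α) := by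
  intro x r hr
  have ha : 0 < α / 2 := by positivity
  set u : X → I := fun y => expNeg (dist x y ^ 2) with hu
  have hum : Measurable u :=
    (continuous_expNeg.comp (by fun_prop : Continuous fun y => dist x y ^ 2)).measurable
  have hem : Measurable expNeg := continuous_expNeg.measurable
  have hpowm (n : ℕ) (ρ : Measure I) :
      AEStronglyMeasurable (fun v : I => (v : ℝ) ^ (n + 1)) ρ := by
    exact Continuous.aestronglyMeasurable (by fun_prop)
  have hmomM (n : ℕ) : ∫ v, (v : ℝ) ^ (n + 1) ∂(μ.map u) = (π / (n + 1)) ^ (α / 2) := by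
    have hn : (0 : ℝ) < n + 1 := by positivity
    rw [integral_map hum.aemeasurable (hpowm n _)]
    have h := hint x (1 / (4 * (n + 1))) (by positivity)
    have e : 4 * π * (1 / (4 * ((n : ℝ) + 1))) = π / (n + 1) := by field_simp
    rw [e] at h
    rw [← h]
    refine integral_congr_ae (.of_forall fun y => ?_)
    simp only [hu, expNeg, abs_of_nonneg (sq_nonneg (dist x y)), ← Real.exp_nat_mul]
    congr 1
    push_cast
    field_simp
  have hmomN (n : ℕ) :
      ∫ v, (v : ℝ) ^ (n + 1) ∂((radialMeasure (α / 2)).map expNeg) = (π / (n + 1)) ^ (α / 2) := by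
    rw [integral_map hem.aemeasurable (hpowm n _), integral_radialMeasure ha]
  -- A nonzero Bochner integral forces integrability.
  have hintegrable (ρ : Measure I)
      (hρ : ∀ n : ℕ, ∫ v, (v : ℝ) ^ (n + 1) ∂ρ = (π / (n + 1)) ^ (α / 2)) :
      Integrable (fun v : I => (v : ℝ)) ρ := by
    by_contra hnot
    have h0 := hρ 0
    simp only [zero_add, pow_one] at h0
    rw [integral_undef hnot] at h0
    have : 0 < (π / (((0 : ℕ) : ℝ) + 1)) ^ (α / 2) := by positivity
    exact this.ne h0
  have hposm : MeasurableSet {v : I | 0 < (v : ℝ)} :=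
    measurableSet_lt (by fun_prop) (by fun_prop)
  have key : μ.map u = (radialMeasure (α / 2)).map expNeg := by
    refine measure_eq_of_succ_moments _ _ ?_ ?_ (hintegrable _ hmomM) (hintegrable _ hmomN)
      fun n => by rw [hmomM, hmomN]
    · exact (ae_map_iff hum.aemeasurable hposm).2 (.of_forall fun y => Real.exp_pos _)
    · exact (ae_map_iff hem.aemeasurable hposm).2 (.of_forall fun s => Real.exp_pos _)
  have hsm : MeasurableSet {v : I | Real.exp (-r ^ 2) < (v : ℝ)} :=
    measurableSet_lt (by fun_prop) (by fun_prop)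
  have hball : Metric.ball x r = u ⁻¹' {v : I | Real.exp (-r ^ 2) < (v : ℝ)} := by
    ext y
    simp only [hu, expNeg, Metric.mem_ball', Set.mem_preimage, Set.mem_ofPred_eq, Real.exp_lt_exp,
      abs_of_nonneg (sq_nonneg (dist x y)), neg_lt_neg_iff]
    exact (pow_lt_pow_iff_left₀ dist_nonneg hr.le two_ne_zero).symm
  have hinterval : expNeg ⁻¹' {v : I | Real.exp (-r ^ 2) < (v : ℝ)} = {s | |s| < r ^ 2} := by
    ext s
    simp only [expNeg, Set.mem_preimage, Set.mem_ofPred_eq, Real.exp_lt_exp, neg_lt_neg_iff]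
  have hpow : (r ^ 2) ^ (α / 2) = r ^ α := by
    rw [← Real.rpow_natCast_mul hr.le]
    congr 1
    push_cast
    ring
  rw [hball, ← Measure.map_apply hum hsm, key, Measure.map_apply hem hsm, hinterval,
    radialMeasure_abs_lt ha (by positivity), hpow]
end

section
/- Let α > 0 and let (X,d) be a complete metric space with a Borel measure μ such that the Gaussian Chapman–Kolmogorov identity ∫_X P_α(x,z,t) P_α(z,y,s) dμ(z) = P_α(x,y,t+s) holds for all x,y ∈ X and all s,t > 0. Then every closed ball in (X,d) is compact; in particular (X,d) is a proper metric space. -/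
open MeasureTheory Metric Real Set Filter
open scoped ENNReal NNReal Topology

/-!
On the diagonal `x = y`, `s = t` the Chapman–Kolmogorov identity says that
`∫ exp (-l * d(x,z)²) dμ(z) = (π / l) ^ (α / 2)` for every centre `x` and every `l > 0`
(`integral_gaussian_of_diag`). Consequently every ball has finite measure (`measure_ball_lt_top`),
and the measure of balls of a given radius `R` is bounded below by a positive constant independent
of the centre (`exists_lower_bound_measure_ball`): outside `ball x R` the Gaussian with parameter
`l` is at most `exp (-l R² / 2)` times the Gaussian with parameter `l / 2`, so for large `l` at least
half of its mass lies in the ball.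

An infinite `ε`-separated sequence in a closed ball would then give infinitely many disjoint balls
of radius `ε / 2`, all of measure at least a fixed positive constant, inside a ball of finite
measure. Hence closed balls are totally bounded, and they are compact by completeness.
-/

section

variable {X : Type*} [MetricSpace X] [MeasurableSpace X]

/-- The Chapman–Kolmogorov identity at `x = y` and
`s = t = 1 / (2 * l)` determines all Gaussian integrals. -/
lemma integral_gaussian_of_diag (μ : Measure X) (a : ℝ)
    (h : ∀ (x : X) (t : ℝ), 0 < t →
      (∫ z, ((4 * π * t) ^ (-a) * Real.exp (-(dist x z) ^ 2 / (4 * t))) *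
        ((4 * π * t) ^ (-a) * Real.exp (-(dist z x) ^ 2 / (4 * t))) ∂μ)
      = (4 * π * (t + t)) ^ (-a) * Real.exp (-(dist x x) ^ 2 / (4 * (t + t))))
    (x : X) (l : ℝ) (hl : 0 < l) :
    ∫ z, Real.exp (-l * dist x z ^ 2) ∂μ = (π / l) ^ a := by
  have h1 := h x (1 / (2 * l)) (by positivity)
  have e : ∀ z, ((4 * π * (1 / (2 * l))) ^ (-a) *
        Real.exp (-(dist x z) ^ 2 / (4 * (1 / (2 * l))))) *
        ((4 * π * (1 / (2 * l))) ^ (-a) * Real.exp (-(dist z x) ^ 2 / (4 * (1 / (2 * l)))))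
      = (2 ^ (-a) * (π / l) ^ (-a)) * (2 ^ (-a) * (π / l) ^ (-a)) *
          Real.exp (-l * dist x z ^ 2) := by
    intro z
    have b : 4 * π * (1 / (2 * l)) = 2 * (π / l) := by
      field_simp
      ring
    have d : -(dist x z) ^ 2 / (4 * (1 / (2 * l))) + -(dist x z) ^ 2 / (4 * (1 / (2 * l)))
        = -l * dist x z ^ 2 := by
      field_simp
      ring
    rw [← Real.mul_rpow (by norm_num) (by positivity), dist_comm z x, mul_mul_mul_comm,
      ← Real.exp_add, b, d]
  have e2 : (4 * π * (1 / (2 * l) + 1 / (2 * l))) ^ (-a)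
      = 2 ^ (-a) * (2 ^ (-a) * (π / l) ^ (-a)) := by
    rw [← Real.mul_rpow (by norm_num) (by positivity),
      ← Real.mul_rpow (by norm_num) (by positivity)]
    congr 1
    field_simp
    ring
  simp only [e, e2, dist_self, integral_const_mul] at h1
  have hp : 0 < (π / l) ^ a := by positivity
  have h2 : (0 : ℝ) < 2 ^ (-a) := by positivity
  rw [Real.rpow_neg (by positivity : 0 ≤ π / l)] at h1
  simp only [ne_eq, OfNat.ofNat_ne_zero, not_false_eq_true, zero_pow, neg_zero, zero_div,
    Real.exp_zero, mul_one] at h1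
  field_simp at h1
  simpa only [neg_mul] using h1

variable {μ : Measure X} {a : ℝ}

/-- A Bochner integral with nonzero value has an integrable integrand. -/
lemma integrable_gaussian
    (hG : ∀ (x : X) (l : ℝ), 0 < l → ∫ z, Real.exp (-l * dist x z ^ 2) ∂μ = (π / l) ^ a)
    (x : X) (l : ℝ) (hl : 0 < l) : Integrable (fun z => Real.exp (-l * dist x z ^ 2)) μ := by
  by_contra hn
  have h := hG x l hl
  rw [integral_undef hn] at h
  have : 0 < (π / l) ^ a := by positivity
  linarith

lemma measure_ball_lt_top
    (hG : ∀ (x : X) (l : ℝ), 0 < l → ∫ z, Real.exp (-l * dist x z ^ 2) ∂μ = (π / l) ^ a)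
    (x : X) (R : ℝ) : μ (ball x R) < ∞ := by
  refine lt_of_le_of_lt (measure_mono ?_)
    ((integrable_gaussian hG x 1 one_pos).measure_ge_lt_top (Real.exp_pos (-R ^ 2)))
  intro z hz
  rw [mem_ball, dist_comm] at hz
  have : dist x z ^ 2 ≤ R ^ 2 := by gcongr
  simp only [mem_ofPred_eq]
  exact Real.exp_le_exp.2 (by linarith)

variable [BorelSpace X]

lemma exists_lower_bound_measure_ball
    (hG : ∀ (x : X) (l : ℝ), 0 < l → ∫ z, Real.exp (-l * dist x z ^ 2) ∂μ = (π / l) ^ a)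
    (R : ℝ) (hR : 0 < R) :
    ∃ c : ℝ≥0∞, 0 < c ∧ ∀ x : X, c ≤ μ (ball x R) := by
  -- `L = l R² / 2` is taken so large that the Gaussian tail carries at most half of the mass.
  obtain ⟨L, hL, hL0⟩ : ∃ L : ℝ, Real.exp (-L) * 2 ^ a ≤ 1 / 2 ∧ 0 < L := by
    have h : Tendsto (fun L : ℝ => Real.exp (-L) * 2 ^ a) atTop (𝓝 (0 * 2 ^ a)) :=
      Real.tendsto_exp_neg_atTop_nhds_zero.mul_const _
    rw [zero_mul] at h
    exact ((h.eventually_le_const (by norm_num : (0 : ℝ) < 1 / 2)).and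
      (eventually_gt_atTop 0)).exists
  set l : ℝ := 2 * L / R ^ 2 with hl
  have hl0 : 0 < l := by positivity
  have hp : 0 < (π / l) ^ a := by positivity
  refine ⟨ENNReal.ofReal ((π / l) ^ a / 2), by positivity, fun x => ?_⟩
  have hfin := (measure_ball_lt_top hG x R).ne
  have hi : Integrable ((ball x R).indicator (fun _ => (1 : ℝ))) μ :=
    (integrable_indicator_iff measurableSet_ball).2 (integrableOn_const hfin)
  have hi2 := (integrable_gaussian hG x (l / 2) (by positivity)).const_mul (Real.exp (-L))
  have key : ∫ z, Real.exp (-l * dist x z ^ 2) ∂μ ≤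
      ∫ z, ((ball x R).indicator (fun _ => (1 : ℝ)) z +
        Real.exp (-L) * Real.exp (-(l / 2) * dist x z ^ 2)) ∂μ := by
    refine integral_mono (integrable_gaussian hG x l hl0) (hi.add hi2) fun z => ?_
    simp only
    by_cases hz : z ∈ ball x R
    · rw [indicator_of_mem hz]
      have h1 : Real.exp (-l * dist x z ^ 2) ≤ 1 := Real.exp_le_one_iff.2 (by
        have : 0 ≤ l * dist x z ^ 2 := by positivity
        linarith)
      have : 0 ≤ Real.exp (-L) * Real.exp (-(l / 2) * dist x z ^ 2) := by positivity
      linarith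
    · rw [indicator_of_notMem hz, zero_add, ← Real.exp_add]
      rw [mem_ball, not_lt, dist_comm] at hz
      have h2 : l * R ^ 2 ≤ l * dist x z ^ 2 := by gcongr
      have h3 : l * R ^ 2 = 2 * L := by
        rw [hl]
        field_simp
      exact Real.exp_le_exp.2 (by linarith)
  have e : (π / (l / 2)) ^ a = 2 ^ a * (π / l) ^ a := by
    rw [← Real.mul_rpow (by norm_num) (by positivity)]
    congr 1
    field_simp
  rw [integral_add hi hi2, integral_const_mul, hG x l hl0, hG x (l / 2) (by positivity), e,
    integral_indicator measurableSet_ball, setIntegral_const, smul_eq_mul, mul_one,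
    ← mul_assoc] at key
  have h4 : Real.exp (-L) * 2 ^ a * (π / l) ^ a ≤ 1 / 2 * (π / l) ^ a := by gcongr
  rw [← ENNReal.ofReal_toReal hfin]
  refine ENNReal.ofReal_le_ofReal ?_
  change _ ≤ μ.real (ball x R)
  linarith

/-- Packing argument: balls of finite measure, together with a lower bound on the measure of balls
that is uniform in the centre, force closed balls to be totally bounded. -/
lemma totallyBounded_closedBall_of_measure
    (hfin : ∀ (x : X) (R : ℝ), μ (ball x R) < ∞)
    (hlow : ∀ R : ℝ, 0 < R → ∃ c : ℝ≥0∞, 0 < c ∧ ∀ x : X, c ≤ μ (ball x R))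
    (x : X) (r : ℝ) : TotallyBounded (closedBall x r) := by
  rw [Metric.totallyBounded_iff]
  intro ε hε
  by_contra hcon
  push Not at hcon
  have : Std.Symm (fun y z : X => ε ≤ dist y z) := ⟨fun y z h => by rwa [dist_comm]⟩
  obtain ⟨f, hf, hsep⟩ := exists_seq_of_forall_finset_exists' (fun y => y ∈ closedBall x r)
    (fun y z => ε ≤ dist y z) (fun s _ => by
      obtain ⟨y, hy, hys⟩ := not_subset.1 (hcon s s.finite_toSet)
      refine ⟨y, hy, fun z hz => ?_⟩
      by_contra hlt
      refine hys (mem_biUnion (Finset.mem_coe.2 hz) ?_)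
      rwa [mem_ball, dist_comm, ← not_le])
  obtain ⟨c, hc, hcle⟩ := hlow (ε / 2) (by positivity)
  have hdisj : Pairwise (Function.onFun Disjoint fun n => ball (f n) (ε / 2)) :=
    fun m n hmn => ball_disjoint_ball (by simpa [add_halves] using hsep hmn)
  have hunion : μ (⋃ n, ball (f n) (ε / 2)) ≠ ∞ := by
    refine ((measure_mono (iUnion_subset fun n => ?_)).trans_lt (hfin x (r + ε))).ne
    refine ball_subset_ball' ?_
    have := mem_closedBall.1 (hf n)
    linarith
  have hfinite := Measure.finite_const_le_meas_of_disjoint_iUnion μ hc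
    (fun n => measurableSet_ball) hdisj hunion
  have huniv : {n : ℕ | c ≤ μ (ball (f n) (ε / 2))} = univ := eq_univ_of_forall fun n => hcle _
  rw [huniv] at hfinite
  exact infinite_univ hfinite

end

/-- **Properness.** If a complete metric space `(X, dist)` carries a Borel measure `μ`
satisfying the Gaussian Chapman–Kolmogorov identity for some `α > 0`, then every closed
ball of `X` is compact; in particular `X` is a proper metric space. -/
theorem euclidean_heat_kernel_proper
    {X : Type*} [MetricSpace X] [CompleteSpace X]
    [MeasurableSpace X] [BorelSpace X]
    (μ : Measure X)
    (α : ℝ) (hα : 0 < α)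
    (hCK : ∀ (x y : X) (s t : ℝ), 0 < s → 0 < t →
      (∫ z, ((4 * π * t) ^ (-(α / 2)) * Real.exp (-(dist x z) ^ 2 / (4 * t))) *
        ((4 * π * s) ^ (-(α / 2)) * Real.exp (-(dist z y) ^ 2 / (4 * s))) ∂μ)
      = (4 * π * (t + s)) ^ (-(α / 2)) *
          Real.exp (-(dist x y) ^ 2 / (4 * (t + s)))) :
    (∀ (x : X) (r : ℝ), IsCompact (Metric.closedBall x r)) ∧ ProperSpace X := by
  have hG := integral_gaussian_of_diag μ (α / 2) fun x t ht => hCK x x t t ht ht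
  have hcpt : ∀ (x : X) (r : ℝ), IsCompact (Metric.closedBall x r) := fun x r =>
    isCompact_iff_totallyBounded_isComplete.2
      ⟨totallyBounded_closedBall_of_measure (measure_ball_lt_top hG)
        (exists_lower_bound_measure_ball hG) x r, isClosed_closedBall.isComplete⟩
  exact ⟨hcpt, ⟨hcpt⟩⟩
end

section
/- Let α > 0 and let (X,d) be a complete metric space with a Borel measure μ such that the Gaussian Chapman–Kolmogorov identity ∫_X P_α(x,z,t) P_α(z,y,s) dμ(z) = P_α(x,y,t+s) holds for all x,y ∈ X and all s,t > 0. Then any two points x,y ∈ X admit a midpoint, i.e. a point m ∈ X with d(x,m) = d(m,y) = d(x,y)/2; consequently (X,d) is a geodesic space (any two points are joined by a minimizing geodesic). -/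
/-!
For `x = y` the Chapman–Kolmogorov identity says that `∫ exp (-d(x,z)² / (2t)) dμ(z) = (2πt)^(α/2)`
for all `x` and `t`. This makes all balls of finite measure, and comparing the times `t` and `2t`
shows that the measure of a ball of radius `r` is bounded below independently of its centre. A
packing argument then makes bounded sets totally bounded, so the complete space `X` is proper
(`proper_of_gaussian`).

For general `x, y`, the quantity `d(x,z)² + d(z,y)²` attains its minimum `M` by properness. Always
`M ≥ d(x,y)²/2`, and equality forces the minimizer to be a midpoint. The identity with `s = t` reads
`∫ exp (-(d(x,z)² + d(z,y)²) / (4t)) dμ(z) = (2πt)^(α/2) exp (-d(x,y)² / (8t))`, and the left side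
decays at least like `exp (-M / (4t))` as `t → 0`, so `M ≤ d(x,y)²/2` (`midpoint_of_gaussian`).

Geodesics come from midpoints through Zorn's lemma: a maximal set containing `x` and `y` on which
`d(x, ·)` is isometric is closed, and its image has no gap in `[0, d(x,y)]`, since the midpoint of
the two ends of a gap could be added (`geodesic_of_midpoint`).
-/

open MeasureTheory Metric Real Set Filter
open scoped ENNReal NNReal Topology

/-- The Chapman–Kolmogorov identity at equal times, with the Gaussian prefactors collected on the
right. Integrability is automatic, since the integral is nonzero. -/
lemma gaussian_integral {X : Type*} [MetricSpace X] [MeasurableSpace X]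
    (μ : Measure X) (α : ℝ)
    (hCK : ∀ (x y : X) (s t : ℝ), 0 < s → 0 < t →
      (∫ z, ((4 * π * t) ^ (-(α / 2)) * Real.exp (-(dist x z) ^ 2 / (4 * t))) *
        ((4 * π * s) ^ (-(α / 2)) * Real.exp (-(dist z y) ^ 2 / (4 * s))) ∂μ)
      = (4 * π * (t + s)) ^ (-(α / 2)) *
          Real.exp (-(dist x y) ^ 2 / (4 * (t + s))))
    (x y : X) (t : ℝ) (ht : 0 < t) :
    Integrable (fun z => Real.exp (-((dist x z) ^ 2 + (dist z y) ^ 2) / (4 * t))) μ ∧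
    ∫ z, Real.exp (-((dist x z) ^ 2 + (dist z y) ^ 2) / (4 * t)) ∂μ
      = (2 * π * t) ^ (α / 2) * Real.exp (-(dist x y) ^ 2 / (8 * t)) := by
  have hpi := Real.pi_pos
  have h := hCK x y t t ht ht
  have hc : 0 < (4 * π * t) ^ (-(α / 2)) := by positivity
  have e1 : ∀ z, ((4 * π * t) ^ (-(α / 2)) * Real.exp (-(dist x z) ^ 2 / (4 * t))) *
        ((4 * π * t) ^ (-(α / 2)) * Real.exp (-(dist z y) ^ 2 / (4 * t)))
      = ((4 * π * t) ^ (-(α / 2)) * (4 * π * t) ^ (-(α / 2))) *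
        Real.exp (-((dist x z) ^ 2 + (dist z y) ^ 2) / (4 * t)) := by
    intro z
    rw [neg_add, add_div, Real.exp_add]; ring
  simp_rw [e1] at h
  rw [integral_const_mul] at h
  have hI : ∫ z, Real.exp (-((dist x z) ^ 2 + (dist z y) ^ 2) / (4 * t)) ∂μ
      = (2 * π * t) ^ (α / 2) * Real.exp (-(dist x y) ^ 2 / (8 * t)) := by
    have e2 : (4 * π * (t + t)) ^ (-(α / 2)) =
        ((4 * π * t) ^ (-(α / 2)) * (4 * π * t) ^ (-(α / 2))) * (2 * π * t) ^ (α / 2) := by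
      have e3 : (4 * π * t) ^ (-(α / 2)) * (4 * π * t) ^ (-(α / 2))
          = (4 * π * (t + t)) ^ (-(α / 2)) * (2 * π * t) ^ (-(α / 2)) := by
        rw [← Real.mul_rpow (by positivity) (by positivity),
          ← Real.mul_rpow (by positivity) (by positivity)]
        congr 1; ring
      have e4 : (2 * π * t) ^ (-(α / 2)) * (2 * π * t) ^ (α / 2) = 1 := by
        rw [← Real.rpow_add (by positivity)]; simp
      rw [e3, mul_assoc ((4 * π * (t + t)) ^ (-(α / 2))), e4, mul_one]
    rw [e2, mul_assoc (_ * _) ((2 * π * t) ^ (α / 2))] at h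
    have := mul_left_cancel₀ (mul_pos hc hc).ne' h
    rw [this]
    congr 3; ring
  refine ⟨?_, hI⟩
  by_contra hn
  rw [integral_undef hn] at hI
  have : 0 < (2 * π * t) ^ (α / 2) * Real.exp (-(dist x y) ^ 2 / (8 * t)) := by positivity
  linarith

/-- A complete space with finite measure on balls, and mass of `r`-balls bounded below
uniformly in the centre, is proper. -/
lemma proper_of_measure {X : Type*} [MetricSpace X] [CompleteSpace X]
    [MeasurableSpace X] [BorelSpace X] (μ : Measure X)
    (hfin : ∀ (x : X) (R : ℝ), μ (closedBall x R) ≠ ∞)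
    (hlow : ∀ r : ℝ, 0 < r → ∃ δ : ℝ≥0∞, 0 < δ ∧ ∀ x : X, δ ≤ μ (ball x r)) :
    ProperSpace X := by
  refine ⟨fun x R => ?_⟩
  rw [isCompact_iff_totallyBounded_isComplete]
  refine ⟨?_, isClosed_closedBall.isComplete⟩
  rw [Metric.totallyBounded_iff]
  intro ε hε
  by_contra hcon
  push Not at hcon
  have key : ∀ t : Set X, t.Finite → ∃ c, c ∈ closedBall x R ∧ ∀ p ∈ t, ε ≤ dist c p := by
    intro t ht
    obtain ⟨c, hc, hc'⟩ := Set.not_subset.1 (hcon t ht)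
    refine ⟨c, hc, fun p hp => ?_⟩
    simp only [mem_iUnion, mem_ball, not_exists, not_lt] at hc'
    exact hc' p hp
  obtain ⟨u, hu⟩ := seq_of_forall_finite_exists key
  obtain ⟨δ, hδ, hlow⟩ := hlow (ε / 2) (by positivity)
  have hsep : ∀ i j, i < j → Disjoint (ball (u i) (ε / 2)) (ball (u j) (ε / 2)) := by
    intro i j hij
    apply ball_disjoint_ball
    have := (hu j).2 (u i) ⟨i, hij, rfl⟩
    rw [dist_comm]; linarith
  have := Measure.finite_const_le_meas_of_disjoint_iUnion μ hδ
    (As := fun n : ℕ => ball (u n) (ε / 2)) (fun _ => measurableSet_ball)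
    (fun i j hij => by
      rcases lt_or_gt_of_ne hij with h | h
      · exact hsep i j h
      · exact (hsep j i h).symm)
    (ne_top_of_le_ne_top (hfin x (R + ε)) (measure_mono (by
      refine iUnion_subset fun n p hp => ?_
      have h1 := (hu n).1
      have h2 := dist_triangle p (u n) x
      rw [mem_ball] at hp
      rw [mem_closedBall] at h1 ⊢
      linarith)))
  exact Set.infinite_univ (α := ℕ) (this.subset fun n _ => hlow (u n))

lemma proper_of_gaussian {X : Type*} [MetricSpace X] [CompleteSpace X]
    [MeasurableSpace X] [BorelSpace X] (μ : Measure X) (α : ℝ) (hα : 0 < α)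
    (hG : ∀ (x y : X) (t : ℝ), 0 < t →
      Integrable (fun z => Real.exp (-((dist x z) ^ 2 + (dist z y) ^ 2) / (4 * t))) μ ∧
      ∫ z, Real.exp (-((dist x z) ^ 2 + (dist z y) ^ 2) / (4 * t)) ∂μ
        = (2 * π * t) ^ (α / 2) * Real.exp (-(dist x y) ^ 2 / (8 * t))) :
    ProperSpace X := by
  have hpi := Real.pi_pos
  have hfin : ∀ (x : X) (R : ℝ), μ (closedBall x R) ≠ ∞ := by
    intro x R
    have h := (hG x x 1 one_pos).1.measure_norm_ge_lt_top
      (ε := Real.exp (-(R ^ 2 + R ^ 2) / (4 * 1))) (Real.exp_pos _)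
    refine ne_top_of_le_ne_top h.ne (measure_mono fun z hz => ?_)
    rw [mem_closedBall] at hz
    simp only [mem_ofPred_eq, Real.norm_eq_abs, Real.abs_exp, Real.exp_le_exp]
    have : dist z x ^ 2 ≤ R ^ 2 := by gcongr
    rw [dist_comm x z]
    linarith
  refine proper_of_measure μ hfin fun r hr => ?_
  -- With `r² / (4t) = α`, the part of the Gaussian integral outside the ball is at most
  -- `exp (-α) * 2 ^ (α / 2) < 1` times the full integral.
  set t := r ^ 2 / (4 * α) with ht_def
  have ht : 0 < t := by positivity
  have hrt : r ^ 2 = 4 * α * t := by rw [ht_def]; field_simp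
  set C := (2 * π * t) ^ (α / 2) - Real.exp (-α) * (2 * π * (2 * t)) ^ (α / 2) with hC
  have hCpos : 0 < C := by
    have e1 : (2 * π * (2 * t)) ^ (α / 2) = (2 * π * t) ^ (α / 2) * 2 ^ (α / 2) := by
      rw [← Real.mul_rpow (by positivity) (by positivity)]; congr 1; ring
    have e2 : (2 : ℝ) ^ (α / 2) < Real.exp α := by
      rw [Real.rpow_def_of_pos two_pos, Real.exp_lt_exp]
      nlinarith [Real.log_two_lt_d9]
    have e3 : Real.exp (-α) * 2 ^ (α / 2) < 1 := by
      calc Real.exp (-α) * 2 ^ (α / 2) < Real.exp (-α) * Real.exp α := by gcongr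
        _ = 1 := by rw [← Real.exp_add]; simp
    have e4 : 0 < (2 * π * t) ^ (α / 2) := by positivity
    rw [hC, e1]
    nlinarith
  refine ⟨ENNReal.ofReal C, by simpa using hCpos, fun x => ?_⟩
  obtain ⟨i1, h1⟩ := hG x x t ht
  obtain ⟨i2, h2⟩ := hG x x (2 * t) (by positivity)
  simp only [dist_self, ne_eq, OfNat.ofNat_ne_zero, not_false_eq_true, zero_pow, neg_zero,
    zero_div, Real.exp_zero, mul_one] at h1 h2
  have hballfin : μ (ball x r) ≠ ∞ :=
    ne_top_of_le_ne_top (hfin x r) (measure_mono ball_subset_closedBall)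
  have hind : Integrable ((ball x r).indicator fun _ => (1 : ℝ)) μ :=
    (integrable_indicator_iff measurableSet_ball).2 (integrableOn_const hballfin)
  have hle : ∫ z, Real.exp (-((dist x z) ^ 2 + (dist z x) ^ 2) / (4 * t)) ∂μ ≤
      ∫ z, ((ball x r).indicator (fun _ => (1 : ℝ)) z +
        Real.exp (-α) * Real.exp (-((dist x z) ^ 2 + (dist z x) ^ 2) / (4 * (2 * t)))) ∂μ := by
    refine integral_mono i1 (hind.add (i2.const_mul _)) fun z => ?_
    by_cases hz : z ∈ ball x r
    · simp only [indicator_of_mem hz]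
      have a1 : Real.exp (-((dist x z) ^ 2 + (dist z x) ^ 2) / (4 * t)) ≤ 1 := by
        rw [Real.exp_le_one_iff]
        apply div_nonpos_of_nonpos_of_nonneg _ (by positivity)
        nlinarith [sq_nonneg (dist x z), sq_nonneg (dist z x)]
      have a2 : 0 < Real.exp (-α) *
          Real.exp (-((dist x z) ^ 2 + (dist z x) ^ 2) / (4 * (2 * t))) := by positivity
      linarith
    · simp only [indicator_of_notMem hz, zero_add]
      rw [← Real.exp_add, Real.exp_le_exp, dist_comm x z]
      rw [mem_ball, not_lt] at hz
      have a3 : 4 * α * t ≤ dist z x ^ 2 := by rw [← hrt]; gcongr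
      have a4 : α ≤ dist z x ^ 2 / (4 * t) := by
        rw [le_div_iff₀ (by positivity)]; linarith
      have a5 : -(dist z x ^ 2 + dist z x ^ 2) / (4 * t) = - (2 * (dist z x ^ 2 / (4 * t))) := by
        ring
      have a6 : -(dist z x ^ 2 + dist z x ^ 2) / (4 * (2 * t)) = - (dist z x ^ 2 / (4 * t)) := by
        field_simp; ring
      rw [a5, a6]; linarith
  rw [integral_add hind (i2.const_mul _), integral_const_mul, h1, h2,
    integral_indicator measurableSet_ball] at hle
  simp only [integral_const, smul_eq_mul, mul_one, measureReal_restrict_apply_univ] at hle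
  rw [ENNReal.ofReal_le_iff_le_toReal hballfin]
  change C ≤ μ.real (ball x r)
  linarith

lemma midpoint_of_gaussian {X : Type*} [MetricSpace X] [ProperSpace X]
    [MeasurableSpace X] (μ : Measure X) (α : ℝ)
    (hG : ∀ (x y : X) (t : ℝ), 0 < t →
      Integrable (fun z => Real.exp (-((dist x z) ^ 2 + (dist z y) ^ 2) / (4 * t))) μ ∧
      ∫ z, Real.exp (-((dist x z) ^ 2 + (dist z y) ^ 2) / (4 * t)) ∂μ
        = (2 * π * t) ^ (α / 2) * Real.exp (-(dist x y) ^ 2 / (8 * t)))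
    (x y : X) : ∃ m : X, dist x m = dist x y / 2 ∧ dist m y = dist x y / 2 := by
  have hpi := Real.pi_pos
  obtain ⟨m, hm⟩ : ∃ m, ∀ z, dist x m ^ 2 + dist m y ^ 2 ≤ dist x z ^ 2 + dist z y ^ 2 := by
    obtain ⟨m, -, hm⟩ := (isCompact_closedBall x (dist x y)).exists_isMinOn
      (f := fun z => dist x z ^ 2 + dist z y ^ 2)
      ⟨x, mem_closedBall_self dist_nonneg⟩ (by fun_prop)
    refine ⟨m, fun z => ?_⟩
    by_cases hz : z ∈ closedBall x (dist x y)
    · exact hm hz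
    · have h1 := hm (mem_closedBall_self (x := x) dist_nonneg)
      simp only [mem_ofPred_eq, dist_self] at h1
      rw [mem_closedBall, not_le, dist_comm z x] at hz
      have : dist x y ^ 2 ≤ dist x z ^ 2 := by gcongr
      nlinarith [sq_nonneg (dist z y)]
  set M := dist x m ^ 2 + dist m y ^ 2 with hM
  have hMle : M ≤ dist x y ^ 2 / 2 := by
    by_contra hlt
    rw [not_le] at hlt
    set c := (M - dist x y ^ 2 / 2) / 4 with hc
    have hcpos : 0 < c := by rw [hc]; linarith
    set K := Real.exp c with hK
    -- Compare the integrals at times `1 / u` and `1`, for `u ≥ 1`.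
    have hbound : ∀ u : ℝ, 1 ≤ u → Real.exp (c * u) / u ^ (α / 2) ≤ K := by
      intro u hu
      have hu0 : 0 < u := by linarith
      obtain ⟨i1, h1⟩ := hG x y (1 / u) (by positivity)
      obtain ⟨i2, h2⟩ := hG x y 1 one_pos
      have hle : ∫ z, Real.exp (-((dist x z) ^ 2 + (dist z y) ^ 2) / (4 * (1 / u))) ∂μ ≤
          ∫ z, Real.exp (-M * (u - 1) / 4) *
            Real.exp (-((dist x z) ^ 2 + (dist z y) ^ 2) / (4 * 1)) ∂μ := by
        refine integral_mono i1 (i2.const_mul _) fun z => ?_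
        simp only
        rw [← Real.exp_add, Real.exp_le_exp]
        have e : -((dist x z) ^ 2 + (dist z y) ^ 2) / (4 * (1 / u))
          = -((dist x z) ^ 2 + (dist z y) ^ 2) * u / 4 := by field_simp
        rw [e]
        nlinarith [mul_le_mul_of_nonneg_right (hm z) (sub_nonneg.2 hu)]
      rw [integral_const_mul, h1, h2] at hle
      have e1 : (2 * π * (1 / u)) ^ (α / 2) = (2 * π * 1) ^ (α / 2) / u ^ (α / 2) := by
        rw [← Real.div_rpow (by positivity) (by positivity)]; congr 1; ring
      have e2 : -dist x y ^ 2 / (8 * (1 / u)) = -dist x y ^ 2 * u / 8 := by field_simp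
      rw [e1, e2] at hle
      have hp : 0 < (2 * π * 1) ^ (α / 2) := by positivity
      have e3 : Real.exp (-dist x y ^ 2 * u / 8) / u ^ (α / 2) ≤
          Real.exp (-M * (u - 1) / 4) * Real.exp (-dist x y ^ 2 / (8 * 1)) := by
        refine le_of_mul_le_mul_left ?_ hp
        calc _ = (2 * π * 1) ^ (α / 2) / u ^ (α / 2) * Real.exp (-dist x y ^ 2 * u / 8) := by ring
          _ ≤ _ := hle
          _ = _ := by ring
      have e4 := mul_le_mul_of_nonneg_left e3 (Real.exp_pos (M * u / 4)).le
      calc Real.exp (c * u) / u ^ (α / 2)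
          = Real.exp (M * u / 4) * (Real.exp (-dist x y ^ 2 * u / 8) / u ^ (α / 2)) := by
            rw [← mul_div_assoc, ← Real.exp_add]; congr 2; rw [hc]; ring
        _ ≤ _ := e4
        _ = K := by
            rw [← Real.exp_add, ← Real.exp_add, hK, hc]; congr 1; ring
    have hlim := tendsto_exp_mul_div_rpow_atTop (α / 2) c hcpos
    obtain ⟨u, hu1, hu2⟩ := ((hlim.eventually_gt_atTop K).and (eventually_ge_atTop 1)).exists
    exact absurd (hbound u hu2) (not_le.2 hu1)
  have htri := dist_triangle x m y
  have h0 : 0 ≤ dist x y := dist_nonneg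
  have hab : dist x m = dist m y := by
    have : (dist x m - dist m y) ^ 2 ≤ 0 := by nlinarith
    have := pow_eq_zero_iff (two_ne_zero) |>.1 (le_antisymm this (sq_nonneg _))
    linarith
  have hle : dist m y ≤ dist x y / 2 := by
    rw [hM, hab] at hMle
    apply le_of_sq_le_sq _ (by positivity)
    linarith
  refine ⟨m, ?_, ?_⟩ <;> linarith

lemma geodesic_of_midpoint {X : Type*} [MetricSpace X] [ProperSpace X]
    (hmid : ∀ x y : X, ∃ m : X, dist x m = dist x y / 2 ∧ dist m y = dist x y / 2)
    (x y : X) : ∃ γ : ℝ → X, γ 0 = x ∧ γ (dist x y) = y ∧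
        ∀ s ∈ Set.Icc (0 : ℝ) (dist x y), ∀ t ∈ Set.Icc (0 : ℝ) (dist x y),
          dist (γ s) (γ t) = |s - t| := by
  obtain ⟨S, hxyS, hmax⟩ := zorn_subset_nonempty
    {S : Set X | ∀ p ∈ S, ∀ q ∈ S, dist p q = |dist x p - dist x q|}
    (by
      intro c hc hchain hne
      refine ⟨⋃₀ c, ?_, fun s hs => subset_sUnion_of_mem hs⟩
      rintro p ⟨s, hs, hps⟩ q ⟨s', hs', hqs'⟩
      rcases hchain.total hs hs' with h | h
      · exact hc hs' p (h hps) q hqs'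
      · exact hc hs p hps q (h hqs'))
    {x, y} (by
      rintro p (rfl | rfl) q (rfl | rfl) <;> simp [dist_comm])
  have hS : ∀ p ∈ S, ∀ q ∈ S, dist p q = |dist x p - dist x q| := hmax.prop
  have hxS : x ∈ S := hxyS (by simp)
  have hyS : y ∈ S := hxyS (by simp)
  have hclosed : IsClosed S := by
    have hcl : ∀ p ∈ closure S, ∀ q ∈ closure S, dist p q = |dist x p - dist x q| := by
      have hC : IsClosed {w : X × X | dist w.1 w.2 = |dist x w.1 - dist x w.2|} :=
        isClosed_eq (by fun_prop) (by fun_prop)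
      have hsub : closure (S ×ˢ S) ⊆ {w : X × X | dist w.1 w.2 = |dist x w.1 - dist x w.2|} :=
        closure_minimal (fun w hw => hS _ hw.1 _ hw.2) hC
      intro p hp q hq
      rw [closure_prod_eq] at hsub
      exact hsub (show (p, q) ∈ _ from ⟨hp, hq⟩)
    have := hmax.le_of_ge (y := closure S) hcl subset_closure
    exact isClosed_of_closure_subset this
  have hsurj : ∀ t ∈ Set.Icc (0 : ℝ) (dist x y), ∃ p ∈ S, dist x p = t := by
    rintro t ⟨ht0, htD⟩
    by_contra hno
    push Not at hno
    -- `p` and `q` are the points of `S` at the two ends of the gap around `t`.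
    obtain ⟨p, hp, hpmax⟩ := ((isCompact_closedBall x t).inter_left hclosed).exists_isMaxOn
      (f := fun z => dist x z) ⟨x, hxS, mem_closedBall_self ht0⟩ (by fun_prop)
    have hcl2 : IsClosed {z : X | t ≤ dist x z} := isClosed_le (by fun_prop) (by fun_prop)
    obtain ⟨q, hq, hqmin⟩ :=
      ((isCompact_closedBall x (dist x y)).inter_left (hclosed.inter hcl2)).exists_isMinOn
      (f := fun z => dist x z) ⟨y, ⟨hyS, htD⟩, by simp [dist_comm]⟩ (by fun_prop)
    have hpt : dist x p < t := by
      have := hp.2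
      rw [mem_closedBall, dist_comm] at this
      exact lt_of_le_of_ne this (hno p hp.1)
    have hqt : t < dist x q := lt_of_le_of_ne hq.1.2 (hno q hq.1.1).symm
    have hqD : dist x q ≤ dist x y := by
      have := hq.2
      rwa [mem_closedBall, dist_comm] at this
    have hgap : ∀ r ∈ S, dist x r ≤ dist x p ∨ dist x q ≤ dist x r := by
      intro r hr
      rcases le_total (dist x r) t with h | h
      · left
        exact hpmax ⟨hr, by rwa [mem_closedBall, dist_comm]⟩
      · right
        rcases le_total (dist x r) (dist x y) with h' | h'
        · exact hqmin ⟨⟨hr, h⟩, by rwa [mem_closedBall, dist_comm]⟩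
        · exact hqD.trans h'
    obtain ⟨m, hm1, hm2⟩ := hmid p q
    have hpq : dist p q = dist x q - dist x p := by
      rw [hS p hp.1 q hq.1.1, abs_of_neg (by linarith)]; ring
    -- Distances from `m` to `S` are forced by the triangle inequality through `p` and `q`.
    have hmr : ∀ r ∈ S, dist m r = |(dist x p + dist x q) / 2 - dist x r| := by
      intro r hr
      have e1 := hS r hr p hp.1
      have e2 := hS r hr q hq.1.1
      have t1 := dist_triangle r p m
      have t2 := dist_triangle r m q
      have t3 := dist_triangle r q m
      have t4 := dist_triangle p m r
      rw [dist_comm q m] at t3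
      rw [dist_comm m r] at t4 ⊢
      rw [dist_comm p r] at t4
      rcases hgap r hr with h | h
      · rw [abs_of_nonpos (by linarith)] at e1 e2
        rw [abs_of_nonneg (by linarith)]
        linarith
      · rw [abs_of_nonneg (by linarith)] at e1 e2
        rw [abs_of_nonpos (by linarith)]
        linarith
    have hxm : dist x m = (dist x p + dist x q) / 2 := by
      rw [dist_comm, hmr x hxS, dist_self, sub_zero, abs_of_nonneg (by positivity)]
    have hins : ∀ a ∈ insert m S, ∀ b ∈ insert m S, dist a b = |dist x a - dist x b| := by
      rintro a (rfl | ha) b (rfl | hb)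
      · simp
      · rw [hmr b hb, hxm]
      · rw [dist_comm, hmr a ha, hxm, abs_sub_comm]
      · exact hS a ha b hb
    have hmS : m ∈ S :=
      hmax.le_of_ge (y := insert m S) hins (subset_insert _ _) (mem_insert _ _)
    rcases hgap m hmS with h | h <;> linarith
  have : Nonempty X := ⟨x⟩
  choose! γ hγS hγd using hsurj
  refine ⟨γ, ?_, ?_, fun s hs t ht => ?_⟩
  · exact (dist_eq_zero.1 (hγd 0 ⟨le_rfl, dist_nonneg⟩)).symm
  · have h : dist x y ∈ Set.Icc (0 : ℝ) (dist x y) := ⟨dist_nonneg, le_rfl⟩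
    rw [← dist_eq_zero, hS _ (hγS _ h) _ hyS, hγd _ h]; simp
  · rw [hS _ (hγS _ hs) _ (hγS _ ht), hγd _ hs, hγd _ ht]

/-- **Existence of midpoints and geodesics.** If a complete metric space `(X, dist)` carries
a Borel measure `μ` satisfying the Gaussian Chapman–Kolmogorov identity for some `α > 0`,
then any two points of `X` admit a midpoint, and `X` is a geodesic space: any two points
are joined by a minimizing geodesic. -/
theorem euclidean_heat_kernel_geodesic
    {X : Type*} [MetricSpace X] [CompleteSpace X]
    [MeasurableSpace X] [BorelSpace X]
    (μ : Measure X)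
    (α : ℝ) (hα : 0 < α)
    (hCK : ∀ (x y : X) (s t : ℝ), 0 < s → 0 < t →
      (∫ z, ((4 * π * t) ^ (-(α / 2)) * Real.exp (-(dist x z) ^ 2 / (4 * t))) *
        ((4 * π * s) ^ (-(α / 2)) * Real.exp (-(dist z y) ^ 2 / (4 * s))) ∂μ)
      = (4 * π * (t + s)) ^ (-(α / 2)) *
          Real.exp (-(dist x y) ^ 2 / (4 * (t + s)))) :
    (∀ x y : X, ∃ m : X,
        dist x m = dist x y / 2 ∧ dist m y = dist x y / 2) ∧
    (∀ x y : X, ∃ γ : ℝ → X, γ 0 = x ∧ γ (dist x y) = y ∧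
        ∀ s ∈ Set.Icc (0 : ℝ) (dist x y), ∀ t ∈ Set.Icc (0 : ℝ) (dist x y),
          dist (γ s) (γ t) = |s - t|) := by
  have hG := gaussian_integral μ α hCK
  have := proper_of_gaussian μ α hα hG
  have hmid := midpoint_of_gaussian μ α hG
  exact ⟨hmid, geodesic_of_midpoint hmid⟩
end

section
/- Let α > 0 and let (X,d,μ) be a metric measure space with an α-dimensional volume. Let h : X → ℝ be strongly harmonic on X. If h has linear growth, i.e. there exist C > 0 and o ∈ X with |h(y)| ≤ C(1 + d(o,y)) for all y ∈ X, then h is Lipschitz; quantitatively, if M > 0 and r_o > 0 are such that |h(z)| ≤ M·d(o,z) for all z ∈ X outside the ball B_{r_o}(o), then |h(x) − h(y)| ≤ α M d(x,y) for all x,y ∈ X. -/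
/-!
The quantitative bound comes from a Harnack-type comparison of balls with different radii.
Put `D = d(x, y)` and let `R` be large. On `B_{R+D}(y)`, which contains `B_R(x)`, the growth
bound makes `u = h + M (R + D + d(o, y))` nonnegative, so the integral of `u` over `B_R(x)` is at
most its integral over `B_{R+D}(y)`. Since `u` also has the mean value property, dividing by the
volumes gives `R^α u(x) ≤ (R + D)^α u(y)`, that is
`h(x) - h(y) ≤ ((1 + D/R)^α - 1) (h(y) + M (R + D + d(o, y)))`.
The right side tends to `α M D` as `R → ∞`. Comparing nested balls, rather than
estimating the symmetric difference of two balls of equal radius, is what avoids a factor `2`.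

The Lipschitz property follows from the quantitative bound, since linear growth with constant `C`
gives `|h(z)| ≤ 2 C d(o, z)` outside `B_1(o)`.
-/

open MeasureTheory Metric Real Set Filter
open scoped ENNReal NNReal Topology

/-- The right side of the Harnack comparison, written in terms of `t = 1 / R`, tends to
`α M D`. -/
lemma tendsto_harnack_bound (α D a M : ℝ) :
    Tendsto (fun t : ℝ => ((1 + D * t) ^ α - 1) * (a + M * t⁻¹)) (𝓝[>] 0)
      (𝓝 (α * M * D)) := by
  have hd : HasDerivAt (fun t : ℝ => (1 + D * t) ^ α) (D * α) 0 := by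
    have h1 : HasDerivAt (fun t : ℝ => 1 + D * t) D 0 := by
      simpa using ((hasDerivAt_id (0 : ℝ)).const_mul D).const_add 1
    have h2 := h1.rpow_const (p := α) (Or.inl (by simp))
    simpa using h2
  have hs : Tendsto (fun t : ℝ => t⁻¹ * ((1 + D * t) ^ α - 1)) (𝓝[>] 0) (𝓝 (D * α)) := by
    have := hd.tendsto_slope_zero_right
    simpa using this
  have hc : Tendsto (fun t : ℝ => (1 + D * t) ^ α - 1) (𝓝[>] 0) (𝓝 0) := by
    have h3 : Tendsto (fun t : ℝ => (1 + D * t) ^ α - 1) (𝓝 0) (𝓝 0) := by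
      have := hd.continuousAt.tendsto.sub_const 1
      simpa using this
    exact h3.mono_left nhdsWithin_le_nhds
  have := (hc.mul_const a).add (hs.const_mul M)
  convert this using 2 <;> ring

/-- Harnack-type comparison for a function with the mean value property that is bounded below
by `-c` on the larger of two nested balls. -/
lemma harnack_comparison
    {X : Type*} [MetricSpace X] [MeasurableSpace X] [BorelSpace X]
    {μ : Measure X} {α k : ℝ} (hk : 0 < k)
    (hvol : ∀ (x : X) (r : ℝ), 0 < r → μ (Metric.ball x r) = ENNReal.ofReal (k * r ^ α))
    {h : X → ℝ}
    (hint : ∀ (x : X) (r : ℝ), 0 < r → IntegrableOn h (Metric.ball x r) μ)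
    (hharm : ∀ (x : X) (r : ℝ), 0 < r →
      h x = (∫ y in Metric.ball x r, h y ∂μ) / (μ (Metric.ball x r)).toReal)
    {x y : X} {R c : ℝ} (hR : 0 < R)
    (hpos : ∀ z ∈ Metric.ball y (R + dist x y), 0 ≤ h z + c) :
    h x - h y ≤ ((1 + dist x y * R⁻¹) ^ α - 1) * (h y + c) := by
  have hfin (p : X) {r : ℝ} (hr : 0 < r) : μ (Metric.ball p r) ≠ ∞ := by
    rw [hvol p r hr]; exact ENNReal.ofReal_ne_top
  have hconst (p : X) {r : ℝ} (hr : 0 < r) :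
      IntegrableOn (fun _ => c) (Metric.ball p r) μ :=
    integrableOn_const (hfin p hr)
  have hmean (p : X) {r : ℝ} (hr : 0 < r) :
      ∫ z in Metric.ball p r, (h z + c) ∂μ = k * r ^ α * (h p + c) := by
    have hV : 0 < k * r ^ α := mul_pos hk (rpow_pos_of_pos hr α)
    have hm : (μ (Metric.ball p r)).toReal = k * r ^ α := by
      rw [hvol p r hr, ENNReal.toReal_ofReal hV.le]
    have hp := hharm p r hr
    rw [hm, eq_div_iff hV.ne'] at hp
    rw [integral_add (hint p r hr) (hconst p hr), setIntegral_const, Measure.real, hm, ← hp,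
      smul_eq_mul]
    ring
  have hD : 0 ≤ dist x y := dist_nonneg
  have hRD : 0 < R + dist x y := by linarith
  have hle : ∫ z in Metric.ball x R, (h z + c) ∂μ
      ≤ ∫ z in Metric.ball y (R + dist x y), (h z + c) ∂μ := by
    apply setIntegral_mono_set ((hint y _ hRD).add (hconst y hRD))
    · exact (ae_restrict_mem measurableSet_ball).mono hpos
    · exact (Metric.ball_subset_ball' le_rfl).eventuallyLE
  rw [hmean x hR, hmean y hRD, mul_assoc, mul_assoc] at hle
  have hle' := le_of_mul_le_mul_left hle hk
  have hRα : 0 < R ^ α := rpow_pos_of_pos hR α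
  have hsplit : (R + dist x y) ^ α = R ^ α * (1 + dist x y * R⁻¹) ^ α := by
    rw [← mul_rpow hR.le (by positivity)]
    congr 1
    field_simp
  rw [hsplit, mul_assoc] at hle'
  have := le_of_mul_le_mul_left hle' hRα
  linarith

/-- **Strongly harmonic functions of linear growth are Lipschitz** on a metric measure
space with an `α`-dimensional volume (`μ(B_r(x)) = ω_α r^α`). Quantitatively, if
`|h(z)| ≤ M·d(o,z)` outside `B_{r_o}(o)`, then `|h(x) − h(y)| ≤ α M d(x,y)`. -/
theorem strongly_harmonic_linear_growth_lipschitz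
    {X : Type*} [MetricSpace X] [MeasurableSpace X] [BorelSpace X]
    (μ : Measure X)
    (α : ℝ) (hα : 0 < α)
    (hvol : ∀ (x : X) (r : ℝ), 0 < r →
      μ (Metric.ball x r)
        = ENNReal.ofReal (π ^ (α / 2) / Real.Gamma (α / 2 + 1) * r ^ α))
    (h : X → ℝ)
    (hint : ∀ (x : X) (r : ℝ), 0 < r → IntegrableOn h (Metric.ball x r) μ)
    (hharm : ∀ (x : X) (r : ℝ), 0 < r →
      h x = (∫ y in Metric.ball x r, h y ∂μ) / (μ (Metric.ball x r)).toReal)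
    (o : X)
    (hgrowth : ∃ C : ℝ, 0 < C ∧ ∀ y : X, |h y| ≤ C * (1 + dist o y)) :
    (∃ K : ℝ≥0, LipschitzWith K h) ∧
    ∀ M : ℝ, 0 < M → ∀ r_o : ℝ, 0 < r_o →
      (∀ z : X, z ∉ Metric.ball o r_o → |h z| ≤ M * dist o z) →
      ∀ x y : X, |h x - h y| ≤ α * M * dist x y := by
  have hk : 0 < π ^ (α / 2) / Real.Gamma (α / 2 + 1) :=
    div_pos (rpow_pos_of_pos pi_pos _) (Real.Gamma_pos_of_pos (by positivity))
  obtain ⟨C, hC, hgr⟩ := hgrowth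
  have quant : ∀ M : ℝ, 0 < M → ∀ r_o : ℝ, 0 < r_o →
      (∀ z : X, z ∉ Metric.ball o r_o → |h z| ≤ M * dist o z) →
      ∀ x y : X, |h x - h y| ≤ α * M * dist x y := by
    intro M hM r_o hr_o hout
    have key : ∀ x y : X, h x - h y ≤ α * M * dist x y := by
      intro x y
      refine ge_of_tendsto
        (tendsto_harnack_bound α (dist x y) (h y + M * (dist x y + dist o y)) M) ?_
      -- For `R = t⁻¹` this large, `M R` also dominates `|h|` on `B_{r_o}(o)`.
      filter_upwards [self_mem_nhdsWithin,
        tendsto_inv_nhdsGT_zero.eventually_ge_atTop (C * (1 + r_o) / M)] with t ht htM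
      have htM' : C * (1 + r_o) ≤ M * t⁻¹ := by
        rw [div_le_iff₀ hM] at htM; linarith
      have := harnack_comparison hk hvol hint hharm (x := x) (y := y) (R := t⁻¹)
        (c := M * (t⁻¹ + dist x y + dist o y)) (inv_pos.2 ht) ?_
      · rw [inv_inv] at this
        refine this.trans_eq ?_
        ring
      · intro z hz
        have hb : |h z| ≤ M * (t⁻¹ + dist x y + dist o y) := by
          by_cases hzo : z ∈ Metric.ball o r_o
          · rw [Metric.mem_ball, dist_comm] at hzo
            calc |h z| ≤ C * (1 + dist o z) := hgr z
              _ ≤ C * (1 + r_o) := by gcongr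
              _ ≤ M * t⁻¹ := htM'
              _ ≤ M * (t⁻¹ + dist x y + dist o y) := by
                gcongr
                linarith [dist_nonneg (x := x) (y := y), dist_nonneg (x := o) (y := y)]
          · refine (hout z hzo).trans ?_
            gcongr
            rw [Metric.mem_ball, dist_comm] at hz
            linarith [dist_triangle o y z]
        linarith [(abs_le.1 hb).1]
    intro x y
    refine abs_le.2 ⟨?_, key x y⟩
    have := key y x
    rw [dist_comm] at this
    linarith
  refine ⟨⟨(α * (2 * C)).toNNReal, ?_⟩, quant⟩
  refine LipschitzWith.of_dist_le_mul fun x y => ?_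
  rw [Real.dist_eq, Real.coe_toNNReal _ (by positivity)]
  refine quant (2 * C) (by positivity) 1 one_pos (fun z hz => (hgr z).trans ?_) x y
  rw [Metric.mem_ball, dist_comm, not_lt] at hz
  nlinarith
end

section
/- Let (X,d) be a nonempty proper metric space (closed balls are compact) equipped with a regular Borel measure μ such that 0 < μ(B) < +∞ for every open metric ball B ⊂ X, and suppose μ is doubling: there exists C_D > 0 with μ(B_{2r}(x)) ≤ C_D μ(B_r(x)) for every x ∈ X and r > 0. Then every nonnegative strongly harmonic function on X is constant. -/
/-!
Doubling gives a Harnack inequality which is global and scale-free: for any two points `x, y` and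
any `r > dist x y`, the inclusions `B_r(x) ⊆ B_{2r}(y) ⊆ B_{4r}(x)` and the mean value property
yield `h x ≤ C_D² * h y` (`harnack_of_doubling`). It applies equally to
`h - inf h`, which is again nonnegative and strongly harmonic. Since the constant does not depend
on `x` and `y`, taking the infimum over `y` on the right-hand side gives `h x ≤ inf h`.
-/

open MeasureTheory Metric Real Set Filter
open scoped ENNReal NNReal Topology

/-- Global Harnack inequality for nonnegative functions with the mean value property. -/
lemma harnack_of_doubling {X : Type*} [MetricSpace X] [MeasurableSpace X] [BorelSpace X]
    (μ : Measure X)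
    (hball : ∀ (x : X) (r : ℝ), 0 < r →
      0 < μ (Metric.ball x r) ∧ μ (Metric.ball x r) < ⊤)
    (C_D : ℝ) (hCD : 0 < C_D)
    (hdouble : ∀ (x : X) (r : ℝ), 0 < r →
      μ (Metric.ball x (2 * r)) ≤ ENNReal.ofReal C_D * μ (Metric.ball x r))
    (h : X → ℝ) (hnonneg : ∀ x, 0 ≤ h x)
    (hint : ∀ (x : X) (r : ℝ), 0 < r → IntegrableOn h (Metric.ball x r) μ)
    (hharm : ∀ (x : X) (r : ℝ), 0 < r →
      h x = (∫ y in Metric.ball x r, h y ∂μ) / (μ (Metric.ball x r)).toReal) (x y : X) :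
    h x ≤ C_D ^ 2 * h y := by
  have pos : ∀ (z : X) (r : ℝ), 0 < r → 0 < (μ (ball z r)).toReal := fun z r hr =>
    ENNReal.toReal_pos (hball z r hr).1.ne' (hball z r hr).2.ne
  have dbl : ∀ (z : X) (r : ℝ), 0 < r →
      (μ (ball z (2 * r))).toReal ≤ C_D * (μ (ball z r)).toReal := by
    intro z r hr
    have := ENNReal.toReal_mono
      (ENNReal.mul_ne_top ENNReal.ofReal_ne_top (hball z r hr).2.ne) (hdouble z r hr)
    rwa [ENNReal.toReal_mul, ENNReal.toReal_ofReal hCD.le] at this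
  have mean : ∀ (z : X) (r : ℝ), 0 < r →
      h z * (μ (ball z r)).toReal = ∫ w in ball z r, h w ∂μ := by
    intro z r hr
    have := hharm z r hr
    rwa [eq_div_iff (pos z r hr).ne'] at this
  obtain ⟨r, hr, hd⟩ : ∃ r : ℝ, 0 < r ∧ dist x y < r :=
    ⟨dist x y + 1, by positivity, by linarith⟩
  have hr2 : 0 < 2 * r := by positivity
  have sub1 : ball x r ⊆ ball y (2 * r) := ball_subset_ball' (by linarith)
  have sub2 : ball y (2 * r) ⊆ ball x (2 * (2 * r)) :=
    ball_subset_ball' (by rw [dist_comm]; linarith)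
  have h1 : h x * (μ (ball x r)).toReal ≤ h y * (μ (ball y (2 * r))).toReal := by
    rw [mean x r hr, mean y _ hr2]
    exact setIntegral_mono_set (hint y _ hr2) (ae_of_all _ hnonneg) (ae_of_all _ sub1)
  have h2 : (μ (ball y (2 * r))).toReal ≤ C_D ^ 2 * (μ (ball x r)).toReal := calc
    _ ≤ (μ (ball x (2 * (2 * r)))).toReal :=
      ENNReal.toReal_mono (hball x _ (by positivity)).2.ne (measure_mono sub2)
    _ ≤ C_D * (μ (ball x (2 * r))).toReal := dbl x _ hr2
    _ ≤ C_D * (C_D * (μ (ball x r)).toReal) := by gcongr; exact dbl x r hr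
    _ = _ := by ring
  refine le_of_mul_le_mul_right ?_ (pos x r hr)
  calc _ ≤ _ := h1
    _ ≤ h y * (C_D ^ 2 * (μ (ball x r)).toReal) := mul_le_mul_of_nonneg_left h2 (hnonneg y)
    _ = _ := by ring

/-- **Liouville theorem for strongly harmonic functions.** On a nonempty proper metric
space with a regular Borel measure which is positive and finite on balls and doubling,
every nonnegative strongly harmonic function is constant. -/
theorem nonneg_strongly_harmonic_constant
    {X : Type*} [MetricSpace X] [ProperSpace X] [Nonempty X]
    [MeasurableSpace X] [BorelSpace X]
    (μ : Measure X) [μ.Regular]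
    (hball : ∀ (x : X) (r : ℝ), 0 < r →
      0 < μ (Metric.ball x r) ∧ μ (Metric.ball x r) < ⊤)
    (C_D : ℝ) (hCD : 0 < C_D)
    (hdouble : ∀ (x : X) (r : ℝ), 0 < r →
      μ (Metric.ball x (2 * r)) ≤ ENNReal.ofReal C_D * μ (Metric.ball x r))
    (h : X → ℝ) (hnonneg : ∀ x, 0 ≤ h x)
    (hint : ∀ (x : X) (r : ℝ), 0 < r → IntegrableOn h (Metric.ball x r) μ)
    (hharm : ∀ (x : X) (r : ℝ), 0 < r →
      h x = (∫ y in Metric.ball x r, h y ∂μ) / (μ (Metric.ball x r)).toReal) :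
    ∀ x y : X, h x = h y := by
  have hbdd : BddBelow (range h) := ⟨0, by rintro _ ⟨x, rfl⟩; exact hnonneg x⟩
  have hconst : ∀ (x : X) (r : ℝ), 0 < r → IntegrableOn (fun _ => ⨅ z, h z) (ball x r) μ :=
    fun x r hr => integrableOn_const (hball x r hr).2.ne
  have harnack : ∀ x y, h x - (⨅ z, h z) ≤ C_D ^ 2 * (h y - ⨅ z, h z) := by
    refine harnack_of_doubling μ hball C_D hCD hdouble (fun x => h x - ⨅ z, h z)
      (fun x => sub_nonneg.2 (ciInf_le hbdd x))
      (fun x r hr => (hint x r hr).sub (hconst x r hr)) (fun x r hr => ?_)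
    have hpos : 0 < (μ (ball x r)).toReal :=
      ENNReal.toReal_pos (hball x r hr).1.ne' (hball x r hr).2.ne
    rw [integral_sub (hint x r hr) (hconst x r hr), setIntegral_const, smul_eq_mul,
      Measure.real, sub_div, ← hharm x r hr, mul_div_cancel_left₀ _ hpos.ne']
  have key : ∀ x, h x = ⨅ z, h z := by
    intro x
    refine le_antisymm ?_ (ciInf_le hbdd x)
    have hC : 0 < C_D ^ 2 := by positivity
    -- The Harnack bound, solved for `h y`, is a lower bound valid for every `y`.
    have hle : (h x - ⨅ z, h z) / C_D ^ 2 + (⨅ z, h z) ≤ ⨅ z, h z := by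
      refine le_ciInf fun y => ?_
      have := (div_le_iff₀' hC).2 (harnack x y)
      linarith
    have h0 : (h x - ⨅ z, h z) / C_D ^ 2 ≤ 0 := by linarith
    have := (div_le_iff₀ hC).1 h0
    linarith
  intro x y
  rw [key x, key y]
end

section
/- Let (X,δ) be a length metric space whose distance satisfies δ(x,y) ≤ π for all x,y ∈ X, and suppose that the function d defined by d(x,y) := 2 sin(δ(x,y)/2) is a distance on X. Then the length distance associated with d coincides with δ; that is, for all x,y ∈ X, the infimum of the d-lengths of continuous rectifiable paths joining x to y equals δ(x,y). -/
/-!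
For `u = dist a b` the chord `2 sin (u/2)` is at most `u`, so chord lengths are at most
`dist`-lengths, and the infimum over paths is at most `dist x y` because `dist` is a length
metric. Conversely the chord is asymptotic to `u` as `u → 0`: it is at least `(1 - η) u` as soon
as `u ≤ η ≤ 1` (`chord_lower_bound`). A continuous path on `[0,1]` is uniformly continuous, so
a fine enough regular partition has all its steps of size at most `η`; its chord sum is then at
least `(1 - η)` times its `dist` sum, hence at least `(1 - η) * dist x y`. Let `η → 0`.
-/

open MeasureTheory Metric Real Set Filter
open scoped ENNReal NNReal Topology

/-- The length (in `ℝ≥0∞`) of a path `c : [0,1] → X` computed with respect to a distance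
function `ρ : X → X → ℝ`: the supremum over all partitions `0 = t₀ ≤ … ≤ tₙ = 1` of the
sums `∑ ρ(c(tᵢ), c(tᵢ₊₁))`. -/
noncomputable def lengthWith {X : Type*} (ρ : X → X → ℝ) (c : ℝ → X) : ℝ≥0∞ :=
  sSup { L : ℝ≥0∞ | ∃ (n : ℕ) (t : Fin (n + 1) → ℝ), Monotone t ∧
    t 0 = 0 ∧ t (Fin.last n) = 1 ∧
    L = ∑ i : Fin n, ENNReal.ofReal (ρ (c (t i.castSucc)) (c (t i.succ))) }

/-- The length distance (in `ℝ≥0∞`) associated with a distance function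
`ρ : X → X → ℝ` on a topological space `X`: the infimum of `ρ`-lengths of continuous
paths `c : [0,1] → X` joining `x` to `y`. -/
noncomputable def lengthDistWith {X : Type*} [TopologicalSpace X] (ρ : X → X → ℝ)
    (x y : X) : ℝ≥0∞ :=
  ⨅ (c : ℝ → X) (_ : ContinuousOn c (Set.Icc 0 1)) (_ : c 0 = x) (_ : c 1 = y),
    lengthWith ρ c

lemma chord_lower_bound {u η : ℝ} (hu : 0 ≤ u) (huη : u ≤ η) (hη : η ≤ 1) :
    (1 - η) * u ≤ 2 * Real.sin (u / 2) := by
  rcases hu.eq_or_lt with rfl | hpos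
  · simp
  have h := Real.sin_gt_sub_cube (x := u / 2) (by linarith)
  have h2 : u * u ≤ η := by nlinarith
  nlinarith [mul_le_mul_of_nonneg_left h2 hu]

/-- Uniform continuity of a path on `[0,1]`, in terms of the points `i / n`. -/
lemma exists_fine_regular_partition {X : Type*} [MetricSpace X] {c : ℝ → X}
    (hc : ContinuousOn c (Set.Icc 0 1)) {η : ℝ} (hη : 0 < η) :
    ∃ n : ℕ, 0 < n ∧ ∀ i < n,
      dist (c ((i : ℝ) / n)) (c (((i + 1 : ℕ) : ℝ) / n)) ≤ η := by
  have huc := isCompact_Icc.uniformContinuousOn_of_continuous hc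
  obtain ⟨r, hr, h⟩ := Metric.uniformContinuousOn_iff.1 huc η hη
  obtain ⟨m, hm⟩ := exists_nat_one_div_lt hr
  refine ⟨m + 1, m.succ_pos, fun i hi => ?_⟩
  have hm0 : (0 : ℝ) < ((m + 1 : ℕ) : ℝ) := by positivity
  have hi' : ((i + 1 : ℕ) : ℝ) ≤ ((m + 1 : ℕ) : ℝ) := by exact_mod_cast hi
  have hi'' : (i : ℝ) ≤ ((m + 1 : ℕ) : ℝ) := by exact_mod_cast hi.le
  refine (h _ ⟨by positivity, (div_le_one hm0).2 hi''⟩ _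
    ⟨by positivity, (div_le_one hm0).2 hi'⟩ ?_).le
  rw [dist_comm, Real.dist_eq, ← sub_div]
  push_cast
  rw [add_sub_cancel_left, abs_of_pos (by positivity)]
  exact hm

lemma ofReal_mul_dist_le_chord_length {X : Type*} [MetricSpace X] {c : ℝ → X}
    (hc : ContinuousOn c (Set.Icc 0 1)) {η : ℝ} (hη : 0 < η) (hη1 : η ≤ 1) :
    ENNReal.ofReal ((1 - η) * dist (c 0) (c 1)) ≤
      lengthWith (fun a b => 2 * Real.sin (dist a b / 2)) c := by
  obtain ⟨n, hn, h⟩ := exists_fine_regular_partition hc hη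
  have hn0 : (0 : ℝ) < n := by exact_mod_cast hn
  have hchord : ∀ i < n, (1 - η) * dist (c ((i : ℝ) / n)) (c (((i + 1 : ℕ) : ℝ) / n)) ≤
      2 * Real.sin (dist (c ((i : ℝ) / n)) (c (((i + 1 : ℕ) : ℝ) / n)) / 2) :=
    fun i hi => chord_lower_bound dist_nonneg (h i hi) hη1
  have hsum : (1 - η) * dist (c 0) (c 1) ≤ ∑ i ∈ Finset.range n,
      2 * Real.sin (dist (c ((i : ℝ) / n)) (c (((i + 1 : ℕ) : ℝ) / n)) / 2) := by
    have htri := dist_le_range_sum_dist (fun i : ℕ => c ((i : ℝ) / n)) n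
    simp only [Nat.cast_zero, zero_div, div_self hn0.ne'] at htri
    refine (mul_le_mul_of_nonneg_left htri (by linarith)).trans ?_
    rw [Finset.mul_sum]
    exact Finset.sum_le_sum fun i hi => hchord i (Finset.mem_range.1 hi)
  refine (ENNReal.ofReal_le_ofReal hsum).trans (le_sSup ?_)
  refine ⟨n, fun i => ((i : ℕ) : ℝ) / n, fun i j hij => ?_, by simp, ?_, ?_⟩
  · have hij' : ((i : ℕ) : ℝ) ≤ ((j : ℕ) : ℝ) := by exact_mod_cast hij
    exact div_le_div_of_nonneg_right hij' hn0.le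
  · simp [hn0.ne']
  · rw [ENNReal.ofReal_sum_of_nonneg, ← Fin.sum_univ_eq_sum_range
      (fun i : ℕ => ENNReal.ofReal
        (2 * Real.sin (dist (c ((i : ℝ) / n)) (c (((i + 1 : ℕ) : ℝ) / n)) / 2)))]
    · rfl
    · intro i hi
      exact (mul_nonneg (by linarith) dist_nonneg).trans (hchord i (Finset.mem_range.1 hi))

lemma ofReal_dist_le_chord_length {X : Type*} [MetricSpace X] {c : ℝ → X}
    (hc : ContinuousOn c (Set.Icc 0 1)) :
    ENNReal.ofReal (dist (c 0) (c 1)) ≤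
      lengthWith (fun a b => 2 * Real.sin (dist a b / 2)) c := by
  have hlim : Tendsto (fun η : ℝ => ENNReal.ofReal ((1 - η) * dist (c 0) (c 1)))
      (𝓝[>] 0) (𝓝 (ENNReal.ofReal (dist (c 0) (c 1)))) := by
    have hcont : Continuous fun η : ℝ => ENNReal.ofReal ((1 - η) * dist (c 0) (c 1)) :=
      ENNReal.continuous_ofReal.comp (by fun_prop)
    simpa using (hcont.tendsto 0).mono_left nhdsWithin_le_nhds
  refine le_of_tendsto hlim ?_
  filter_upwards [Ioc_mem_nhdsGT (zero_lt_one' ℝ)] with η hη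
  exact ofReal_mul_dist_le_chord_length hc hη.1 hη.2

lemma lengthWith_mono {X : Type*} {ρ σ : X → X → ℝ} (h : ∀ a b, ρ a b ≤ σ a b) (c : ℝ → X) :
    lengthWith ρ c ≤ lengthWith σ c := by
  refine sSup_le ?_
  rintro _ ⟨n, t, hmono, h0, h1, rfl⟩
  exact (Finset.sum_le_sum fun i _ => ENNReal.ofReal_le_ofReal (h _ _)).trans
    (le_sSup ⟨n, t, hmono, h0, h1, rfl⟩)

/-- **Lemma on chord distances.** Let `(X, δ)` be a length metric space with `δ ≤ π`, and
suppose `d := 2 sin(δ/2)` is a distance on `X` (i.e. it satisfies the triangle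
inequality). Then the length distance associated with `d` coincides with `δ`. -/
theorem length_distance_of_sine_chord
    {X : Type*} [MetricSpace X]
    (hπ : ∀ x y : X, dist x y ≤ π)
    (htri : ∀ x y z : X,
      2 * Real.sin (dist x z / 2)
        ≤ 2 * Real.sin (dist x y / 2) + 2 * Real.sin (dist y z / 2))
    (hlength : ∀ x y : X, lengthDistWith dist x y = ENNReal.ofReal (dist x y)) :
    ∀ x y : X,
      lengthDistWith (fun a b => 2 * Real.sin (dist a b / 2)) x y
        = ENNReal.ofReal (dist x y) := by
  intro x y
  refine le_antisymm ?_ ?_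
  · rw [← hlength x y]
    unfold lengthDistWith
    gcongr with c _ _ _
    refine lengthWith_mono (fun a b => ?_) c
    have := Real.sin_le (x := dist a b / 2) (by positivity)
    linarith
  · refine le_iInf fun c => le_iInf fun hc => le_iInf fun h0 => le_iInf fun h1 => ?_
    subst h0 h1
    exact ofReal_dist_le_chord_length hc
end

section
/- Let n ≥ 1 be an integer and γ > 1. There exist constants c(n,γ) > 0 and C(n,γ) > 0, depending only on n and γ, with the following property. Let T > 0, let (X,d) be a complete metric space with a Borel measure μ, and let p : X×X×(0,∞) → ℝ be measurable, symmetric in its first two arguments, satisfying the Chapman–Kolmogorov identity ∫_X p(x,z,t) p(z,y,s) dμ(z) = p(x,y,t+s) for all x,y ∈ X and s,t > 0, the sub-Markov property ∫_X p(x,y,t) dμ(y) ≤ 1 for all x ∈ X and t > 0, and the two-sided bounds γ^{−1}(4πt)^{−n/2} exp(−γ d(x,y)²/(4t)) ≤ p(x,y,t) ≤ γ(4πt)^{−n/2} exp(−d(x,y)²/(4γt)) for all x,y ∈ X and t ∈ (0,T]. Then c(n,γ)·r^n ≤ μ(B_r(x)) ≤ C(n,γ)·r^n for every x ∈ X and every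 0 < r ≤ √T. -/
/-!
Write `A(t) = (4πt)^(-n/2)`.

Upper bound: at time `t = r²` the kernel `p(x, ·, t)` is at least `γ⁻¹ A(r²) exp(-γ/4)` on
`B_r(x)`, while its integral is at most one.

Lower bound: by Chapman–Kolmogorov and symmetry `p(x,x,2t) = ∫ p(x,z,t)² dμ(z)`. On `B_r(x)` the
integrand is at most `γ² A(t)²`; off the ball it is at most `γ A(t) exp(-r²/(4γt)) p(x,z,t)`,
whose integral is at most `γ A(t) exp(-r²/(4γt))` by the sub-Markov property. Taking `t = l r²`
with `l` small depending on `n` and `γ`, the second contribution is at most half of the lower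
bound `γ⁻¹ A(2t) = γ⁻¹ 2^(-n/2) A(t)` for `p(x,x,2t)`, so the ball carries the other half.
-/

open MeasureTheory Metric Real Set Filter
open scoped ENNReal NNReal Topology

/-- Scaling of the Gaussian prefactor at the time `k * r ^ 2`. -/
lemma prefactor_scaling (n : ℕ) {k r : ℝ} (hk : 0 < k) (hr : 0 < r) :
    (4 * π * (k * r ^ 2)) ^ (-(n : ℝ) / 2) = (4 * π * k) ^ (-(n : ℝ) / 2) * (r ^ n)⁻¹ := by
  have hpi := Real.pi_pos
  rw [← mul_assoc, Real.mul_rpow (by positivity) (by positivity), ← Real.rpow_natCast r 2,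
    ← Real.rpow_mul hr.le, ← Real.rpow_natCast r n, ← Real.rpow_neg hr.le]
  congr 2
  push_cast
  ring

/-- If a nonnegative function `f ≤ M` of mass at most one satisfies `f ≤ D` off a set `B`, then
`∫ f² ≤ D + M² μ(B)`. -/
lemma ofReal_integral_sq_le {X : Type*} [MeasurableSpace X] (μ : Measure X) {f : X → ℝ}
    (hf : Measurable f) (hf0 : ∀ z, 0 ≤ f z) (h1 : ∫⁻ z, ENNReal.ofReal (f z) ∂μ ≤ 1)
    {B : Set X} (hB : MeasurableSet B) {M D : ℝ} (hD : 0 ≤ D)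
    (hM : ∀ z, f z ≤ M) (hfD : ∀ z, z ∉ B → f z ≤ D) :
    ENNReal.ofReal (∫ z, f z * f z ∂μ) ≤
      ENNReal.ofReal D + ENNReal.ofReal (M ^ 2) * μ B := by
  rw [integral_eq_lintegral_of_nonneg_ae (ae_of_all _ fun z => mul_nonneg (hf0 z) (hf0 z))
    (hf.mul hf).aestronglyMeasurable]
  refine ENNReal.ofReal_toReal_le.trans ?_
  have hpt : ∀ z, ENNReal.ofReal (f z * f z) ≤
      ENNReal.ofReal D * ENNReal.ofReal (f z) +
        B.indicator (fun _ => ENNReal.ofReal (M ^ 2)) z := by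
    intro z
    by_cases hz : z ∈ B
    · rw [indicator_of_mem hz]
      refine le_add_left (ENNReal.ofReal_le_ofReal ?_)
      nlinarith [hf0 z, hM z]
    · rw [indicator_of_notMem hz, add_zero, ← ENNReal.ofReal_mul hD]
      exact ENNReal.ofReal_le_ofReal (mul_le_mul_of_nonneg_right (hfD z hz) (hf0 z))
  refine (lintegral_mono hpt).trans ?_
  rw [lintegral_add_left (hf.ennreal_ofReal.const_mul _),
    lintegral_const_mul _ hf.ennreal_ofReal, lintegral_indicator_const hB]
  gcongr
  exact mul_le_of_le_one_right' h1

/-- **Volume estimates from two-sided Gaussian-type heat kernel bounds.** For every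
integer `n ≥ 1` and `γ > 1` there are constants `c(n,γ), C(n,γ) > 0` such that whenever a
complete metric measure space carries a symmetric sub-Markovian kernel satisfying the
Chapman–Kolmogorov identity and `γ`-distorted Gaussian two-sided bounds up to time `T`,
then `c(n,γ) rⁿ ≤ μ(B_r(x)) ≤ C(n,γ) rⁿ` for all `x` and all `0 < r ≤ √T`. -/
theorem volume_bounds_from_gaussian_heat_kernel_bounds
    (n : ℕ) (hn : 1 ≤ n) (γ : ℝ) (hγ : 1 < γ) :
    ∃ c C : ℝ, 0 < c ∧ 0 < C ∧
      ∀ (X : Type) [MetricSpace X] [CompleteSpace X]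
        [MeasurableSpace X] [BorelSpace X] (μ : Measure X) (T : ℝ), 0 < T →
        ∀ p : X → X → ℝ → ℝ,
        Measurable (fun q : X × X × ℝ => p q.1 q.2.1 q.2.2) →
        (∀ (x y : X) (t : ℝ), p x y t = p y x t) →
        (∀ (x y : X) (s t : ℝ), 0 < s → 0 < t →
          (∫ z, p x z t * p z y s ∂μ) = p x y (t + s)) →
        (∀ (x : X) (t : ℝ), 0 < t → (∫⁻ y, ENNReal.ofReal (p x y t) ∂μ) ≤ 1) →
        (∀ (x y : X) (t : ℝ), 0 < t → t ≤ T →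
          γ⁻¹ * (4 * π * t) ^ (-(n : ℝ) / 2) *
              Real.exp (-(γ * (dist x y) ^ 2) / (4 * t)) ≤ p x y t ∧
          p x y t ≤ γ * (4 * π * t) ^ (-(n : ℝ) / 2) *
              Real.exp (-(dist x y) ^ 2 / (4 * γ * t))) →
        ∀ (x : X) (r : ℝ), 0 < r → r ≤ Real.sqrt T →
          ENNReal.ofReal (c * r ^ n) ≤ μ (Metric.ball x r) ∧
          μ (Metric.ball x r) ≤ ENNReal.ofReal (C * r ^ n) := by
  have hpi := Real.pi_pos
  have hγ0 : 0 < γ := by linarith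
  set a : ℝ := (2 : ℝ) ^ (-(n : ℝ) / 2) with ha_def
  have ha : 0 < a := by positivity
  have ha1 : a ≤ 1 := Real.rpow_le_one_of_one_le_of_nonpos (by norm_num) (by
    have : (0 : ℝ) ≤ n := by positivity
    linarith)
  -- With this `l`, `exp (-u) ≤ 1 / u` makes the off-ball term at most half of the main one.
  set l : ℝ := a / (8 * γ ^ 3) with hl_def
  have hl : 0 < l := by positivity
  have hγ3 : 1 ≤ γ ^ 3 := one_le_pow₀ hγ.le
  have hl1 : 2 * l ≤ 1 := by
    rw [hl_def, ← mul_div_assoc, div_le_one (by positivity)]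
    linarith
  have hexp : Real.exp (-(1 / (4 * γ * l))) ≤ a / (2 * γ ^ 2) := by
    have hu : 0 < 1 / (4 * γ * l) := by positivity
    have h1 : 1 / (4 * γ * l) ≤ Real.exp (1 / (4 * γ * l)) := by
      linarith [Real.add_one_le_exp (1 / (4 * γ * l))]
    rw [Real.exp_neg]
    refine (inv_anti₀ hu h1).trans (le_of_eq ?_)
    rw [hl_def]
    field_simp
    norm_num
  set K : ℝ := (4 * π * l) ^ (-(n : ℝ) / 2) with hK_def
  have hK : 0 < K := by positivity
  set K₁ : ℝ := (4 * π * 1) ^ (-(n : ℝ) / 2) with hK₁_def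
  have hK₁ : 0 < K₁ := by positivity
  refine ⟨a / (2 * γ ^ 3 * K), γ * Real.exp (γ / 4) / K₁, by positivity, by positivity, ?_⟩
  intro X _ _ _ _ μ T hT p hp hsymm hCK hsub hbd x r hr hrT
  have hr2 : r ^ 2 ≤ T := by
    have := Real.sq_sqrt hT.le
    nlinarith
  have hrn : 0 < r ^ n := by positivity
  have hmeas : ∀ t, Measurable fun z => p x z t := fun t =>
    hp.comp (measurable_const.prodMk (measurable_id.prodMk measurable_const))
  constructor
  · have hlr : 0 < l * r ^ 2 := by positivity
    have hlT : l * r ^ 2 + l * r ^ 2 ≤ T := by nlinarith [sq_nonneg r]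
    set A : ℝ := (4 * π * (l * r ^ 2)) ^ (-(n : ℝ) / 2) with hA_def
    have hA : A = K * (r ^ n)⁻¹ := prefactor_scaling n hl hr
    have hA0 : 0 < A := by positivity
    have hA2 : (4 * π * (l * r ^ 2 + l * r ^ 2)) ^ (-(n : ℝ) / 2) = a * A := by
      rw [ha_def, hA_def, ← Real.mul_rpow (by positivity) (by positivity)]
      congr 1
      ring
    have hf0 : ∀ z, 0 ≤ p x z (l * r ^ 2) := fun z =>
      le_trans (by positivity) (hbd x z _ hlr (by linarith)).1
    have hfM : ∀ z, p x z (l * r ^ 2) ≤ γ * A := by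
      intro z
      refine (hbd x z _ hlr (by linarith)).2.trans (mul_le_of_le_one_right (by positivity) ?_)
      rw [Real.exp_le_one_iff, neg_div]
      exact neg_nonpos.2 (by positivity)
    have hfD : ∀ z, z ∉ ball x r → p x z (l * r ^ 2) ≤ γ * A * (a / (2 * γ ^ 2)) := by
      intro z hz
      have hz' : r ≤ dist x z := by
        rw [mem_ball, not_lt, dist_comm] at hz
        exact hz
      refine (hbd x z _ hlr (by linarith)).2.trans
        (mul_le_mul_of_nonneg_left (le_trans (Real.exp_le_exp.2 ?_) hexp) (by positivity))
      rw [neg_div, neg_le_neg_iff, div_le_div_iff₀ (by positivity) (by positivity)]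
      have : r ^ 2 ≤ dist x z ^ 2 := pow_le_pow_left₀ hr.le hz' 2
      have h4 : 0 < 4 * γ * l := by positivity
      nlinarith
    have hmain := ofReal_integral_sq_le μ (hmeas (l * r ^ 2)) hf0 (hsub x _ hlr)
      (measurableSet_ball (x := x) (ε := r)) (by positivity) hfM hfD
    have hint : ∫ z, p x z (l * r ^ 2) * p x z (l * r ^ 2) ∂μ
        = p x x (l * r ^ 2 + l * r ^ 2) := by
      rw [← hCK x x _ _ hlr hlr]
      simp only [hsymm x]
    have hlow : γ⁻¹ * (a * A) ≤ p x x (l * r ^ 2 + l * r ^ 2) := by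
      have := (hbd x x _ (by positivity) hlT).1
      rw [hA2] at this
      simpa using this
    rw [hint] at hmain
    replace hmain := (ENNReal.ofReal_le_ofReal hlow).trans hmain
    by_cases htop : μ (ball x r) = ⊤
    · rw [htop]
      exact le_top
    · rw [← ENNReal.ofReal_toReal htop] at hmain ⊢
      set m : ℝ := (μ (ball x r)).toReal
      have hm : 0 ≤ m := ENNReal.toReal_nonneg
      rw [← ENNReal.ofReal_mul (by positivity),
        ← ENNReal.ofReal_add (by positivity) (by positivity),
        ENNReal.ofReal_le_ofReal_iff (by positivity)] at hmain
      apply ENNReal.ofReal_le_ofReal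
      have h1 : γ * A * (a / (2 * γ ^ 2)) = γ⁻¹ * (a * A) / 2 := by
        field_simp
      have h2 : γ⁻¹ * (a * A) / 2 ≤ (γ * A) ^ 2 * m := by linarith
      have h3 : a / (2 * γ ^ 3 * K) * r ^ n = γ⁻¹ * (a * A) / 2 / (γ * A) ^ 2 := by
        rw [hA]
        field_simp
      rw [h3, div_le_iff₀ (by positivity)]
      linarith
  · have hL : ∀ z ∈ ball x r,
        γ⁻¹ * (K₁ * (r ^ n)⁻¹) * Real.exp (-(γ / 4)) ≤ p x z (1 * r ^ 2) := by
      intro z hz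
      refine le_trans ?_ (hbd x z (1 * r ^ 2) (by positivity) (by linarith)).1
      rw [prefactor_scaling n one_pos hr]
      refine mul_le_mul_of_nonneg_left (Real.exp_le_exp.2 ?_) (by positivity)
      rw [neg_div, neg_le_neg_iff, div_le_div_iff₀ (by positivity) (by positivity)]
      rw [mem_ball, dist_comm] at hz
      have : dist x z ^ 2 ≤ r ^ 2 := pow_le_pow_left₀ dist_nonneg hz.le 2
      nlinarith
    set L : ℝ := γ⁻¹ * (K₁ * (r ^ n)⁻¹) * Real.exp (-(γ / 4)) with hL_def
    have hL0 : 0 < L := by positivity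
    have h1 : ENNReal.ofReal L * μ (ball x r) ≤ 1 := by
      rw [← setLIntegral_const]
      refine (setLIntegral_mono (hmeas (1 * r ^ 2)).ennreal_ofReal
        fun z hz => ENNReal.ofReal_le_ofReal (hL z hz)).trans ?_
      exact (setLIntegral_le_lintegral _ _).trans (hsub x _ (by positivity))
    have h2 : γ * Real.exp (γ / 4) / K₁ * r ^ n = L⁻¹ := by
      rw [hL_def, Real.exp_neg]
      field_simp
    rw [h2, ENNReal.ofReal_inv_of_pos hL0, ENNReal.le_inv_iff_mul_le, mul_comm]
    exact h1
end
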